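/- arXiv:1601.05360 — 2 statements merged into one kernel-verified Lean document; each statement's English description precedes it below -/
import Mathlib

section
/- AP is closed under composition: if f :⊆ ℝⁿ → ℝᵐ and g :⊆ ℝᵐ → ℝˡ both belong to AP and f(dom f) ⊆ dom g, then the composition g ∘ f :⊆ ℝⁿ → ℝˡ, with domain dom f, belongs to AP. -/
noncomputable section

/-- Evaluation of a vector of multivariate polynomials at a point. -/
def pEval {d e : ℕ} (p : Fin e → MvPolynomial (Fin d) ℝ) (x : Fin d → ℝ) : Fin e → ℝ :=
  fun i => MvPolynomial.eval x (p i)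

/-- Length of the solution curve of the PIVP `y' = p(y)` on `[0, t]`
(the sup norm of the derivative is integrated). -/
def pLen {d : ℕ} (p : Fin d → MvPolynomial (Fin d) ℝ) (y : ℝ → Fin d → ℝ) (t : ℝ) : ℝ :=
  ∫ s in (0:ℝ)..t, ‖pEval p (y s)‖

/-- `Ω : ℝ₊² → ℝ₊` is a polynomial function. -/
def IsPolyFun2 (Ω : ℝ → ℝ → ℝ) : Prop :=
  (∃ P : MvPolynomial (Fin 2) ℝ, ∀ a b : ℝ, Ω a b = MvPolynomial.eval ![a, b] P) ∧
  ∀ a b : ℝ, 0 ≤ a → 0 ≤ b → 0 ≤ Ω a b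

/-- The class `AP` of polynomial-length computable partial functions `f :⊆ ℝⁿ → ℝᵐ`
(`dom` is the domain of `f`). -/
def AP {n m : ℕ} (dom : Set (Fin n → ℝ)) (f : (Fin n → ℝ) → (Fin m → ℝ)) : Prop :=
  ∃ (d : ℕ) (hd : m ≤ d) (p : Fin d → MvPolynomial (Fin d) ℝ)
    (q : Fin d → MvPolynomial (Fin n) ℝ) (Ω : ℝ → ℝ → ℝ),
    IsPolyFun2 Ω ∧
    ∀ x ∈ dom, ∃ y : ℝ → Fin d → ℝ,
      (y 0 = fun i => MvPolynomial.eval x (q i)) ∧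
      (∀ t : ℝ, 0 ≤ t → HasDerivAt y (pEval p (y t)) t) ∧
      (∀ t : ℝ, 0 ≤ t → ∀ μ : ℝ, 0 ≤ μ → Ω ‖x‖ μ ≤ pLen p y t →
        ‖(fun i : Fin m => y t (Fin.castLE hd i)) - f x‖ ≤ Real.exp (-μ)) ∧
      (∀ t : ℝ, 0 ≤ t → t ≤ pLen p y t)

/-!
Polynomial length amounts to polynomial time and space. A system given in terms of length is slowed
down by a factor `D` that dominates its speed, so that its state grows at most linearly in the new
time. Taking `D'` polynomial in the state makes `D` polynomially bounded in the length, because the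
state and the original time are; hence a polynomial amount of new time yields a prescribed length.
The system stays polynomial when `1 / D` is added to its state.

To compose computations of `f` and `g` that run in polynomial time and space, let the first one run
in accelerated time, so that at time `t` it gives `f x` up to an error exponentially small in a
large power of `t`. Gates controlled by a clock of period three restart the second computation in
every cycle from the current approximation to `f x`, run it for a time that grows polynomially in
`t`, and then copy its output to a register that holds it until the next copy. By Grönwall's
inequality the exponentially small error in the input costs nothing. The gates are sigmoids of
polynomials in the clock, so the composite system is polynomial. The trajectory of the second
computation is constructed for the field truncated to a cube of polynomial size, which is bounded
and Lipschitz; the error estimates then show that the trajectory stays inside the cube.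
-/

open Filter Topology Set

/-- Real polynomial functions in the variables indexed by `ι`. -/
def IsPolynomialFun {ι : Type*} (F : (ι → ℝ) → ℝ) : Prop :=
  ∃ P : MvPolynomial ι ℝ, ∀ x, F x = MvPolynomial.eval x P

/-- Polynomial maps between the spaces `ℝ^ι` and `ℝ^κ`, that is, the vector fields and the initial
data of polynomial initial value problems. -/
def IsPolynomialMap {ι κ : Type*} (F : (ι → ℝ) → κ → ℝ) : Prop :=
  ∀ i, IsPolynomialFun fun x => F x i

namespace IsPolynomialFun

variable {ι κ α : Type*} {F G : (ι → ℝ) → ℝ}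

lemma eval (P : MvPolynomial ι ℝ) : IsPolynomialFun fun x => MvPolynomial.eval x P :=
  ⟨P, fun _ => rfl⟩

lemma const (c : ℝ) : IsPolynomialFun fun _ : ι → ℝ => c := ⟨MvPolynomial.C c, by simp⟩

lemma coord (i : ι) : IsPolynomialFun fun x : ι → ℝ => x i := ⟨MvPolynomial.X i, by simp⟩

lemma add (hF : IsPolynomialFun F) (hG : IsPolynomialFun G) :
    IsPolynomialFun fun x => F x + G x := by
  obtain ⟨P, hP⟩ := hF
  obtain ⟨Q, hQ⟩ := hG
  exact ⟨P + Q, by simp [hP, hQ]⟩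

lemma mul (hF : IsPolynomialFun F) (hG : IsPolynomialFun G) :
    IsPolynomialFun fun x => F x * G x := by
  obtain ⟨P, hP⟩ := hF
  obtain ⟨Q, hQ⟩ := hG
  exact ⟨P * Q, by simp [hP, hQ]⟩

lemma sub (hF : IsPolynomialFun F) (hG : IsPolynomialFun G) :
    IsPolynomialFun fun x => F x - G x := by
  obtain ⟨P, hP⟩ := hF
  obtain ⟨Q, hQ⟩ := hG
  exact ⟨P - Q, by simp [hP, hQ]⟩

lemma neg (hF : IsPolynomialFun F) : IsPolynomialFun fun x => -F x := by
  obtain ⟨P, hP⟩ := hF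
  exact ⟨-P, by simp [hP]⟩

lemma pow (hF : IsPolynomialFun F) (k : ℕ) : IsPolynomialFun fun x => F x ^ k := by
  obtain ⟨P, hP⟩ := hF
  exact ⟨P ^ k, by simp [hP]⟩

lemma sum {s : Finset α} {F : α → (ι → ℝ) → ℝ} (hF : ∀ a, IsPolynomialFun (F a)) :
    IsPolynomialFun fun x => ∑ a ∈ s, F a x := by
  choose P hP using hF
  exact ⟨∑ a ∈ s, P a, by simp [hP]⟩

lemma comp {F : (κ → ℝ) → ℝ} (hF : IsPolynomialFun F) {G : (ι → ℝ) → κ → ℝ}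
    (hG : IsPolynomialMap G) : IsPolynomialFun fun x => F (G x) := by
  obtain ⟨P, hP⟩ := hF
  choose Q hQ using hG
  refine ⟨MvPolynomial.bind₁ Q P, fun x => ?_⟩
  calc F (G x) = MvPolynomial.eval (fun i => MvPolynomial.eval x (Q i)) P := by
        rw [hP, show G x = _ from funext fun i => hQ i x]
    _ = MvPolynomial.eval x (MvPolynomial.bind₁ Q P) := by
        simpa [MvPolynomial.aeval_eq_eval] using
          (MvPolynomial.aeval_bind₁ (R := ℝ) (S := ℝ) x Q P).symm

lemma continuous (hF : IsPolynomialFun F) : Continuous F := by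
  obtain ⟨P, hP⟩ := hF
  exact funext hP ▸ MvPolynomial.continuous_eval P

lemma exists_lieDeriv {V : (ι → ℝ) → ι → ℝ} [Finite ι] (hF : IsPolynomialFun F)
    (hV : IsPolynomialMap V) :
    ∃ G, IsPolynomialFun G ∧ ∀ (y : ℝ → ι → ℝ) (s : Set ℝ) (t : ℝ),
      HasDerivWithinAt y (V (y t)) s t → HasDerivWithinAt (fun t => F (y t)) (G (y t)) s t := by
  have := Fintype.ofFinite ι
  obtain ⟨P, hP⟩ := hF
  simp only [hP]
  induction P using MvPolynomial.induction_on generalizing F with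
  | C a => exact ⟨fun _ => 0, const 0, fun y s t _ => by simpa using hasDerivWithinAt_const t s a⟩
  | add p q hp hq =>
    obtain ⟨G, hG, hG'⟩ := hp fun _ => rfl
    obtain ⟨H, hH, hH'⟩ := hq fun _ => rfl
    exact ⟨_, hG.add hH, fun y s t h => by simpa using (hG' y s t h).fun_add (hH' y s t h)⟩
  | mul_X p i hp =>
    obtain ⟨G, hG, hG'⟩ := hp fun _ => rfl
    exact ⟨_, (hG.mul (coord i)).add ((eval p).mul (hV i)), fun y s t h => by
      simpa using (hG' y s t h).fun_mul (hasDerivWithinAt_pi.1 h i)⟩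

end IsPolynomialFun

lemma IsPolynomialMap.continuous {ι κ : Type*} {F : (ι → ℝ) → κ → ℝ} (hF : IsPolynomialMap F) :
    Continuous F :=
  continuous_pi fun i => (hF i).continuous

/-- Polynomial bounds with exponent `k` on the size of a map and on its Lipschitz constant. They are
stated on balls of radius at least two, where powers increase with the exponent and absorb sums. -/
structure HasPolyGrowth {E E' : Type*} [SeminormedAddCommGroup E] [SeminormedAddCommGroup E']
    (F : E → E') (k : ℕ) : Prop where
  norm_le : ∀ {B : ℝ} {v : E}, 2 ≤ B → ‖v‖ ≤ B → ‖F v‖ ≤ B ^ k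
  norm_sub_le : ∀ {B : ℝ} {v w : E}, 2 ≤ B → ‖v‖ ≤ B → ‖w‖ ≤ B → ‖F v - F w‖ ≤ B ^ k * ‖v - w‖

lemma pow_add_pow_le_pow {B : ℝ} (hB : 2 ≤ B) {a b c : ℕ} (ha : a < c) (hb : b < c) :
    B ^ a + B ^ b ≤ B ^ c := by
  obtain ⟨c, rfl⟩ := Nat.exists_eq_succ_of_ne_zero (Nat.ne_zero_of_lt ha)
  have hB1 : (1 : ℝ) ≤ B := by linarith
  calc B ^ a + B ^ b ≤ B ^ c + B ^ c :=
        add_le_add (pow_le_pow_right₀ hB1 (by omega)) (pow_le_pow_right₀ hB1 (by omega))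
    _ = 2 * B ^ c := by ring
    _ ≤ B * B ^ c := by gcongr
    _ = B ^ (c + 1) := by ring

namespace HasPolyGrowth

variable {E : Type*} [SeminormedAddCommGroup E] {ι : Type*} [Fintype ι] {F G : E → ℝ} {a b : ℕ}

lemma mono {E' : Type*} [SeminormedAddCommGroup E'] {F : E → E'} {k l : ℕ}
    (hF : HasPolyGrowth F k) (hkl : k ≤ l) : HasPolyGrowth F l where
  norm_le hB hv := (hF.norm_le hB hv).trans (pow_le_pow_right₀ (by linarith) hkl)
  norm_sub_le hB hv hw := (hF.norm_sub_le hB hv hw).trans <|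
    mul_le_mul_of_nonneg_right (pow_le_pow_right₀ (by linarith) hkl) (norm_nonneg _)

lemma add (hF : HasPolyGrowth F a) (hG : HasPolyGrowth G b) :
    HasPolyGrowth (fun v => F v + G v) (a + b + 1) where
  norm_le hB hv := (norm_add_le _ _).trans <| (add_le_add (hF.norm_le hB hv)
    (hG.norm_le hB hv)).trans (pow_add_pow_le_pow hB (by omega) (by omega))
  norm_sub_le {B v w} hB hv hw := calc
    ‖F v + G v - (F w + G w)‖ ≤ ‖F v - F w‖ + ‖G v - G w‖ := by
      rw [add_sub_add_comm]
      exact norm_add_le _ _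
    _ ≤ (B ^ a + B ^ b) * ‖v - w‖ := by
      rw [add_mul]
      exact add_le_add (hF.norm_sub_le hB hv hw) (hG.norm_sub_le hB hv hw)
    _ ≤ B ^ (a + b + 1) * ‖v - w‖ := mul_le_mul_of_nonneg_right
      (pow_add_pow_le_pow hB (by omega) (by omega)) (norm_nonneg _)

lemma mul (hF : HasPolyGrowth F a) (hG : HasPolyGrowth G b) :
    HasPolyGrowth (fun v => F v * G v) (a + b + 1) where
  norm_le {B v} hB hv := calc
    ‖F v * G v‖ ≤ B ^ a * B ^ b := norm_mul_le_of_le (hF.norm_le hB hv) (hG.norm_le hB hv)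
    _ = B ^ (a + b) := (pow_add _ _ _).symm
    _ ≤ B ^ (a + b + 1) := pow_le_pow_right₀ (by linarith) (by omega)
  norm_sub_le {B v w} hB hv hw := calc
    ‖F v * G v - F w * G w‖ ≤ ‖(F v - F w) * G v‖ + ‖F w * (G v - G w)‖ := by
      rw [show F v * G v - F w * G w = (F v - F w) * G v + F w * (G v - G w) by ring]
      exact norm_add_le _ _
    _ ≤ B ^ a * ‖v - w‖ * B ^ b + B ^ a * (B ^ b * ‖v - w‖) := add_le_add
      (norm_mul_le_of_le (hF.norm_sub_le hB hv hw) (hG.norm_le hB hv))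
      (norm_mul_le_of_le (hF.norm_le hB hw) (hG.norm_sub_le hB hv hw))
    _ = (B ^ (a + b) + B ^ (a + b)) * ‖v - w‖ := by ring
    _ ≤ B ^ (a + b + 1) * ‖v - w‖ := mul_le_mul_of_nonneg_right
      (pow_add_pow_le_pow hB (by omega) (by omega)) (norm_nonneg _)

lemma pi {F : E → ι → ℝ} {k : ℕ} (hF : ∀ i, HasPolyGrowth (fun v => F v i) k) :
    HasPolyGrowth F k where
  norm_le hB hv := (pi_norm_le_iff_of_nonneg (by positivity)).2 fun i => (hF i).norm_le hB hv
  norm_sub_le hB hv hw := (pi_norm_le_iff_of_nonneg (by positivity)).2 fun i =>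
    (hF i).norm_sub_le hB hv hw

end HasPolyGrowth

section

variable {ι κ : Type*} [Fintype ι] [Fintype κ]

lemma IsPolynomialFun.exists_hasPolyGrowth {F : (ι → ℝ) → ℝ} (hF : IsPolynomialFun F) :
    ∃ k, HasPolyGrowth F k := by
  obtain ⟨P, hP⟩ := hF
  rw [funext hP]
  clear hP
  induction P using MvPolynomial.induction_on with
  | C a =>
    obtain ⟨k, hk⟩ := pow_unbounded_of_one_lt ‖a‖ (one_lt_two : (1 : ℝ) < 2)
    refine ⟨k, fun hB _ => ?_, fun hB _ _ => ?_⟩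
    · simpa using hk.le.trans (pow_le_pow_left₀ zero_le_two hB k)
    · simp only [MvPolynomial.eval_C, sub_self, norm_zero]
      positivity
  | add p q hp hq =>
    obtain ⟨a, ha⟩ := hp
    obtain ⟨b, hb⟩ := hq
    exact ⟨_, by simpa using ha.add hb⟩
  | mul_X p i hp =>
    obtain ⟨a, ha⟩ := hp
    have hi : HasPolyGrowth (fun x : ι → ℝ => x i) 1 :=
      ⟨fun _ hv => by simpa using (norm_le_pi_norm _ i).trans hv, fun {B v w} hB _ _ => by
        simpa using (norm_le_pi_norm (v - w) i).trans
          (le_mul_of_one_le_left (norm_nonneg _) (by linarith : 1 ≤ B))⟩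
    exact ⟨_, by simpa using ha.mul hi⟩

lemma IsPolynomialMap.exists_hasPolyGrowth {F : (ι → ℝ) → κ → ℝ} (hF : IsPolynomialMap F) :
    ∃ k, HasPolyGrowth F k := by
  choose k hk using fun i => (hF i).exists_hasPolyGrowth
  exact ⟨∑ i, k i, .pi fun i => (hk i).mono
    (Finset.single_le_sum (fun _ _ => Nat.zero_le _) (Finset.mem_univ i))⟩

end

/-- A run `y` of the system `y' = F y` that computes the vector `w` in polynomial time and space:
`B` bounds the size of the input, `o` selects the output coordinates, and the single exponent `k`
bounds both the size of the state and the time needed to reach precision `exp (-μ)`. -/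
structure IsPolyTimeRun {ι κ : Type*} [Fintype ι] [Fintype κ] (F : (ι → ℝ) → ι → ℝ) (o : κ → ι)
    (k : ℕ) (B : ℝ) (w : κ → ℝ) (y : ℝ → ι → ℝ) : Prop where
  hasDerivWithinAt : ∀ t, 0 ≤ t → HasDerivWithinAt y (F (y t)) (Ici 0) t
  norm_le : ∀ t, 0 ≤ t → ‖y t‖ ≤ (B + t) ^ k
  norm_output_sub_le : ∀ t μ, 0 ≤ μ → (B + μ) ^ k ≤ t → ‖y t ∘ o - w‖ ≤ Real.exp (-μ)

/-- The partial functions computed by polynomial initial value problems in polynomial time and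
space. This is the normal form in which members of `AP` are composed: time replaces the length of
the curve, and the state may be indexed by any finite type. -/
def IsPolyTimeComputable {α β : Type*} [Fintype α] [Fintype β] (dom : Set (α → ℝ))
    (f : (α → ℝ) → β → ℝ) : Prop :=
  ∃ (ι : Type) (_ : Fintype ι) (F : (ι → ℝ) → ι → ℝ) (q : (α → ℝ) → ι → ℝ) (o : β → ι) (k : ℕ),
    IsPolynomialMap F ∧ IsPolynomialMap q ∧
      ∀ x ∈ dom, ∃ y, y 0 = q x ∧ IsPolyTimeRun F o k (2 + ‖x‖) (f x) y

section CurveLength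

variable {d : ℕ} {p : Fin d → MvPolynomial (Fin d) ℝ} {y : ℝ → Fin d → ℝ} {s t : ℝ}

lemma isPolynomialMap_pEval {d e : ℕ} (p : Fin e → MvPolynomial (Fin d) ℝ) :
    IsPolynomialMap (pEval p) :=
  fun i => .eval (p i)

lemma intervalIntegrable_pEval (hy : ContinuousOn y (Ici 0)) (ht : 0 ≤ t) :
    IntervalIntegrable (fun s => pEval p (y s)) MeasureTheory.volume 0 t := by
  refine ContinuousOn.intervalIntegrable ?_
  rw [uIcc_of_le ht]
  exact (isPolynomialMap_pEval p).continuous.comp_continuousOn (hy.mono Icc_subset_Ici_self)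

lemma norm_sub_le_pLen (hy : ∀ t, 0 ≤ t → HasDerivAt y (pEval p (y t)) t) (ht : 0 ≤ t) :
    ‖y t - y 0‖ ≤ pLen p y t := by
  have hcont : ContinuousOn y (Ici 0) := fun s hs => (hy s hs).continuousAt.continuousWithinAt
  rw [← intervalIntegral.integral_eq_sub_of_hasDerivAt
    (fun s hs => hy s (uIcc_of_le ht ▸ hs).1) (intervalIntegrable_pEval hcont ht)]
  exact intervalIntegral.norm_integral_le_integral_norm ht

lemma pLen_mono (hy : ContinuousOn y (Ici 0)) (hs : 0 ≤ s) (hst : s ≤ t) :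
    pLen p y s ≤ pLen p y t :=
  intervalIntegral.integral_mono_interval le_rfl hs hst
    (Eventually.of_forall fun _ => norm_nonneg _)
    (intervalIntegrable_pEval hy (hs.trans hst)).norm

lemma le_pLen_of_one_le (hy : ContinuousOn y (Ici 0)) (h : ∀ s, 0 ≤ s → 1 ≤ ‖pEval p (y s)‖)
    (ht : 0 ≤ t) : t ≤ pLen p y t := by
  simpa [pLen] using intervalIntegral.integral_mono_on ht (by simp)
    (intervalIntegrable_pEval hy ht).norm fun s hs => h s hs.1

lemma pLen_le_mul {C : ℝ} (h : ∀ s ∈ Ioc 0 t, ‖pEval p (y s)‖ ≤ C) (ht : 0 ≤ t) :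
    pLen p y t ≤ C * t := by
  have h' := intervalIntegral.norm_integral_le_of_norm_le_const (a := 0) (b := t) (C := C)
    (f := fun s => ‖pEval p (y s)‖) (by simpa [uIoc_of_le ht] using h)
  rw [sub_zero, abs_of_nonneg ht] at h'
  exact (le_abs_self _).trans h'

end CurveLength

section TimeChange

lemma exists_orderIso_hasDerivAt_inv {D : ℝ → ℝ} (hD : Continuous D) (h1 : ∀ t, 1 ≤ D t) :
    ∃ φ : ℝ ≃o ℝ, φ 0 = 0 ∧ ∀ τ, HasDerivAt φ (D (φ τ))⁻¹ τ := by
  let g : ℝ → ℝ := fun t => ∫ s in (0 : ℝ)..t, D s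
  have hg : ∀ t, HasDerivAt g (D t) t := fun t => hD.integral_hasStrictDerivAt 0 t |>.hasDerivAt
  have hg0 : g 0 = 0 := by simp [g]
  have hmono : StrictMono g := strictMono_of_deriv_pos fun t => by
    rw [(hg t).deriv]
    linarith [h1 t]
  have hmono_sub : Monotone fun t => g t - t :=
    monotone_of_deriv_nonneg (fun t => ((hg t).fun_sub (hasDerivAt_id' t)).differentiableAt)
      fun t => by
        rw [((hg t).fun_sub (hasDerivAt_id' t)).deriv]
        linarith [h1 t]
  have hsurj : Function.Surjective g := by
    refine (continuous_iff_continuousAt.2 fun t => (hg t).continuousAt).surjective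
      (tendsto_atTop_mono' atTop ?_ tendsto_id) (tendsto_atBot_mono' atBot ?_ tendsto_id)
    · filter_upwards [eventually_ge_atTop 0] with t ht
      simpa [hg0] using hmono_sub ht
    · filter_upwards [eventually_le_atBot 0] with t ht
      simpa [hg0] using hmono_sub ht
  let e := hmono.orderIsoOfSurjective g hsurj
  refine ⟨e.symm, hmono.injective ?_, fun τ => ?_⟩
  · rw [hg0]
    exact e.apply_symm_apply 0
  · exact HasDerivAt.of_local_left_inverse e.symm.continuous.continuousAt (hg _)
      (by linarith [h1 (e.symm τ)]) (Eventually.of_forall e.apply_symm_apply)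

/-- A time change `φ` slowing the time `t = φ τ` down by the factor `D`, where `D` starts from `1`
and grows at the rate `m`. -/
structure IsSlowdown (m D φ : ℝ → ℝ) : Prop where
  map_zero : D 0 = 1
  hasDerivWithinAt : ∀ t, 0 ≤ t → HasDerivWithinAt D (m t) (Ici 0) t
  time_zero : φ 0 = 0
  time_nonneg : ∀ τ, 0 ≤ τ → 0 ≤ φ τ
  time_hasDerivAt : ∀ τ, 0 ≤ τ → HasDerivAt φ (D (φ τ))⁻¹ τ

lemma exists_isSlowdown {m : ℝ → ℝ} (hm : ContinuousOn m (Ici 0)) (h0 : ∀ t, 0 ≤ t → 0 ≤ m t) :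
    ∃ D φ, IsSlowdown m D φ := by
  have hmax : ∀ t : ℝ, max t 0 ∈ Ici (0 : ℝ) := fun t => le_max_right t 0
  have hm' : Continuous fun t => m (max t 0) := hm.comp_continuous (by fun_prop) hmax
  let D : ℝ → ℝ := fun t => 1 + ∫ s in (0 : ℝ)..t, m (max s 0)
  have hD : ∀ t, HasDerivAt D (m (max t 0)) t := fun t =>
    (hm'.integral_hasStrictDerivAt 0 t).hasDerivAt.const_add 1
  have hDcont : Continuous D := continuous_iff_continuousAt.2 fun t => (hD t).continuousAt
  have hD0 : D 0 = 1 := by simp [D]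
  have hDmono : Monotone D := monotone_of_deriv_nonneg (fun t => (hD t).differentiableAt)
    fun t => (hD t).deriv ▸ h0 _ (hmax t)
  obtain ⟨φ, hφ0, hφ⟩ := exists_orderIso_hasDerivAt_inv (D := fun t => D (max t 0))
    (hDcont.comp (by fun_prop)) fun t => hD0 ▸ hDmono (hmax t)
  have hφ_nonneg : ∀ τ, 0 ≤ τ → 0 ≤ φ τ := fun τ hτ => hφ0 ▸ φ.monotone hτ
  refine ⟨D, φ, hD0, fun t ht => ?_, hφ0, hφ_nonneg, fun τ hτ => ?_⟩
  · simpa only [max_eq_left ht] using (hD t).hasDerivWithinAt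
  · simpa only [max_eq_left (hφ_nonneg τ hτ)] using hφ τ

namespace IsSlowdown

variable {m D φ : ℝ → ℝ} {t τ : ℝ}

lemma monotoneOn (h : IsSlowdown m D φ) (h0 : ∀ t, 0 ≤ t → 0 ≤ m t) : MonotoneOn D (Ici 0) :=
  monotoneOn_of_hasDerivWithinAt_nonneg (convex_Ici 0)
    (fun t ht => (h.hasDerivWithinAt t ht).continuousWithinAt)
    (fun t ht => (h.hasDerivWithinAt t (interior_subset ht)).mono interior_subset)
    fun t ht => h0 t (interior_subset ht)

lemma one_le (h : IsSlowdown m D φ) (h0 : ∀ t, 0 ≤ t → 0 ≤ m t) (ht : 0 ≤ t) : 1 ≤ D t :=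
  h.map_zero ▸ h.monotoneOn h0 self_mem_Ici ht ht

lemma le_one_add_mul (h : IsSlowdown m D φ) {C : ℝ} (ht : 0 ≤ t) (hC : ∀ s ∈ Icc 0 t, m s ≤ C) :
    D t ≤ 1 + C * t := by
  have hD : ∀ s ∈ Icc 0 t, HasDerivWithinAt (fun s => C * s - D s) (C - m s) (Icc 0 t) s :=
    fun s hs => by
      simpa using ((hasDerivWithinAt_id s _).const_mul C).fun_sub
        ((h.hasDerivWithinAt s hs.1).mono Icc_subset_Ici_self)
  have hmono := monotoneOn_of_hasDerivWithinAt_nonneg (convex_Icc 0 t)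
    (fun s hs => (hD s hs).continuousWithinAt)
    (fun s hs => (hD s (interior_subset hs)).mono interior_subset)
    (fun s hs => sub_nonneg.2 (hC s (interior_subset hs)))
  have h0t := hmono (left_mem_Icc.2 ht) (right_mem_Icc.2 ht) ht
  simp only [h.map_zero] at h0t
  linarith

lemma hasDerivWithinAt_inv (h : IsSlowdown m D φ) (h0 : ∀ t, 0 ≤ t → 0 ≤ m t) (hτ : 0 ≤ τ) :
    HasDerivWithinAt (fun τ => (D (φ τ))⁻¹) (-(m (φ τ) * (D (φ τ))⁻¹ ^ 3)) (Ici 0) τ := by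
  have hpos : D (φ τ) ≠ 0 := (zero_lt_one.trans_le (h.one_le h0 (h.time_nonneg τ hτ))).ne'
  have hcomp : HasDerivWithinAt (fun τ => D (φ τ)) (m (φ τ) * (D (φ τ))⁻¹) (Ici 0) τ :=
    (h.hasDerivWithinAt _ (h.time_nonneg τ hτ)).comp τ (h.time_hasDerivAt τ hτ).hasDerivWithinAt
      h.time_nonneg
  exact (hcomp.fun_inv hpos).congr_deriv (by field_simp)

lemma le_mul_time (h : IsSlowdown m D φ) (h0 : ∀ t, 0 ≤ t → 0 ≤ m t) (hτ : 0 ≤ τ) :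
    τ ≤ D (φ τ) * φ τ := by
  have hD : ∀ s ∈ Ici (0 : ℝ), HasDerivWithinAt (fun s => D (φ s) * φ s - s)
      (m (φ s) * (D (φ s))⁻¹ * φ s) (Ici 0) s := fun s hs => by
    have hpos : D (φ s) ≠ 0 := (zero_lt_one.trans_le (h.one_le h0 (h.time_nonneg s hs))).ne'
    have hφ := (h.time_hasDerivAt s hs).hasDerivWithinAt (s := Ici 0)
    exact ((((h.hasDerivWithinAt _ (h.time_nonneg s hs)).comp s hφ h.time_nonneg).fun_mul
      hφ).fun_sub (hasDerivWithinAt_id s _)).congr_deriv (by simp [hpos])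
  have hmono := monotoneOn_of_hasDerivWithinAt_nonneg (convex_Ici 0)
    (fun s hs => (hD s hs).continuousWithinAt)
    (fun s hs => (hD s (interior_subset hs)).mono interior_subset) (fun s hs => by
      have hφ := h.time_nonneg s (interior_subset hs)
      have := h0 _ hφ
      have := h.one_le h0 hφ
      positivity)
  have h0τ := hmono self_mem_Ici hτ hτ
  simp only [h.time_zero, mul_zero, sub_zero] at h0τ
  linarith

end IsSlowdown

end TimeChange

section Slowdown

variable {ι : Type*} [Fintype ι] {V : (ι → ℝ) → ι → ℝ} {M N : (ι → ℝ) → ℝ} {y : ℝ → ι → ℝ}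
  {D φ : ℝ → ℝ} {t τ : ℝ}

-- `N = 1 + ∑ Vᵢ²` dominates the speed, and `M = 1 + G²` dominates the derivative `G` of `N`.
lemma IsPolynomialMap.exists_speed_control (hV : IsPolynomialMap V) :
    ∃ N M, IsPolynomialFun N ∧ IsPolynomialFun M ∧ (∀ v, ‖V v‖ ≤ N v) ∧ (∀ v, 0 ≤ M v) ∧
      ∀ (y : ℝ → ι → ℝ) (D : ℝ → ℝ), (∀ t, 0 ≤ t → HasDerivWithinAt y (V (y t)) (Ici 0) t) →
        (∀ t, 0 ≤ t → HasDerivWithinAt D (M (y t)) (Ici 0) t) →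
          ∀ t, 0 ≤ t → N (y t) - N (y 0) ≤ D t - D 0 := by
  have hN : IsPolynomialFun fun v => 1 + ∑ i, V v i ^ 2 :=
    (IsPolynomialFun.const 1).add (.sum fun i => (hV i).pow 2)
  obtain ⟨G, hG, hG'⟩ := hN.exists_lieDeriv hV
  refine ⟨_, fun v => 1 + G v ^ 2, hN, (IsPolynomialFun.const 1).add (hG.pow 2), fun v => ?_,
    fun v => by positivity, fun y D hy hD t ht => ?_⟩
  · refine (pi_norm_le_iff_of_nonneg (by positivity)).2 fun i => ?_
    have hi : V v i ^ 2 ≤ ∑ i, V v i ^ 2 :=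
      Finset.single_le_sum (f := fun i => V v i ^ 2) (fun i _ => sq_nonneg _) (Finset.mem_univ i)
    rw [Real.norm_eq_abs]
    nlinarith [sq_abs (V v i), sq_nonneg (|V v i| - 1)]
  · have hder := fun s (hs : 0 ≤ s) => (hD s hs).fun_sub (hG' y _ s (hy s hs))
    have hmono := monotoneOn_of_hasDerivWithinAt_nonneg (convex_Ici 0)
      (fun s hs => (hder s hs).continuousWithinAt)
      (fun s hs => (hder s (interior_subset hs)).mono interior_subset)
      (fun s _ => by nlinarith [sq_nonneg (G (y s) - 1)])
    linarith [hmono self_mem_Ici ht ht]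

/-- The field `V` slowed down by the factor `D`, where `D' = M y`. The coordinate `none` holds
`1 / D`, which satisfies the polynomial equation `v' = -M y * v ^ 3` in the slow time. -/
def slowField (V : (ι → ℝ) → ι → ℝ) (M : (ι → ℝ) → ℝ) (s : Option ι → ℝ) : Option ι → ℝ
  | none => -(M (fun i => s (some i)) * s none ^ 3)
  | some i => s none * V (fun i => s (some i)) i

/-- The solution of the slowed down system obtained from a solution of the original one. -/
def slowRun (y : ℝ → ι → ℝ) (D φ : ℝ → ℝ) (τ : ℝ) : Option ι → ℝ
  | none => (D (φ τ))⁻¹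
  | some i => y (φ τ) i

omit [Fintype ι] in
lemma IsPolynomialMap.slowField (hV : IsPolynomialMap V) (hM : IsPolynomialFun M) :
    IsPolynomialMap (slowField V M)
  | none => ((hM.comp fun _ => .coord _).mul ((IsPolynomialFun.coord none).pow 3)).neg
  | some i => (IsPolynomialFun.coord none).mul ((hV i).comp fun _ => .coord _)

namespace IsSlowdown

lemma time_hasDerivWithinAt_comp {E : Type*} [NormedAddCommGroup E] [NormedSpace ℝ E]
    {m : ℝ → ℝ} {y : ℝ → E} {y' : E} (h : IsSlowdown m D φ) (hτ : 0 ≤ τ)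
    (hy : HasDerivWithinAt y y' (Ici 0) (φ τ)) :
    HasDerivWithinAt (fun τ => y (φ τ)) ((D (φ τ))⁻¹ • y') (Ici 0) τ :=
  hy.scomp τ (h.time_hasDerivAt τ hτ).hasDerivWithinAt h.time_nonneg

variable (h : IsSlowdown (fun t => M (y t)) D φ) (hM : ∀ v, 0 ≤ M v)

omit [Fintype ι] in
include h hM in
lemma slowRun_hasDerivWithinAt [Finite ι]
    (hy : ∀ t, 0 ≤ t → HasDerivWithinAt y (V (y t)) (Ici 0) t) (hτ : 0 ≤ τ) :
    HasDerivWithinAt (slowRun y D φ) (slowField V M (slowRun y D φ τ)) (Ici 0) τ := by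
  have := Fintype.ofFinite ι
  refine hasDerivWithinAt_pi.2 fun c => ?_
  cases c with
  | none => exact h.hasDerivWithinAt_inv (fun _ _ => hM _) hτ
  | some i =>
    exact hasDerivWithinAt_pi.1 (h.time_hasDerivWithinAt_comp hτ (hy _ (h.time_nonneg τ hτ))) i

include h hM in
lemma norm_sub_le (hy : ∀ t, 0 ≤ t → HasDerivWithinAt y (V (y t)) (Ici 0) t)
    (hVN : ∀ v, ‖V v‖ ≤ N v) (hND : ∀ t, 0 ≤ t → N (y t) - N (y 0) ≤ D t - D 0) (hτ : 0 ≤ τ) :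
    ‖y (φ τ) - y 0‖ ≤ (N (y 0) + 1) * τ := by
  have hspeed : ∀ s ∈ Ici (0 : ℝ), ‖(D (φ s))⁻¹ • V (y (φ s))‖ ≤ N (y 0) + 1 := fun s hs => by
    have ht := h.time_nonneg s hs
    have hD := h.one_le (fun _ _ => hM _) ht
    have hN := hND _ ht
    rw [h.map_zero] at hN
    rw [norm_smul, norm_inv, Real.norm_eq_abs, abs_of_pos (by linarith),
      inv_mul_le_iff₀ (by linarith)]
    nlinarith [hVN (y (φ s)), (norm_nonneg _).trans (hVN (y 0))]
  simpa [h.time_zero, abs_of_nonneg hτ] using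
    Convex.norm_image_sub_le_of_norm_hasDerivWithin_le
      (fun s hs => h.time_hasDerivWithinAt_comp hs (hy _ (h.time_nonneg s hs)))
      hspeed (convex_Ici 0) self_mem_Ici hτ

include h hM in
lemma norm_le_pow (hy : ∀ t, 0 ≤ t → HasDerivWithinAt y (V (y t)) (Ici 0) t)
    (hVN : ∀ v, ‖V v‖ ≤ N v) (hND : ∀ t, 0 ≤ t → N (y t) - N (y 0) ≤ D t - D 0) {B : ℝ} {k l : ℕ}
    (hB : 2 ≤ B) (hy₀ : ‖y 0‖ ≤ B ^ k) (hN : N (y 0) ≤ B ^ l) (hτ : 0 ≤ τ) :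
    ‖y (φ τ)‖ ≤ (B + τ) ^ (k + l + 3) := by
  have hb : 2 ≤ B + τ := by linarith
  calc ‖y (φ τ)‖ ≤ ‖y 0‖ + ‖y (φ τ) - y 0‖ := norm_le_insert' _ _
    _ ≤ ‖y 0‖ + (N (y 0) + 1) * τ := by
      gcongr
      exact h.norm_sub_le hM hy hVN hND hτ
    _ ≤ (B + τ) ^ k + ((B + τ) ^ l + (B + τ) ^ 0) * (B + τ) := by
      rw [pow_zero]
      gcongr
      · exact hy₀.trans (by gcongr; linarith)
      · exact hN.trans (by gcongr; linarith)
      · linarith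
    _ ≤ (B + τ) ^ k + (B + τ) ^ (l + 1) * (B + τ) := by
      gcongr
      exact pow_add_pow_le_pow hb (by omega) (by omega)
    _ = (B + τ) ^ k + (B + τ) ^ (l + 2) := by ring
    _ ≤ _ := pow_add_pow_le_pow hb (by omega) (by omega)

include h hM in
lemma norm_slowRun_le (hτ : 0 ≤ τ) {C : ℝ} (hC : 1 ≤ C) (hy : ‖y (φ τ)‖ ≤ C) :
    ‖slowRun y D φ τ‖ ≤ C := by
  refine (pi_norm_le_iff_of_nonneg (by linarith)).2 fun c => ?_
  cases c with
  | none =>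
    have hD := h.one_le (fun _ _ => hM _) (h.time_nonneg τ hτ)
    rw [slowRun, norm_inv, Real.norm_eq_abs, abs_of_pos (by linarith)]
    exact (inv_le_one_of_one_le₀ hD).trans hC
  | some i => exact (norm_le_pi_norm (y (φ τ)) i).trans hy

end IsSlowdown

lemma IsSlowdown.le_mul_of_pLen_le {d : ℕ} {p : Fin d → MvPolynomial (Fin d) ℝ}
    {y : ℝ → Fin d → ℝ} {M : (Fin d → ℝ) → ℝ} {C L : ℝ}
    (h : IsSlowdown (fun t => M (y t)) D φ) (hM : ∀ v, 0 ≤ M v)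
    (hy : ∀ t, 0 ≤ t → HasDerivAt y (pEval p (y t)) t) (hlen : ∀ t, 0 ≤ t → t ≤ pLen p y t)
    (hC : ∀ v, ‖v‖ ≤ ‖y 0‖ + L → M v ≤ C) (hτ : 0 ≤ τ) (hL : pLen p y (φ τ) ≤ L) :
    τ ≤ (1 + C * L) * L := by
  have ht := h.time_nonneg τ hτ
  have htL : φ τ ≤ L := (hlen _ ht).trans hL
  have hcont : ContinuousOn y (Ici 0) := fun s hs => (hy s hs).continuousAt.continuousWithinAt
  have hMy : ∀ s ∈ Icc 0 (φ τ), M (y s) ≤ C := fun s hs => hC _ <|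
    calc ‖y s‖ ≤ ‖y 0‖ + ‖y s - y 0‖ := norm_le_insert' _ _
      _ ≤ ‖y 0‖ + L := by
        gcongr
        exact (norm_sub_le_pLen hy hs.1).trans ((pLen_mono hcont hs.1 hs.2).trans hL)
  have hC0 : 0 ≤ C := (hM _).trans (hMy 0 (left_mem_Icc.2 ht))
  have hCL : 0 ≤ 1 + C * L := by nlinarith [ht.trans htL]
  calc τ ≤ D (φ τ) * φ τ := h.le_mul_time (fun _ _ => hM _) hτ
    _ ≤ (1 + C * φ τ) * φ τ := by
      gcongr
      exact h.le_one_add_mul ht hMy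
    _ ≤ (1 + C * L) * L := by gcongr

end Slowdown

lemma IsPolyFun2.exists_le_pow {Ω : ℝ → ℝ → ℝ} (hΩ : IsPolyFun2 Ω) :
    ∃ k : ℕ, ∀ a b, 0 ≤ a → 0 ≤ b → Ω a b ≤ (2 + a + b) ^ k := by
  obtain ⟨⟨P, hP⟩, -⟩ := hΩ
  obtain ⟨k, hk⟩ := (IsPolynomialFun.eval P).exists_hasPolyGrowth
  refine ⟨k, fun a b ha hb => hP a b ▸ (le_abs_self _).trans (hk.norm_le (by linarith) ?_)⟩
  refine (pi_norm_le_iff_of_nonneg (by linarith)).2 fun i => ?_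
  fin_cases i <;> simp [abs_of_nonneg, ha, hb] <;> linarith

lemma isPolyTimeRun_slowRun {d : ℕ} {κ : Type*} [Fintype κ] {p : Fin d → MvPolynomial (Fin d) ℝ}
    {M N : (Fin d → ℝ) → ℝ} {y : ℝ → Fin d → ℝ} {D φ : ℝ → ℝ} {o : κ → Fin d} {w : κ → ℝ}
    {Ω : ℝ → ℝ} {B : ℝ} {kM kN kq kΩ : ℕ} (h : IsSlowdown (fun t => M (y t)) D φ)
    (hM : ∀ v, 0 ≤ M v) (hMgrowth : HasPolyGrowth M kM) (hVN : ∀ v, ‖pEval p v‖ ≤ N v)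
    (hND : ∀ t, 0 ≤ t → N (y t) - N (y 0) ≤ D t - D 0)
    (hy : ∀ t, 0 ≤ t → HasDerivAt y (pEval p (y t)) t) (hlen : ∀ t, 0 ≤ t → t ≤ pLen p y t)
    (hconv : ∀ t, 0 ≤ t → ∀ μ, 0 ≤ μ → Ω μ ≤ pLen p y t → ‖y t ∘ o - w‖ ≤ Real.exp (-μ))
    (hB : 2 ≤ B) (hq : ‖y 0‖ ≤ B ^ kq) (hN : N (y 0) ≤ B ^ kN)
    (hΩ : ∀ μ, 0 ≤ μ → Ω μ ≤ (B + μ) ^ kΩ) :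
    IsPolyTimeRun (slowField (pEval p) M) (some ∘ o)
      (kq + kN + 3 + (2 * kΩ + (kq + kΩ + 1) * kM + 1)) B w (slowRun y D φ) where
  hasDerivWithinAt τ hτ :=
    h.slowRun_hasDerivWithinAt hM (fun t ht => (hy t ht).hasDerivWithinAt) hτ
  norm_le τ hτ := by
    exact h.norm_slowRun_le hM hτ (one_le_pow₀ (by linarith)) ((h.norm_le_pow hM
      (fun t ht => (hy t ht).hasDerivWithinAt) hVN hND hB hq hN hτ).trans
      (pow_le_pow_right₀ (by linarith) (by omega)))
  norm_output_sub_le τ μ hμ hτ := by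
    have hb : 2 ≤ B + μ := by linarith
    have hτ0 : 0 ≤ τ := le_trans (by positivity) hτ
    refine hconv _ (h.time_nonneg τ hτ0) μ hμ (le_of_not_gt fun hlt => hτ.not_gt ?_)
    have hMC : ∀ v, ‖v‖ ≤ ‖y 0‖ + (B + μ) ^ kΩ → M v ≤ (B + μ) ^ ((kq + kΩ + 1) * kM) := by
      intro v hv
      rw [pow_mul]
      refine (le_abs_self _).trans (hMgrowth.norm_le ?_ (hv.trans ?_))
      · exact hb.trans (le_self_pow₀ (by linarith) (by omega))
      · exact (add_le_add_left (hq.trans (by gcongr; linarith)) _).trans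
          (pow_add_pow_le_pow hb (by omega) (by omega))
    calc τ ≤ (1 + (B + μ) ^ ((kq + kΩ + 1) * kM) * (B + μ) ^ kΩ) * (B + μ) ^ kΩ :=
          h.le_mul_of_pLen_le hM hy hlen hMC hτ0 (hlt.le.trans (hΩ μ hμ))
      _ = (B + μ) ^ kΩ + (B + μ) ^ (2 * kΩ + (kq + kΩ + 1) * kM) := by ring
      _ ≤ (B + μ) ^ (2 * kΩ + (kq + kΩ + 1) * kM + 1) :=
          pow_add_pow_le_pow hb (by omega) (by omega)
      _ < _ := pow_lt_pow_right₀ (by linarith) (by omega)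

theorem AP.isPolyTimeComputable {n m : ℕ} {dom : Set (Fin n → ℝ)} {f : (Fin n → ℝ) → Fin m → ℝ}
    (h : AP dom f) : IsPolyTimeComputable dom f := by
  obtain ⟨d, hd, p, q, Ω, hΩ, H⟩ := h
  have hp : IsPolynomialMap (pEval p) := isPolynomialMap_pEval p
  have hq : IsPolynomialMap (pEval q) := isPolynomialMap_pEval q
  obtain ⟨N, M, hN, hM, hVN, hM0, hND⟩ := hp.exists_speed_control
  obtain ⟨kM, hkM⟩ := hM.exists_hasPolyGrowth
  obtain ⟨kq, hkq⟩ := hq.exists_hasPolyGrowth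
  obtain ⟨kN, hkN⟩ := (hN.comp hq).exists_hasPolyGrowth
  obtain ⟨kΩ, hkΩ⟩ := hΩ.exists_le_pow
  refine ⟨Option (Fin d), inferInstance, slowField (pEval p) M, fun x c => c.elim 1 (pEval q x),
    some ∘ Fin.castLE hd, kq + kN + 3 + (2 * kΩ + (kq + kΩ + 1) * kM + 1), hp.slowField hM,
    fun | none => .const 1 | some i => hq i, fun x hx => ?_⟩
  obtain ⟨y, hy0, hy, hconv, hlen⟩ := H x hx
  replace hy0 : y 0 = pEval q x := hy0
  have hy' := fun t ht => (hy t ht).hasDerivWithinAt (s := Ici 0)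
  have hxB : ‖x‖ ≤ 2 + ‖x‖ := by linarith
  have hB : 2 ≤ 2 + ‖x‖ := by linarith [norm_nonneg x]
  obtain ⟨D, φ, hφ⟩ := exists_isSlowdown (m := fun t => M (y t))
    (hM.continuous.comp_continuousOn fun t ht => (hy' t ht).continuousWithinAt) fun _ _ => hM0 _
  refine ⟨slowRun y D φ, ?_, isPolyTimeRun_slowRun hφ hM0 hkM hVN
    (hND y D hy' hφ.hasDerivWithinAt) hy hlen hconv hB (hy0 ▸ hkq.norm_le hB hxB)
    (hy0 ▸ (le_abs_self _).trans (hkN.norm_le hB hxB)) fun μ hμ => hkΩ _ _ (norm_nonneg x) hμ⟩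
  funext c
  cases c with
  | none => simp [slowRun, hφ.time_zero, hφ.map_zero]
  | some i => simp [slowRun, hφ.time_zero, hy0]

section Timed

variable {ι κ : Type*} [Fintype ι] [Fintype κ] {F : (ι → ℝ) → ι → ℝ} {y : ℝ → ι → ℝ}

/-- The field `F` with the time added as the coordinate `none`, which makes the speed at least
one. -/
def timedField (F : (ι → ℝ) → ι → ℝ) (s : Option ι → ℝ) : Option ι → ℝ
  | none => 1
  | some i => F (fun i => s (some i)) i

/-- The curve `y` together with the time coordinate of `timedField`. -/
def timedRun (y : ℝ → ι → ℝ) (t : ℝ) : Option ι → ℝ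
  | none => t
  | some i => y t i

omit [Fintype ι] in
lemma IsPolynomialMap.timedField (hF : IsPolynomialMap F) : IsPolynomialMap (timedField F)
  | none => .const 1
  | some i => (hF i).comp fun _ => .coord _

lemma one_le_norm_timedField (s : Option ι → ℝ) : 1 ≤ ‖timedField F s‖ := by
  simpa [timedField] using norm_le_pi_norm (timedField F s) none

lemma IsPolyTimeRun.timed {o : κ → ι} {k : ℕ} {B : ℝ} {w : κ → ℝ} (hB : 1 ≤ B)
    (h : IsPolyTimeRun F o k B w y) :
    IsPolyTimeRun (timedField F) (some ∘ o) (k + 1) B w (timedRun y) where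
  hasDerivWithinAt t ht := hasDerivWithinAt_pi.2 fun
    | none => hasDerivWithinAt_id t _
    | some i => hasDerivWithinAt_pi.1 (h.hasDerivWithinAt t ht) i
  norm_le t ht := by
    have hb : 1 ≤ B + t := by linarith
    refine (pi_norm_le_iff_of_nonneg (by positivity)).2 fun
      | none => ?_
      | some i => ?_
    · rw [timedRun, Real.norm_eq_abs, abs_of_nonneg ht]
      exact (by linarith : t ≤ B + t).trans (le_self_pow₀ hb (by omega))
    · exact (norm_le_pi_norm (y t) i).trans
        ((h.norm_le t ht).trans (pow_le_pow_right₀ hb (by omega)))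
  norm_output_sub_le t μ hμ ht :=
    h.norm_output_sub_le t μ hμ ((pow_le_pow_right₀ (by linarith) (by omega)).trans ht)

end Timed

lemma exists_hasDerivAt_of_hasDerivWithinAt_Ici {E : Type*} [NormedAddCommGroup E]
    [NormedSpace ℝ E] {V : E → E} {y : ℝ → E}
    (hy : ∀ t, 0 ≤ t → HasDerivWithinAt y (V (y t)) (Ici 0) t) :
    ∃ z : ℝ → E, EqOn z y (Ici 0) ∧ ∀ t, 0 ≤ t → HasDerivAt z (V (z t)) t := by
  let z : ℝ → E := fun t => if 0 ≤ t then y t else y 0 + t • V (y 0)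
  have hz : EqOn z y (Ici 0) := fun t ht => if_pos ht
  refine ⟨z, hz, fun t ht => ?_⟩
  have hright : HasDerivWithinAt z (V (z t)) (Ici 0) t :=
    (hz ht).symm ▸ (hy t ht).congr hz (hz ht)
  rcases ht.eq_or_lt with rfl | ht
  · have hleft : HasDerivWithinAt z (V (z 0)) (Iic 0) 0 := by
      have hlin : HasDerivAt (fun t : ℝ => y 0 + t • V (y 0)) (V (y 0)) 0 := by
        simpa using ((hasDerivAt_id (0 : ℝ)).smul_const (V (y 0))).const_add (y 0)
      rw [hz self_mem_Ici]
      refine hlin.hasDerivWithinAt.congr (fun s hs => ?_) (by simp [z])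
      rcases (mem_Iic.1 hs).eq_or_lt with rfl | hs
      · simp [z]
      · exact if_neg hs.not_ge
    simpa [Ici_union_Iic, hasDerivWithinAt_univ] using hright.union hleft
  · exact hright.hasDerivAt (Ici_mem_nhds ht)

lemma IsPolynomialMap.exists_pEval_comp {J : Type*} {d : ℕ} {G : (J → ℝ) → J → ℝ}
    (hG : IsPolynomialMap G) {idx : Fin d → J} {emb : J → Fin d}
    (h : Function.LeftInverse idx emb) :
    ∃ p : Fin d → MvPolynomial (Fin d) ℝ, ∀ u, pEval p (u ∘ idx) = G u ∘ idx := by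
  have hG' : IsPolynomialMap fun s j => G (s ∘ emb) j := fun j => (hG j).comp fun _ => .coord _
  choose P hP using hG'
  refine ⟨P ∘ idx, fun u => funext fun j => ?_⟩
  calc pEval (P ∘ idx) (u ∘ idx) j = G ((u ∘ idx) ∘ emb) (idx j) := (hP (idx j) _).symm
    _ = (G u ∘ idx) j := by simp [Function.comp_assoc, h.comp_eq_id]

lemma norm_comp_le {ι κ : Type*} [Fintype ι] [Fintype κ] (v : ι → ℝ) (o : κ → ι) :
    ‖v ∘ o‖ ≤ ‖v‖ :=
  (pi_norm_le_iff_of_nonneg (norm_nonneg _)).2 fun i => norm_le_pi_norm v (o i)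

lemma norm_comp_eq_of_surjective {J J' : Type*} [Fintype J] [Fintype J'] {σ : J' → J}
    (hσ : Function.Surjective σ) (u : J → ℝ) : ‖u ∘ σ‖ = ‖u‖ := by
  refine (norm_comp_le u σ).antisymm <| (pi_norm_le_iff_of_nonneg (norm_nonneg _)).2 fun j => ?_
  obtain ⟨i, rfl⟩ := hσ j
  exact norm_le_pi_norm (u ∘ σ) i

/-- A bound on the length of a run with exponent `k` up to the time at which its output is
`exp (-μ)`-correct, when the input has size `a` and the speed at time `t` is at most
`(2 + a + t) ^ c`. -/
def lengthBound (k c : ℕ) (a μ : ℝ) : ℝ :=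
  (2 + a + (2 + a + μ) ^ k) ^ c * (2 + a + μ) ^ k + 1

lemma isPolyFun2_lengthBound (k c : ℕ) : IsPolyFun2 (lengthBound k c) := by
  have ha : IsPolynomialFun fun v : Fin 2 → ℝ => 2 + v 0 := (IsPolynomialFun.const 2).add (.coord 0)
  have hT : IsPolynomialFun fun v : Fin 2 → ℝ => (2 + v 0 + v 1) ^ k := (ha.add (.coord 1)).pow k
  obtain ⟨P, hP⟩ := (((ha.add hT).pow c).mul hT).add (.const 1)
  refine ⟨⟨P, fun a μ => ?_⟩, fun a μ ha hμ => by unfold lengthBound; positivity⟩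
  rw [← hP]
  simp [lengthBound]

lemma le_of_lengthBound_le_pLen {d : ℕ} {p : Fin d → MvPolynomial (Fin d) ℝ} {y : ℝ → Fin d → ℝ}
    {k c : ℕ} {a μ t : ℝ} (ha : 0 ≤ a) (hμ : 0 ≤ μ) (ht : 0 ≤ t)
    (hspeed : ∀ s, 0 ≤ s → ‖pEval p (y s)‖ ≤ (2 + a + s) ^ c)
    (hlen : lengthBound k c a μ ≤ pLen p y t) : (2 + a + μ) ^ k ≤ t := by
  by_contra! hlt
  refine hlen.not_gt ?_
  calc pLen p y t ≤ (2 + a + t) ^ c * t :=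
        pLen_le_mul (fun s hs => (hspeed s hs.1.le).trans
          (pow_le_pow_left₀ (by linarith [hs.1]) (by linarith [hs.2]) c)) ht
    _ ≤ (2 + a + (2 + a + μ) ^ k) ^ c * (2 + a + μ) ^ k := by gcongr
    _ < lengthBound k c a μ := lt_add_one _

lemma AP.of_isPolyTimeRun {n m : ℕ} {J : Type*} [Fintype J] {dom : Set (Fin n → ℝ)}
    {f : (Fin n → ℝ) → Fin m → ℝ} {G : (J → ℝ) → J → ℝ} {q : (Fin n → ℝ) → J → ℝ} {o : Fin m → J}
    {k : ℕ} (hG : IsPolynomialMap G) (hq : IsPolynomialMap q) (hspeed : ∀ v, 1 ≤ ‖G v‖)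
    (H : ∀ x ∈ dom, ∃ y, y 0 = q x ∧ IsPolyTimeRun G o k (2 + ‖x‖) (f x) y) : AP dom f := by
  obtain ⟨c, hc⟩ := hG.exists_hasPolyGrowth
  let e := Fintype.equivFin J
  -- `AP` reads the output from the first `m` coordinates, so these duplicate the output.
  let idx : Fin (m + Fintype.card J) → J := Fin.append o e.symm
  have hidx : Function.LeftInverse idx fun j => Fin.natAdd m (e j) := fun j => by simp [idx]
  obtain ⟨p, hp⟩ := hG.exists_pEval_comp hidx
  choose Q hQ using hq
  have hnorm : ∀ u, ‖pEval p (u ∘ idx)‖ = ‖G u‖ := fun u => by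
    rw [hp, norm_comp_eq_of_surjective hidx.surjective]
  refine ⟨_, Nat.le_add_right m _, p, Q ∘ idx, lengthBound k ((k + 1) * c),
    isPolyFun2_lengthBound _ _, fun x hx => ?_⟩
  obtain ⟨y, hy0, hy⟩ := H x hx
  obtain ⟨z, hzy, hz⟩ := exists_hasDerivAt_of_hasDerivWithinAt_Ici hy.hasDerivWithinAt
  have hzidx : ∀ t, 0 ≤ t → HasDerivAt (fun t => z t ∘ idx) (pEval p (z t ∘ idx)) t := fun t ht =>
    hp (z t) ▸ hasDerivAt_pi.2 fun j => hasDerivAt_pi.1 (hz t ht) (idx j)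
  have hup : ∀ t, 0 ≤ t → ‖pEval p (z t ∘ idx)‖ ≤ (2 + ‖x‖ + t) ^ ((k + 1) * c) := fun t ht => by
    have hB : 2 ≤ 2 + ‖x‖ + t := by linarith [norm_nonneg x]
    have hB1 : 1 ≤ 2 + ‖x‖ + t := by linarith
    rw [hnorm, hzy ht, pow_mul]
    exact hc.norm_le (hB.trans (le_self_pow₀ hB1 (by omega)))
      ((hy.norm_le t ht).trans (pow_le_pow_right₀ hB1 (by omega)))
  refine ⟨fun t => z t ∘ idx, ?_, hzidx, fun t ht μ hμ hlen => ?_, fun t ht => ?_⟩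
  · exact funext fun j => by simp [hzy self_mem_Ici, hy0, ← hQ]
  · have hout := hy.norm_output_sub_le t μ hμ
      (le_of_lengthBound_le_pLen (norm_nonneg x) hμ ht hup hlen)
    rw [← hzy ht] at hout
    have hcast : (fun i => (z t ∘ idx) (Fin.castLE (Nat.le_add_right m _) i)) = z t ∘ o :=
      funext fun i => congrArg (z t) (Fin.append_left' o _ i)
    rwa [hcast]
  · exact le_pLen_of_one_le (fun s hs => (hzidx s hs).continuousAt.continuousWithinAt)
      (fun s _ => (hnorm (z s)).symm ▸ hspeed (z s)) ht

theorem IsPolyTimeComputable.ap {n m : ℕ} {dom : Set (Fin n → ℝ)} {f : (Fin n → ℝ) → Fin m → ℝ}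
    (h : IsPolyTimeComputable dom f) : AP dom f := by
  obtain ⟨ι, _, F, q, o, k, hF, hq, H⟩ := h
  refine AP.of_isPolyTimeRun (k := k + 1) hF.timedField
    (q := fun x => fun | none => 0 | some i => q x i) (o := some ∘ o)
    (fun | none => .const 0 | some i => hq i) one_le_norm_timedField fun x hx => ?_
  obtain ⟨y, hy0, hy⟩ := H x hx
  refine ⟨timedRun y, ?_, hy.timed (by linarith [norm_nonneg x])⟩
  funext c
  cases c <;> simp [timedRun, hy0]

section GlobalExistence

variable {E : Type*} [NormedAddCommGroup E] [NormedSpace ℝ E] {g : ℝ → E → E}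

/-- A time-dependent vector field on `[0, ∞)` that is bounded and Lipschitz in space, uniformly on
bounded time intervals. Its integral curves exist for all time. -/
structure IsTameField (g : ℝ → E → E) : Prop where
  continuousOn : ContinuousOn (Function.uncurry g) (Ici 0 ×ˢ univ)
  exists_bound : ∀ N : ℝ, ∃ C : NNReal, ∀ t ∈ Icc 0 N, ∀ x, ‖g t x‖ ≤ C
  exists_lipschitzWith : ∀ N : ℝ, ∃ K, ∀ t ∈ Icc 0 N, LipschitzWith K (g t)

lemma hasDerivWithinAt_Ici_of_Icc {α : ℝ → E} {α' : E} {N t : ℝ}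
    (h : HasDerivWithinAt α α' (Icc 0 N) t) (ht : t < N) : HasDerivWithinAt α α' (Ici 0) t :=
  h.mono_of_mem_nhdsWithin <| by
    filter_upwards [mem_nhdsWithin_of_mem_nhds (Iio_mem_nhds ht), self_mem_nhdsWithin]
      with s hsN hs using ⟨hs, le_of_lt hsN⟩

namespace IsTameField

lemma exists_solution_Icc [CompleteSpace E] (hg : IsTameField g) (x₀ : E) {N : ℝ} (hN : 0 ≤ N) :
    ∃ α, α 0 = x₀ ∧ ∀ t ∈ Icc 0 N, HasDerivWithinAt α (g t (α t)) (Icc 0 N) t := by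
  obtain ⟨C, hC⟩ := hg.exists_bound N
  obtain ⟨K, hK⟩ := hg.exists_lipschitzWith N
  have hpl : IsPicardLindelof g (⟨0, le_rfl, hN⟩ : Icc 0 N) x₀ (C * N.toNNReal) 0 C K :=
    { lipschitzOnWith := fun t ht => (hK t ht).lipschitzOnWith
      continuousOn := fun x _ => hg.continuousOn.comp
        (f := fun t => (t, x)) (by fun_prop) fun t ht => ⟨ht.1, trivial⟩
      norm_le := fun t ht x _ => hC t ht x
      mul_max_le := by simp [hN] }
  exact hpl.exists_eq_forall_mem_Icc_hasDerivWithinAt₀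

lemma solution_eqOn (hg : IsTameField g) {α β : ℝ → E} {M N : ℝ} (hMN : M ≤ N) (h₀ : α 0 = β 0)
    (hα : ∀ t ∈ Icc 0 M, HasDerivWithinAt α (g t (α t)) (Icc 0 M) t)
    (hβ : ∀ t ∈ Icc 0 N, HasDerivWithinAt β (g t (β t)) (Icc 0 N) t) : EqOn α β (Icc 0 M) := by
  obtain ⟨K, hK⟩ := hg.exists_lipschitzWith M
  have hsub : Icc 0 M ⊆ Icc 0 N := Icc_subset_Icc_right hMN
  refine ODE_solution_unique_of_mem_Icc_right (s := fun _ => univ)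
    (fun t ht => (hK t (Ico_subset_Icc_self ht)).lipschitzOnWith)
    (fun t ht => (hα t ht).continuousWithinAt) (fun t ht => ?_) (fun _ _ => trivial)
    (fun t ht => ((hβ t (hsub ht)).mono hsub).continuousWithinAt) (fun t ht => ?_)
    (fun _ _ => trivial) h₀
  · exact (hasDerivWithinAt_Ici_of_Icc (hα t (Ico_subset_Icc_self ht)) ht.2).mono
      (Ici_subset_Ici.2 ht.1)
  · exact (hasDerivWithinAt_Ici_of_Icc (hβ t ⟨ht.1, ht.2.le.trans hMN⟩) (ht.2.trans_le hMN)).mono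
      (Ici_subset_Ici.2 ht.1)

theorem exists_solution [CompleteSpace E] (hg : IsTameField g) (x₀ : E) :
    ∃ α, α 0 = x₀ ∧ ∀ t, 0 ≤ t → HasDerivWithinAt α (g t (α t)) (Ici 0) t := by
  choose α hα₀ hα using fun N : ℕ =>
    hg.exists_solution_Icc x₀ (N := N + 1) (by positivity)
  have hglue {N : ℕ} {t : ℝ} (ht : 0 ≤ t) (htN : t < N + 1) : α ⌊t⌋₊ t = α N t := by
    have hfloor : ⌊t⌋₊ ≤ N := Nat.lt_succ_iff.1 ((Nat.floor_lt ht).2 (by exact_mod_cast htN))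
    exact hg.solution_eqOn (by gcongr) ((hα₀ _).trans (hα₀ _).symm) (hα _) (hα _)
      ⟨ht, (Nat.lt_floor_add_one t).le⟩
  refine ⟨fun t => α ⌊t⌋₊ t, by simp [hα₀], fun t ht => ?_⟩
  have htN := Nat.lt_floor_add_one t
  refine (hasDerivWithinAt_Ici_of_Icc (hα _ t ⟨ht, htN.le⟩) htN).congr_of_eventuallyEq ?_ rfl
  filter_upwards [mem_nhdsWithin_of_mem_nhds (Iio_mem_nhds htN), self_mem_nhdsWithin]
    with s hsN hs using hglue hs hsN

lemma exp_smul_conj (hg : IsTameField g) {A : ℝ → ℝ} (hA : Continuous A) :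
    IsTameField fun t x => Real.exp (A t) • g t (Real.exp (-A t) • x) where
  continuousOn := by
    refine ContinuousOn.smul (by fun_prop) (hg.continuousOn.comp
      (f := fun p : ℝ × E => (p.1, Real.exp (-A p.1) • p.2)) (by fun_prop) fun p hp => hp)
  exists_bound N := by
    obtain ⟨C, hC⟩ := hg.exists_bound N
    obtain ⟨D, hD⟩ := isCompact_Icc.exists_bound_of_continuousOn (s := Icc 0 N)
      (f := fun t => Real.exp (A t)) (by fun_prop)
    refine ⟨D.toNNReal * C, fun t ht x => ?_⟩
    rw [norm_smul]
    exact mul_le_mul ((hD t ht).trans (Real.le_coe_toNNReal D)) (hC t ht _) (norm_nonneg _)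
      (NNReal.coe_nonneg _)
  exists_lipschitzWith N := by
    obtain ⟨K, hK⟩ := hg.exists_lipschitzWith N
    refine ⟨K, fun t ht => .of_dist_le_mul fun x y => ?_⟩
    rw [dist_smul₀, Real.norm_of_nonneg (Real.exp_pos _).le]
    calc Real.exp (A t) * dist (g t (Real.exp (-A t) • x)) (g t (Real.exp (-A t) • y))
        ≤ Real.exp (A t) * (K * dist (Real.exp (-A t) • x) (Real.exp (-A t) • y)) := by
          gcongr
          exact (hK t ht).dist_le_mul _ _
      _ = K * dist x y := by
          rw [dist_smul₀, Real.norm_of_nonneg (Real.exp_pos _).le, Real.exp_neg]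
          field_simp

theorem exists_solution_sub_smul [CompleteSpace E] (hg : IsTameField g) {r : ℝ → ℝ}
    (hr : Continuous r) (x₀ : E) :
    ∃ α, α 0 = x₀ ∧ ∀ t, 0 ≤ t → HasDerivWithinAt α (g t (α t) - r t • α t) (Ici 0) t := by
  have hA (t : ℝ) : HasDerivAt (fun t => ∫ s in 0..t, r s) (r t) t :=
    (hr.integral_hasStrictDerivAt 0 t).hasDerivAt
  obtain ⟨β, hβ₀, hβ⟩ := (hg.exp_smul_conj
    (continuous_iff_continuousAt.2 fun t => (hA t).continuousAt)).exists_solution x₀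
  refine ⟨fun t => Real.exp (-∫ s in 0..t, r s) • β t, by simp [hβ₀], fun t ht => ?_⟩
  refine ((hA t).fun_neg.exp.hasDerivWithinAt.fun_smul (hβ t ht)).congr_deriv ?_
  rw [smul_smul, ← Real.exp_add, neg_add_cancel, Real.exp_zero, one_smul, mul_neg, neg_smul,
    mul_comm, mul_smul, sub_eq_add_neg]

end IsTameField

end GlobalExistence

section Comparison

variable {E : Type*} [NormedAddCommGroup E] [NormedSpace ℝ E]

variable {u g : ℝ → E} {r : ℝ → ℝ} {t₀ t₁ ε δ : ℝ}

lemma norm_exp_integral_smul_le (hr : Continuous r) (hr₀ : ∀ t ∈ Icc t₀ t₁, 0 ≤ r t) (h : t₀ ≤ t₁)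
    (hδ : 0 ≤ δ) (hu : ∀ t ∈ Icc t₀ t₁, HasDerivWithinAt u (g t - r t • u t) (Ici t₀) t)
    (hg : ∀ t ∈ Icc t₀ t₁, ‖g t‖ ≤ ε * r t + δ) :
    ‖Real.exp (∫ s in t₀..t₁, r s) • u t₁‖ ≤
      ‖u t₀‖ + ε * (Real.exp (∫ s in t₀..t₁, r s) - 1) +
        δ * (t₁ - t₀) * Real.exp (∫ s in t₀..t₁, r s) := by
  set A : ℝ → ℝ := fun t => ∫ s in t₀..t, r s with hA
  have hexp (t : ℝ) : HasDerivAt (fun t => Real.exp (A t)) (Real.exp (A t) * r t) t :=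
    (hr.integral_hasStrictDerivAt t₀ t).hasDerivAt.exp
  have hv (t : ℝ) (ht : t ∈ Icc t₀ t₁) :
      HasDerivWithinAt (fun t => Real.exp (A t) • u t) (Real.exp (A t) • g t) (Ici t₀) t :=
    ((hexp t).hasDerivWithinAt.fun_smul (hu t ht)).congr_deriv <| by
      rw [smul_sub, smul_smul, sub_add_cancel]
  refine image_norm_le_of_norm_deriv_right_le_deriv_boundary
    (B := fun t => ‖u t₀‖ + ε * (Real.exp (A t) - 1) + δ * (t - t₀) * Real.exp (A t))
    (fun t ht => ((hv t ht).mono Icc_subset_Ici_self).continuousWithinAt)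
    (fun t ht => (hv t (Ico_subset_Icc_self ht)).mono (Ici_subset_Ici.2 ht.1))
    (by simp [hA]) (fun t => ((((hexp t).sub_const 1).const_mul ε).const_add ‖u t₀‖).add
      ((((hasDerivAt_id t).sub_const t₀).const_mul δ).mul (hexp t))) (fun t ht => ?_)
    (right_mem_Icc.2 h)
  have hδt : 0 ≤ δ * (t - t₀) * (Real.exp (A t) * r t) := mul_nonneg
    (mul_nonneg hδ (sub_nonneg.2 ht.1))
    (mul_nonneg (Real.exp_pos _).le (hr₀ t (Ico_subset_Icc_self ht)))
  rw [norm_smul, Real.norm_of_nonneg (Real.exp_pos _).le]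
  calc Real.exp (A t) * ‖g t‖ ≤ Real.exp (A t) * (ε * r t + δ) := by
        gcongr
        exact hg t (Ico_subset_Icc_self ht)
    _ ≤ _ := by
        simp only [id, mul_one]
        linarith

lemma norm_le_of_hasDerivWithinAt_sub_smul (hr : Continuous r) (hr₀ : ∀ t ∈ Icc t₀ t₁, 0 ≤ r t)
    (h : t₀ ≤ t₁) (hε : 0 ≤ ε) (hδ : 0 ≤ δ)
    (hu : ∀ t ∈ Icc t₀ t₁, HasDerivWithinAt u (g t - r t • u t) (Ici t₀) t)
    (hg : ∀ t ∈ Icc t₀ t₁, ‖g t‖ ≤ ε * r t + δ) :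
    ‖u t₁‖ ≤ Real.exp (-∫ s in t₀..t₁, r s) * ‖u t₀‖ + ε + δ * (t₁ - t₀) := by
  have hv := norm_exp_integral_smul_le hr hr₀ h hδ hu hg
  set A := ∫ s in t₀..t₁, r s
  calc ‖u t₁‖ = Real.exp (-A) * ‖Real.exp A • u t₁‖ := by
        rw [norm_smul, Real.norm_of_nonneg (Real.exp_pos _).le, ← mul_assoc, ← Real.exp_add,
          neg_add_cancel, Real.exp_zero, one_mul]
    _ ≤ Real.exp (-A) * (‖u t₀‖ + ε * (Real.exp A - 1) + δ * (t₁ - t₀) * Real.exp A) := by gcongr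
    _ = Real.exp (-A) * ‖u t₀‖ + ε * (1 - Real.exp (-A)) + δ * (t₁ - t₀) := by
        rw [Real.exp_neg]
        field_simp
    _ ≤ Real.exp (-A) * ‖u t₀‖ + ε + δ * (t₁ - t₀) := by
        gcongr
        exact mul_le_of_le_one_right hε (by linarith [Real.exp_pos (-A)])

lemma gronwallBound_le_mul_exp {δ K ε x : ℝ} (hK : 1 ≤ K) (hε : 0 ≤ ε) (hx : 0 ≤ x) :
    gronwallBound δ K ε x ≤ (δ + ε) * Real.exp (K * x) := by
  rw [gronwallBound_of_K_ne_0 (by positivity), add_mul]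
  have hexp : 1 ≤ Real.exp (K * x) := Real.one_le_exp (by positivity)
  exact add_le_add le_rfl (mul_le_mul (div_le_self hε hK) (by linarith) (by linarith) hε)

end Comparison

section Pulses

lemma pow_mul_exp_neg_pow_le {B : ℝ} (hB : 2 ≤ B) {i j l : ℕ} (hi : i < l) (hj : j < l) :
    B ^ i * Real.exp (-B ^ l) ≤ Real.exp (-B ^ j) :=
  calc B ^ i * Real.exp (-B ^ l) ≤ Real.exp (B ^ i) * Real.exp (-B ^ l) := by
        gcongr
        linarith [Real.add_one_le_exp (B ^ i)]
    _ = Real.exp (B ^ i - B ^ l) := by rw [← Real.exp_add, sub_eq_add_neg]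
    _ ≤ Real.exp (-B ^ j) := by
        gcongr
        linarith [pow_add_pow_le_pow hB hi hj]

lemma sigmoid_le_exp (x : ℝ) : Real.sigmoid x ≤ Real.exp x := by
  rw [Real.sigmoid_def, ← inv_inv (Real.exp x), ← Real.exp_neg]
  exact inv_anti₀ (Real.exp_pos _) (by linarith)

lemma mul_exp_neg_le_one (x : ℝ) : x * Real.exp (-x) ≤ 1 := by
  rw [Real.exp_neg, ← div_eq_mul_inv, div_le_one (Real.exp_pos x)]
  linarith [Real.add_one_le_exp x]

lemma add_three_pow_le_pow {L : ℝ} (hL : 3 ≤ L) (n : ℕ) : (L + 3) ^ n ≤ L ^ (2 * n) := by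
  rw [pow_mul]
  exact pow_le_pow_left₀ (by linarith) (by nlinarith) n

/-- The periodic signal, of period three, that is nonnegative near the times `c + 3 * ℤ` and
negative away from them. -/
def phase (c t : ℝ) : ℝ := Real.cos (2 * Real.pi / 3 * (t - c)) - 3 / 4

/-- A smooth approximation to the indicator of the times at which `phase c` is nonnegative. The
factor `t` in the exponent makes the value at time zero independent of `X`. -/
def gate (e : ℕ) (X c t : ℝ) : ℝ := Real.sigmoid (t * (X + t) ^ e * phase c t)

variable {c t X : ℝ} {m n e : ℕ}

lemma phase_sub_three_mul (c t : ℝ) (j : ℤ) : phase c (t - 3 * j) = phase c t := by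
  rw [phase, phase, show 2 * Real.pi / 3 * (t - 3 * j - c) =
    2 * Real.pi / 3 * (t - c) - j * (2 * Real.pi) by ring, Real.cos_sub_int_mul_two_pi]

lemma phase_nonneg {j : ℤ} (h : |t - (3 * j + c)| ≤ 1 / 4) : 0 ≤ phase c t := by
  have hangle : |2 * Real.pi / 3 * (t - 3 * j - c)| ≤ Real.pi / 6 := by
    rw [abs_mul, abs_of_pos (by positivity), sub_sub]
    nlinarith [Real.pi_pos]
  have hcos := Real.cos_le_cos_of_nonneg_of_le_pi (abs_nonneg _) (by linarith [Real.pi_pos]) hangle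
  rw [Real.cos_abs, Real.cos_pi_div_six] at hcos
  have hsqrt : (3 / 2 : ℝ) ≤ √3 := Real.le_sqrt_of_sq_le (by norm_num)
  rw [← phase_sub_three_mul c t j, phase]
  linarith

lemma phase_le {j : ℤ} (h : t ∈ Icc (3 * j + c + 1 / 2) (3 * j + c + 5 / 2)) :
    phase c t ≤ -(1 / 4) := by
  have hangle : |2 * Real.pi / 3 * (t - 3 * j - c) - Real.pi| ≤ 2 * Real.pi / 3 := by
    rw [abs_le]
    constructor <;> nlinarith [Real.pi_pos, h.1, h.2]
  have hcos := Real.cos_le_cos_of_nonneg_of_le_pi (abs_nonneg _) (by linarith [Real.pi_pos]) hangle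
  rw [Real.cos_abs, Real.cos_sub_pi, show 2 * Real.pi / 3 = Real.pi - Real.pi / 3 by ring,
    Real.cos_pi_sub, Real.cos_pi_div_three,
    show Real.pi - Real.pi / 3 = 2 * Real.pi / 3 by ring] at hcos
  rw [← phase_sub_three_mul c t j, phase]
  linarith

lemma half_le_gate (hX : 0 ≤ X) (ht : 0 ≤ t) (h : 0 ≤ phase c t) : 1 / 2 ≤ gate e X c t := by
  rw [one_div, ← Real.sigmoid_zero]
  exact Real.sigmoid_le (by positivity)

lemma gate_le_exp (hX : 0 ≤ X) (ht : 0 ≤ t) (h : phase c t ≤ -(1 / 4)) :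
    gate e X c t ≤ Real.exp (-(t * (X + t) ^ e / 4)) := by
  refine (sigmoid_le_exp _).trans (Real.exp_le_exp.2 ?_)
  nlinarith [show 0 ≤ t * (X + t) ^ e by positivity]

/-- A signal `a` that pulses with period three: it is large, of order at least `(X + t) ^ m`, near
the times `c + 3 * ℤ` and exponentially small at distance at least `1 / 2` from them. The size of
the pulses grows with time; the bounds at time `t` are stated in terms of `X + t + 3`, which exceeds
the value of `X + t` during the whole cycle of length three that contains `t`. -/
structure IsPulseTrain (X c : ℝ) (m n : ℕ) (a : ℝ → ℝ) : Prop where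
  continuous : Continuous a
  nonneg : ∀ t, 0 ≤ t → 0 ≤ a t
  le_pow : ∀ t, 0 ≤ t → a t ≤ (X + t) ^ (2 * m + 5)
  le_of_on : ∀ (j : ℤ) t, 1 / 4 ≤ t → |t - (3 * j + c)| ≤ 1 / 4 → 2 * (X + t + 3) ^ m ≤ a t
  pow_mul_le_of_off : ∀ (j : ℤ) t, 0 ≤ t → t ∈ Icc (3 * j + c + 1 / 2) (3 * j + c + 5 / 2) →
    (X + t + 3) ^ n * a t ≤ 1
  le_exp_of_off : ∀ (j : ℤ) t, 1 / 4 ≤ t → t ∈ Icc (3 * j + c + 1 / 2) (3 * j + c + 5 / 2) →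
    a t ≤ Real.exp (-(X + t + 3) ^ n)

lemma le_mul_gate_of_on (hX : 3 ≤ X) (ht : 1 / 4 ≤ t) (h : 0 ≤ phase c t) :
    2 * (X + t + 3) ^ m ≤ t * (X + t) ^ (2 * m + 4) * gate e X c t := by
  have hL : 3 ≤ X + t := by linarith
  calc 2 * (X + t + 3) ^ m ≤ 2 * (X + t) ^ (2 * m) := by gcongr; exact add_three_pow_le_pow hL m
    _ ≤ 1 / 4 * ((X + t) ^ (2 * m) * (X + t) ^ 4) * (1 / 2) := by
        have := pow_le_pow_left₀ (by norm_num) hL 4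
        nlinarith [show 0 < (X + t) ^ (2 * m) by positivity]
    _ ≤ t * (X + t) ^ (2 * m + 4) * gate e X c t := by
        rw [← pow_add]
        gcongr
        exact half_le_gate (by linarith) (by linarith) h

lemma pow_mul_gate_le_one (hX : 3 ≤ X) (ht : 0 ≤ t) (h : phase c t ≤ -(1 / 4))
    (he : 2 * m + 2 * n + 9 ≤ e) :
    (X + t + 3) ^ n * (t * (X + t) ^ (2 * m + 4) * gate e X c t) ≤ 1 := by
  have hL : 3 ≤ X + t := by linarith
  have hpow : 4 * ((X + t) ^ (2 * n) * (X + t) ^ (2 * m + 4)) ≤ (X + t) ^ e := calc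
    4 * ((X + t) ^ (2 * n) * (X + t) ^ (2 * m + 4))
      ≤ (X + t) ^ 2 * ((X + t) ^ (2 * n) * (X + t) ^ (2 * m + 4)) := by gcongr; nlinarith
    _ = (X + t) ^ (2 + 2 * n + (2 * m + 4)) := by ring
    _ ≤ (X + t) ^ e := pow_le_pow_right₀ (by linarith) (by omega)
  calc (X + t + 3) ^ n * (t * (X + t) ^ (2 * m + 4) * gate e X c t)
      ≤ (X + t) ^ (2 * n) *
          (t * (X + t) ^ (2 * m + 4) * Real.exp (-(t * (X + t) ^ e / 4))) := by
        gcongr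
        · exact mul_nonneg (by positivity) (Real.sigmoid_nonneg _)
        · exact add_three_pow_le_pow hL n
        · exact gate_le_exp (by linarith) ht h
    _ = t * ((X + t) ^ (2 * n) * (X + t) ^ (2 * m + 4)) * Real.exp (-(t * (X + t) ^ e / 4)) := by
        ring
    _ ≤ t * (X + t) ^ e / 4 * Real.exp (-(t * (X + t) ^ e / 4)) := by
        gcongr
        nlinarith
    _ ≤ 1 := mul_exp_neg_le_one _

lemma mul_gate_le_exp (hX : 3 ≤ X) (ht : 1 / 4 ≤ t) (h : phase c t ≤ -(1 / 4))
    (he : 2 * m + 2 * n + 9 ≤ e) :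
    t * (X + t) ^ (2 * m + 4) * gate e X c t ≤ Real.exp (-(X + t + 3) ^ n) := by
  have hL : 3 ≤ X + t := by linarith
  have hpow : (X + t) ^ (2 * m + 2 * n + 6) ≤ t * (X + t) ^ e / 4 := calc
    (X + t) ^ (2 * m + 2 * n + 6) ≤ (X + t) ^ 3 * (X + t) ^ (2 * m + 2 * n + 6) / 16 := by
        have := pow_le_pow_left₀ (by norm_num) hL 3
        nlinarith [show 0 < (X + t) ^ (2 * m + 2 * n + 6) by positivity]
    _ = (X + t) ^ (2 * m + 2 * n + 9) / 16 := by ring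
    _ ≤ (X + t) ^ e / 16 := by
        gcongr
        linarith
    _ ≤ t * (X + t) ^ e / 4 := by nlinarith [show 0 < (X + t) ^ e by positivity]
  calc t * (X + t) ^ (2 * m + 4) * gate e X c t
      ≤ (X + t) * (X + t) ^ (2 * m + 4) * Real.exp (-(X + t) ^ (2 * m + 2 * n + 6)) := by
        gcongr
        · exact Real.sigmoid_nonneg _
        · linarith
        · exact (gate_le_exp (by linarith) (by linarith) h).trans
            (Real.exp_le_exp.2 (neg_le_neg hpow))
    _ = (X + t) ^ (2 * m + 5) * Real.exp (-(X + t) ^ (2 * m + 2 * n + 6)) := by ring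
    _ ≤ Real.exp (-(X + t) ^ (2 * n)) :=
        pow_mul_exp_neg_pow_le (by linarith) (by omega) (by omega)
    _ ≤ Real.exp (-(X + t + 3) ^ n) := Real.exp_le_exp.2 (neg_le_neg (add_three_pow_le_pow hL n))

lemma isPulseTrain_mul_gate (hX : 3 ≤ X) (he : 2 * m + 2 * n + 9 ≤ e) :
    IsPulseTrain X c m n fun t => t * (X + t) ^ (2 * m + 4) * gate e X c t where
  continuous := by
    unfold gate phase
    fun_prop
  nonneg t ht := mul_nonneg (by positivity) (Real.sigmoid_nonneg _)
  le_pow t ht := by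
    calc t * (X + t) ^ (2 * m + 4) * gate e X c t ≤ (X + t) * (X + t) ^ (2 * m + 4) * 1 := by
          gcongr
          · exact Real.sigmoid_nonneg _
          · linarith
          · exact Real.sigmoid_le_one _
      _ = (X + t) ^ (2 * m + 5) := by ring
  le_of_on j t ht h := le_mul_gate_of_on hX ht (phase_nonneg h)
  pow_mul_le_of_off j t ht h := pow_mul_gate_le_one hX ht (phase_le h) he
  le_exp_of_off j t ht h := mul_gate_le_exp hX ht (phase_le h) he

lemma IsPulseTrain.le_integral {a : ℝ → ℝ} (ha : IsPulseTrain X c m n a) {j : ℤ} {τ t₀ t₁ : ℝ}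
    (hτ : 0 ≤ X + τ) (hτc : τ ≤ 3 * j + c - 1 / 4) (ht₀ : 0 ≤ t₀) (hj : 1 / 4 ≤ 3 * j + c - 1 / 4)
    (h₀ : t₀ ≤ 3 * j + c - 1 / 4) (h₁ : 3 * j + c + 1 / 4 ≤ t₁) :
    (X + τ + 3) ^ m ≤ ∫ t in t₀..t₁, a t := by
  have hint (s t : ℝ) : IntervalIntegrable a MeasureTheory.volume s t :=
    ha.continuous.intervalIntegrable s t
  calc (X + τ + 3) ^ m = ∫ _ in (3 * j + c - 1 / 4)..(3 * j + c + 1 / 4), 2 * (X + τ + 3) ^ m := by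
        rw [intervalIntegral.integral_const, smul_eq_mul]
        ring
    _ ≤ ∫ t in (3 * j + c - 1 / 4)..(3 * j + c + 1 / 4), a t := by
        refine intervalIntegral.integral_mono_on (by linarith) (by simp) (hint _ _) fun t ht => ?_
        refine le_trans ?_ (ha.le_of_on j t (hj.trans ht.1)
          (abs_le.2 ⟨by linarith [ht.1], by linarith [ht.2]⟩))
        gcongr
        linarith [ht.1]
    _ ≤ ∫ t in t₀..t₁, a t := by
        refine intervalIntegral.integral_mono_interval h₀ (by linarith) h₁ ?_ (hint _ _)
        exact (MeasureTheory.ae_restrict_iff' measurableSet_Ioc).2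
          (.of_forall fun t ht => ha.nonneg t (ht₀.trans ht.1.le))

end Pulses

section Clamp

variable {ι : Type*} [Fintype ι] {R : ℝ}

/-- The coordinatewise truncation of a vector to the cube `[-R, R]^ι`. It turns a polynomial field
into a bounded Lipschitz one without changing it near the trajectories of interest. -/
def clamp (R : ℝ) (v : ι → ℝ) (i : ι) : ℝ := max (-R) (min R (v i))

lemma norm_clamp_le (hR : 0 ≤ R) (v : ι → ℝ) : ‖clamp R v‖ ≤ R :=
  (pi_norm_le_iff_of_nonneg hR).2 fun i =>
    abs_le.2 ⟨le_max_left _ _, max_le (by linarith) (min_le_left _ _)⟩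

lemma clamp_eq_self {v : ι → ℝ} (hv : ‖v‖ ≤ R) : clamp R v = v := by
  funext i
  have hi := abs_le.1 ((norm_le_pi_norm v i).trans hv)
  rw [clamp, min_eq_right hi.2, max_eq_right hi.1]

lemma norm_clamp_sub_clamp_le (R : ℝ) (v w : ι → ℝ) : ‖clamp R v - clamp R w‖ ≤ ‖v - w‖ :=
  (pi_norm_le_iff_of_nonneg (norm_nonneg _)).2 fun i => calc
    |max (-R) (min R (v i)) - max (-R) (min R (w i))| ≤ |min R (v i) - min R (w i)| := by
      simpa using abs_max_sub_max_le_max (-R) (min R (v i)) (-R) (min R (w i))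
    _ ≤ |v i - w i| := by simpa using abs_min_sub_min_le_max R (v i) R (w i)
    _ ≤ ‖v - w‖ := norm_le_pi_norm (v - w) i

omit [Fintype ι] in
lemma continuous_clamp : Continuous fun p : ℝ × (ι → ℝ) => clamp p.1 p.2 := by
  unfold clamp
  fun_prop

namespace HasPolyGrowth

variable {F : (ι → ℝ) → ι → ℝ} {k : ℕ}

lemma norm_clamp_le (hF : HasPolyGrowth F k) (hR : 2 ≤ R) (v : ι → ℝ) :
    ‖F (clamp R v)‖ ≤ R ^ k :=
  hF.norm_le hR (_root_.norm_clamp_le (by linarith) v)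

lemma norm_clamp_sub_le (hF : HasPolyGrowth F k) (hR : 2 ≤ R) (v w : ι → ℝ) :
    ‖F (clamp R v) - F (clamp R w)‖ ≤ R ^ k * ‖v - w‖ :=
  (hF.norm_sub_le hR (_root_.norm_clamp_le (by linarith) v)
    (_root_.norm_clamp_le (by linarith) w)).trans
    (mul_le_mul_of_nonneg_left (norm_clamp_sub_clamp_le R v w) (by positivity))

end HasPolyGrowth

end Clamp

/-- A simulation `z` that runs the system of a computation `Z` over and over. In each cycle of
length three the signal `r` first resets `z` to the current input `u`, an approximation to `Z 0`,
and then `a` drives it along the field for a time of order `(X + t) ^ (2 * k)`. The field is clamped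
at radius `(X + t) ^ K`, and the exponent `P` governs all exponentially small errors. -/
structure IsRestartedRun {ι κ : Type*} [Fintype ι] [Fintype κ] (F : (ι → ℝ) → ι → ℝ) (o : κ → ι)
    (d k l K P : ℕ) (X : ℝ) (w : κ → ℝ) (a r : ℝ → ℝ) (u Z z : ℝ → ι → ℝ) : Prop where
  three_le : 3 ≤ X
  le_radius : 2 * ((4 * k + 7) * k + l + 3) ≤ K
  le_precision : K * d + K + 4 * k + 20 ≤ P
  hasPolyGrowth : HasPolyGrowth F d
  run : IsPulseTrain X (3 / 2) (2 * k) P a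
  reset : IsPulseTrain X (1 / 2) P P r
  target : IsPolyTimeRun F o k X w Z
  norm_input_le : ∀ t, 0 ≤ t → ‖u t‖ ≤ X ^ l
  norm_input_sub_le : ∀ t, 1 / 4 ≤ t → ‖u t - Z 0‖ ≤ Real.exp (-(X + t + 3) ^ P)
  init : z 0 = 0
  hasDerivWithinAt : ∀ t, 0 ≤ t → HasDerivWithinAt z
    (a t • F (clamp ((X + t) ^ K) (z t)) - r t • (z t - u t)) (Ici 0) t

namespace IsRestartedRun

variable {ι κ : Type*} [Fintype ι] [Fintype κ] {F : (ι → ℝ) → ι → ℝ} {o : κ → ι}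
  {d k l K P j : ℕ} {X t : ℝ} {w : κ → ℝ} {a r : ℝ → ℝ} {u Z z : ℝ → ι → ℝ}

/-- An upper bound for `X + t` during the `j`-th cycle, in terms of which all estimates for this
cycle are stated. -/
def scale (X : ℝ) (j : ℕ) : ℝ := X + 3 * j + 3

lemma add_le_scale (ht : t ≤ 3 * j + 3) : X + t ≤ scale X j := by
  unfold scale; linarith

lemma scale_le_add_three (ht : 3 * j ≤ t) : scale X j ≤ X + t + 3 := by
  unfold scale; linarith

section

variable (h : IsRestartedRun F o d k l K P X w a r u Z z)
include h

lemma six_le_scale (j : ℕ) : 6 ≤ scale X j := by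
  have := h.three_le
  unfold scale
  linarith [(Nat.cast_nonneg j : (0 : ℝ) ≤ j)]

lemma pow_le_scale_pow (hj : 3 * j ≤ t) (ht : t ≤ 3 * j + 3) {m n : ℕ} (hmn : m ≤ n) :
    (X + t) ^ m ≤ scale X j ^ n := by
  have := h.three_le
  exact (pow_le_pow_left₀ (by linarith) (add_le_scale ht) m).trans
    (pow_le_pow_right₀ (by linarith [h.six_le_scale j]) hmn)

lemma scale_pow_le_pow (hj : 3 * j ≤ t) {m n : ℕ} (hmn : 2 * m ≤ n) :
    scale X j ^ m ≤ (X + t) ^ n := by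
  have := h.three_le
  calc scale X j ^ m ≤ (X + t + 3) ^ m :=
        pow_le_pow_left₀ (by linarith [h.six_le_scale j]) (scale_le_add_three hj) m
    _ ≤ (X + t) ^ (2 * m) := add_three_pow_le_pow (by linarith) m
    _ ≤ (X + t) ^ n := pow_le_pow_right₀ (by linarith) hmn

lemma base_pow_le_scale_pow {m n : ℕ} (hmn : m ≤ n) : X ^ m ≤ scale X j ^ n := by
  have := h.three_le
  have hXs : X ≤ scale X j := by unfold scale; linarith [(Nat.cast_nonneg j : (0 : ℝ) ≤ j)]
  exact (pow_le_pow_left₀ (by linarith) hXs m).trans (pow_le_pow_right₀ (by linarith) hmn)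

lemma exp_neg_pow_le (hj : 3 * j ≤ t) :
    Real.exp (-(X + t + 3) ^ P) ≤ Real.exp (-scale X j ^ P) := by
  gcongr
  · linarith [h.six_le_scale j]
  · exact scale_le_add_three hj

lemma two_le_radius (ht : 0 ≤ t) : 2 ≤ (X + t) ^ K := by
  have := h.three_le
  have hK := h.le_radius
  calc (2 : ℝ) ≤ (X + t) ^ 1 := by linarith
    _ ≤ (X + t) ^ K := pow_le_pow_right₀ (by linarith) (by omega)

lemma norm_field_le (hj : 3 * j ≤ t) (ht : t ≤ 3 * j + 3) (v : ι → ℝ) :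
    ‖F (clamp ((X + t) ^ K) v)‖ ≤ scale X j ^ (K * d) := by
  refine (h.hasPolyGrowth.norm_clamp_le (h.two_le_radius (by linarith)) v).trans ?_
  rw [← pow_mul]
  exact h.pow_le_scale_pow hj ht le_rfl

lemma norm_field_sub_le (hj : 3 * j ≤ t) (ht : t ≤ 3 * j + 3) (v v' : ι → ℝ) :
    ‖F (clamp ((X + t) ^ K) v) - F (clamp ((X + t) ^ K) v')‖ ≤
      scale X j ^ (K * d) * ‖v - v'‖ := by
  refine (h.hasPolyGrowth.norm_clamp_sub_le (h.two_le_radius (by linarith)) v v').trans ?_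
  rw [← pow_mul]
  exact mul_le_mul_of_nonneg_right (h.pow_le_scale_pow hj ht le_rfl) (norm_nonneg _)

lemma scale_pow_le_scale_pow {m n : ℕ} (hmn : m ≤ n) : scale X j ^ m ≤ scale X j ^ n :=
  pow_le_pow_right₀ (by linarith [h.six_le_scale j]) hmn

lemma exp_neg_scale_pow_mul_le {m n : ℕ} (hm : m < P) (hn : n < P) :
    Real.exp (-scale X j ^ P) * scale X j ^ m ≤ Real.exp (-scale X j ^ n) := by
  rw [mul_comm]
  exact pow_mul_exp_neg_pow_le (by linarith [h.six_le_scale j]) hm hn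

lemma scale_pow_add_le {m m' n : ℕ} (hm : m < n) (hm' : m' < n) :
    scale X j ^ m + scale X j ^ m' ≤ scale X j ^ n :=
  pow_add_pow_le_pow (by linarith [h.six_le_scale j]) hm hm'

lemma hasDerivWithinAt_sub_const (c : ι → ℝ) {t₀ : ℝ} (ht₀ : 0 ≤ t₀) (ht : t₀ ≤ t) :
    HasDerivWithinAt (fun t => z t - c)
      (a t • F (clamp ((X + t) ^ K) (z t)) + r t • (u t - c) - r t • (z t - c)) (Ici t₀) t :=
  (((h.hasDerivWithinAt t (ht₀.trans ht)).mono (Ici_subset_Ici.2 ht₀)).sub_const c).congr_deriv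
    (by simp only [smul_sub]; abel)

lemma norm_forcing_le (ht : t ∈ Icc (3 * j : ℝ) (3 * j + 1)) :
    ‖a t • F (clamp ((X + t) ^ K) (z t)) + r t • u t‖ ≤ X ^ l * r t + 1 := by
  have ht₀ : 0 ≤ t := le_trans (by positivity) ht.1
  have ha₀ := h.run.nonneg t ht₀
  have haF : a t * ‖F (clamp ((X + t) ^ K) (z t))‖ ≤ 1 := calc
    a t * ‖F (clamp ((X + t) ^ K) (z t))‖ ≤ a t * (X + t + 3) ^ P := by
      gcongr
      refine (h.norm_field_le ht.1 (by linarith [ht.2]) _).trans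
        ((h.scale_pow_le_scale_pow (n := P) (by have := h.le_precision; omega)).trans ?_)
      exact pow_le_pow_left₀ (by linarith [h.six_le_scale j]) (scale_le_add_three ht.1) P
    _ ≤ 1 := by
      rw [mul_comm]
      refine h.run.pow_mul_le_of_off (j - 1 : ℤ) t ht₀ ?_
      push_cast
      constructor <;> linarith [ht.1, ht.2]
  refine (norm_add_le _ _).trans ?_
  rw [norm_smul, norm_smul, Real.norm_of_nonneg ha₀, Real.norm_of_nonneg (h.reset.nonneg t ht₀),
    add_comm, mul_comm (r t)]
  exact add_le_add (mul_le_mul_of_nonneg_right (h.norm_input_le t ht₀) (h.reset.nonneg t ht₀)) haF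

lemma norm_le_of_reset (hz : ‖z (3 * j)‖ ≤ scale X j ^ ((4 * k + 7) * k + 1))
    (ht : t ∈ Icc (3 * j : ℝ) (3 * j + 1)) : ‖z t‖ ≤ scale X j ^ ((4 * k + 7) * k + l + 3) := by
  have hj₀ : (0 : ℝ) ≤ 3 * j := by positivity
  have h3 := h.three_le
  have hr₀ (s : ℝ) (hs : s ∈ Icc (3 * j : ℝ) t) : 0 ≤ r s := h.reset.nonneg s (hj₀.trans hs.1)
  have hrelax := norm_le_of_hasDerivWithinAt_sub_smul (ε := X ^ l) h.reset.continuous hr₀ ht.1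
    (by positivity) zero_le_one (fun s hs => h.hasDerivWithinAt_sub_const 0 hj₀ hs.1)
    (fun s hs => by simpa using h.norm_forcing_le ⟨hs.1, hs.2.trans ht.2⟩)
  simp only [sub_zero] at hrelax
  calc ‖z t‖ ≤ Real.exp (-∫ s in (3 * j : ℝ)..t, r s) * ‖z (3 * j)‖ + X ^ l + 1 * (t - 3 * j) :=
        hrelax
    _ ≤ 1 * scale X j ^ ((4 * k + 7) * k + 1) + scale X j ^ (l + 1) + 1 := by
        gcongr
        · exact Real.exp_le_one_iff.2 (neg_nonpos.2 (intervalIntegral.integral_nonneg ht.1 hr₀))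
        · exact h.base_pow_le_scale_pow (Nat.le_succ l)
        · linarith [ht.2]
    _ ≤ scale X j ^ ((4 * k + 7) * k + l + 2) + scale X j ^ 0 := by
        rw [one_mul, pow_zero]
        gcongr
        exact h.scale_pow_add_le (by omega) (by omega)
    _ ≤ scale X j ^ ((4 * k + 7) * k + l + 3) := h.scale_pow_add_le (by omega) (by omega)

lemma norm_forcing_sub_le (ht : t ∈ Icc (3 * j + 1 / 4 : ℝ) (3 * j + 1)) :
    ‖a t • F (clamp ((X + t) ^ K) (z t)) + r t • (u t - Z 0)‖ ≤
      Real.exp (-scale X j ^ P) * r t + Real.exp (-scale X j ^ P) * scale X j ^ (K * d) := by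
  have ht₁ : 1 / 4 ≤ t := by linarith [ht.1]
  have hjt : 3 * j ≤ t := by linarith [ht.1]
  have hr₀ := h.reset.nonneg t (by linarith)
  have ha : a t ≤ Real.exp (-scale X j ^ P) := by
    refine (h.run.le_exp_of_off (j - 1 : ℤ) t ht₁ ?_).trans (h.exp_neg_pow_le hjt)
    push_cast
    constructor <;> linarith [ht.1, ht.2]
  refine (norm_add_le _ _).trans ?_
  rw [norm_smul, norm_smul, Real.norm_of_nonneg (h.run.nonneg t (by linarith)),
    Real.norm_of_nonneg hr₀, add_comm, mul_comm (r t)]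
  gcongr
  · exact (h.norm_input_sub_le t ht₁).trans (h.exp_neg_pow_le hjt)
  · exact h.norm_field_le hjt (by linarith [ht.2]) _

lemma norm_sub_le_of_reset (hz : ‖z (3 * j)‖ ≤ scale X j ^ ((4 * k + 7) * k + 1)) :
    ‖z (3 * j + 1) - Z 0‖ ≤ Real.exp (-scale X j ^ (K * d + 4 * k + 9)) := by
  have h3 := h.three_le
  have hP := h.le_precision
  have hK := h.le_radius
  have hk : k ≤ (4 * k + 7) * k := Nat.le_mul_of_pos_left k (by omega)
  have hM : 0 ≤ scale X j := by linarith [h.six_le_scale j]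
  set E := Real.exp (-scale X j ^ P) with hE
  have hE₀ : 0 ≤ E := (Real.exp_pos _).le
  have hint : scale X j ^ P ≤ ∫ s in (3 * j + 1 / 4 : ℝ)..(3 * j + 1), r s := by
    refine h.reset.le_integral (j := j) (τ := 3 * j) ?_ ?_ ?_ ?_ ?_ ?_ <;> push_cast <;> linarith
  have hstart : ‖z (3 * j + 1 / 4) - Z 0‖ ≤ scale X j ^ ((4 * k + 7) * k + l + 4) := by
    refine (norm_sub_le_of_le (h.norm_le_of_reset hz ⟨by linarith, by linarith⟩)
      (h.target.norm_le 0 le_rfl)).trans ?_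
    rw [add_zero]
    exact (add_le_add le_rfl (h.base_pow_le_scale_pow hk)).trans
      (h.scale_pow_add_le (by omega) (by omega))
  calc ‖z (3 * j + 1) - Z 0‖
      ≤ Real.exp (-∫ s in (3 * j + 1 / 4 : ℝ)..(3 * j + 1), r s) * ‖z (3 * j + 1 / 4) - Z 0‖ + E +
          E * scale X j ^ (K * d) * (3 * j + 1 - (3 * j + 1 / 4)) :=
        norm_le_of_hasDerivWithinAt_sub_smul h.reset.continuous
          (fun s hs => h.reset.nonneg s (by linarith [hs.1])) (by linarith) hE₀ (by positivity)
          (fun s hs => h.hasDerivWithinAt_sub_const (Z 0) (by positivity) hs.1)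
          (fun s hs => h.norm_forcing_sub_le hs)
    _ ≤ E * scale X j ^ ((4 * k + 7) * k + l + 4) + E + E * scale X j ^ (K * d) * 1 := by
        rw [hE]
        gcongr
        linarith
    _ = E * (scale X j ^ ((4 * k + 7) * k + l + 4) + scale X j ^ 0 + scale X j ^ (K * d)) := by
        ring
    _ ≤ E * scale X j ^ (K * d + K + 6) := by
        gcongr
        refine (add_le_add_left (h.scale_pow_add_le (n := K * d + K + 5) ?_ ?_) _).trans
          (h.scale_pow_add_le ?_ ?_) <;> omega
    _ ≤ Real.exp (-scale X j ^ (K * d + 4 * k + 9)) :=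
        h.exp_neg_scale_pow_mul_le (by omega) (by omega)

lemma run_le (hj : 3 * j ≤ t) (ht : t ≤ 3 * j + 3) : a t ≤ scale X j ^ (4 * k + 5) :=
  (h.run.le_pow t (le_trans (by positivity) hj)).trans (h.pow_le_scale_pow hj ht (by omega))

lemma reset_le_exp (ht : t ∈ Icc (3 * j + 1 : ℝ) (3 * j + 3)) :
    r t ≤ Real.exp (-scale X j ^ P) := by
  refine (h.reset.le_exp_of_off j t (by linarith [ht.1]) ?_).trans
    (h.exp_neg_pow_le (by linarith [ht.1]))
  push_cast
  constructor <;> linarith [ht.1, ht.2]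

lemma integral_run_mem (ht : t ∈ Icc (3 * j + 1 : ℝ) (3 * j + 3)) :
    ∫ s in (3 * j + 1 : ℝ)..t, a s ∈ Icc 0 (scale X j ^ (4 * k + 6)) := by
  have hM := h.six_le_scale j
  refine ⟨intervalIntegral.integral_nonneg ht.1 fun s hs =>
    h.run.nonneg s (by linarith [hs.1]), ?_⟩
  calc ∫ s in (3 * j + 1 : ℝ)..t, a s ≤ ∫ _ in (3 * j + 1 : ℝ)..t, scale X j ^ (4 * k + 5) :=
        intervalIntegral.integral_mono_on ht.1 (h.run.continuous.intervalIntegrable _ _) (by simp)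
          fun s hs => h.run_le (by linarith [hs.1]) (by linarith [hs.2, ht.2])
    _ = (t - (3 * j + 1)) * scale X j ^ (4 * k + 5) := by simp
    _ ≤ scale X j * scale X j ^ (4 * k + 5) := by
        gcongr
        linarith [ht.2]
    _ = scale X j ^ (4 * k + 6) := by ring

lemma norm_target_le (ht : t ∈ Icc (3 * j + 1 : ℝ) (3 * j + 3)) :
    ‖Z (∫ s in (3 * j + 1 : ℝ)..t, a s)‖ ≤ scale X j ^ ((4 * k + 7) * k) := by
  have h3 := h.three_le
  obtain ⟨h₀, hle⟩ := h.integral_run_mem ht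
  refine (h.target.norm_le _ h₀).trans ?_
  rw [pow_mul]
  gcongr
  calc X + ∫ s in (3 * j + 1 : ℝ)..t, a s ≤ scale X j ^ 1 + scale X j ^ (4 * k + 6) :=
        add_le_add (by simpa using h.base_pow_le_scale_pow le_rfl (m := 1) (j := j)) hle
    _ ≤ scale X j ^ (4 * k + 7) := h.scale_pow_add_le (by omega) (by omega)

lemma clamp_target (ht : t ∈ Icc (3 * j + 1 : ℝ) (3 * j + 3)) :
    clamp ((X + t) ^ K) (Z (∫ s in (3 * j + 1 : ℝ)..t, a s)) =
      Z (∫ s in (3 * j + 1 : ℝ)..t, a s) :=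
  clamp_eq_self <| (h.norm_target_le ht).trans <|
    h.scale_pow_le_pow (by linarith [ht.1]) (by have := h.le_radius; omega)

lemma lipschitzWith_field (ht : t ∈ Icc (3 * j + 1 : ℝ) (3 * j + 3)) :
    LipschitzWith (Real.toNNReal (scale X j ^ (K * d + 4 * k + 6)))
      fun x => a t • F (clamp ((X + t) ^ K) x) - r t • (x - u t) := by
  have hM := h.six_le_scale j
  have hjt : 3 * j ≤ t := by linarith [ht.1]
  have ha₀ := h.run.nonneg t (by linarith)
  have hr₀ := h.reset.nonneg t (by linarith)
  refine .of_dist_le_mul fun x x' => ?_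
  rw [Real.coe_toNNReal _ (by positivity), dist_eq_norm, dist_eq_norm]
  calc ‖a t • F (clamp ((X + t) ^ K) x) - r t • (x - u t) -
        (a t • F (clamp ((X + t) ^ K) x') - r t • (x' - u t))‖
      = ‖a t • (F (clamp ((X + t) ^ K) x) - F (clamp ((X + t) ^ K) x')) - r t • (x - x')‖ := by
        congr 1
        simp only [smul_sub]
        abel
    _ ≤ a t * ‖F (clamp ((X + t) ^ K) x) - F (clamp ((X + t) ^ K) x')‖ + r t * ‖x - x'‖ := by
        refine (norm_sub_le _ _).trans_eq ?_
        rw [norm_smul, norm_smul, Real.norm_of_nonneg ha₀, Real.norm_of_nonneg hr₀]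
    _ ≤ scale X j ^ (4 * k + 5) * (scale X j ^ (K * d) * ‖x - x'‖) +
          scale X j ^ 0 * ‖x - x'‖ := by
        gcongr
        · exact h.run_le hjt ht.2
        · exact h.norm_field_sub_le hjt ht.2 x x'
        · rw [pow_zero]
          exact (h.reset_le_exp ht).trans (Real.exp_le_one_iff.2 (neg_nonpos.2 (by positivity)))
    _ = (scale X j ^ (4 * k + 5 + K * d) + scale X j ^ 0) * ‖x - x'‖ := by ring
    _ ≤ scale X j ^ (K * d + 4 * k + 6) * ‖x - x'‖ :=
        mul_le_mul_of_nonneg_right (h.scale_pow_add_le (by omega) (by omega)) (norm_nonneg _)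

lemma norm_reset_target_le (ht : t ∈ Icc (3 * j + 1 : ℝ) (3 * j + 3)) :
    ‖r t • (Z (∫ s in (3 * j + 1 : ℝ)..t, a s) - u t)‖ ≤
      Real.exp (-scale X j ^ (K * d + 4 * k + 9)) := by
  have hP := h.le_precision
  have hK := h.le_radius
  have ht₀ : 0 ≤ t := by linarith [ht.1]
  rw [norm_smul, Real.norm_of_nonneg (h.reset.nonneg t ht₀)]
  calc r t * ‖Z (∫ s in (3 * j + 1 : ℝ)..t, a s) - u t‖
      ≤ Real.exp (-scale X j ^ P) * (scale X j ^ ((4 * k + 7) * k) + scale X j ^ l) := by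
        gcongr
        · exact h.reset_le_exp ht
        · exact norm_sub_le_of_le (h.norm_target_le ht)
            ((h.norm_input_le t ht₀).trans (h.base_pow_le_scale_pow le_rfl))
    _ ≤ Real.exp (-scale X j ^ P) * scale X j ^ (K + 1) := by
        gcongr
        exact h.scale_pow_add_le (by omega) (by omega)
    _ ≤ Real.exp (-scale X j ^ (K * d + 4 * k + 9)) :=
        h.exp_neg_scale_pow_mul_le (by omega) (by omega)

lemma gronwallBound_le (ht : t ∈ Icc (3 * j + 1 : ℝ) (3 * j + 3)) :
    gronwallBound (Real.exp (-scale X j ^ (K * d + 4 * k + 9)))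
      (scale X j ^ (K * d + 4 * k + 6)) (Real.exp (-scale X j ^ (K * d + 4 * k + 9)))
      (t - (3 * j + 1)) ≤ Real.exp (-scale X j) := by
  have hM := h.six_le_scale j
  have hexp : scale X j ^ (K * d + 4 * k + 6) * (t - (3 * j + 1)) ≤
      scale X j ^ (K * d + 4 * k + 7) := by
    rw [pow_succ _ (K * d + 4 * k + 6)]
    gcongr
    linarith [ht.2]
  have hsum : scale X j ^ (K * d + 4 * k + 7) + (1 + scale X j) ≤
      scale X j ^ (K * d + 4 * k + 9) := by
    refine le_trans ?_ (h.scale_pow_add_le (m := K * d + 4 * k + 7) (m' := 2) (by omega) (by omega))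
    gcongr
    nlinarith
  calc _ ≤ (Real.exp (-scale X j ^ (K * d + 4 * k + 9)) +
          Real.exp (-scale X j ^ (K * d + 4 * k + 9))) *
            Real.exp (scale X j ^ (K * d + 4 * k + 6) * (t - (3 * j + 1))) :=
        gronwallBound_le_mul_exp (one_le_pow₀ (by linarith)) (Real.exp_pos _).le
          (by linarith [ht.1])
    _ ≤ (Real.exp 1 * Real.exp (-scale X j ^ (K * d + 4 * k + 9))) *
          Real.exp (scale X j ^ (K * d + 4 * k + 7)) := by
        gcongr
        rw [← two_mul]
        gcongr
        linarith [Real.add_one_le_exp 1]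
    _ = Real.exp (1 - scale X j ^ (K * d + 4 * k + 9) + scale X j ^ (K * d + 4 * k + 7)) := by
        rw [← Real.exp_add, ← Real.exp_add, sub_eq_add_neg]
    _ ≤ Real.exp (-scale X j) := Real.exp_le_exp.2 (by linarith)

lemma hasDerivWithinAt_target (ht : t ∈ Icc (3 * j + 1 : ℝ) (3 * j + 3)) :
    HasDerivWithinAt (fun t => Z (∫ s in (3 * j + 1 : ℝ)..t, a s))
      (a t • F (Z (∫ s in (3 * j + 1 : ℝ)..t, a s))) (Icc (3 * j + 1 : ℝ) (3 * j + 3)) t :=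
  (h.target.hasDerivWithinAt _ (h.integral_run_mem ht).1).scomp t
    (h.run.continuous.integral_hasStrictDerivAt _ t).hasDerivAt.hasDerivWithinAt
    fun _ hs => (h.integral_run_mem hs).1

lemma norm_sub_le_of_run (hz : ‖z (3 * j)‖ ≤ scale X j ^ ((4 * k + 7) * k + 1))
    (ht : t ∈ Icc (3 * j + 1 : ℝ) (3 * j + 3)) :
    ‖z t - Z (∫ s in (3 * j + 1 : ℝ)..t, a s)‖ ≤ Real.exp (-scale X j) := by
  have hM := h.six_le_scale j
  have hz' (s : ℝ) (hs : s ∈ Icc (3 * j + 1 : ℝ) (3 * j + 3)) :=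
    h.hasDerivWithinAt s (by linarith [hs.1])
  have hinit : dist (z (3 * j + 1)) (Z (∫ s in (3 * j + 1 : ℝ)..(3 * j + 1), a s)) ≤
      Real.exp (-scale X j ^ (K * d + 4 * k + 9)) := by
    rw [intervalIntegral.integral_same, dist_eq_norm]
    exact h.norm_sub_le_of_reset hz
  have hclose := dist_le_of_approx_trajectories_ODE_of_mem (s := fun _ => univ) (εf := 0)
    (εg := Real.exp (-scale X j ^ (K * d + 4 * k + 9)))
    (fun s hs => (h.lipschitzWith_field (Ico_subset_Icc_self hs)).lipschitzOnWith)
    (fun s hs => ((hz' s hs).continuousWithinAt).mono fun _ hs => mem_Ici.2 (by linarith [hs.1]))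
    (fun s hs => (hz' s (Ico_subset_Icc_self hs)).mono (Ici_subset_Ici.2 (by linarith [hs.1])))
    (fun s _ => (dist_self _).le) (fun _ _ => mem_univ _)
    (fun s hs => (h.hasDerivWithinAt_target hs).continuousWithinAt)
    (fun s hs => (h.hasDerivWithinAt_target (Ico_subset_Icc_self hs)).mono_of_mem_nhdsWithin
      (Icc_mem_nhdsGE_of_mem hs))
    (fun s hs => by
      rw [h.clamp_target (Ico_subset_Icc_self hs), dist_eq_norm, sub_sub_cancel]
      exact h.norm_reset_target_le (Ico_subset_Icc_self hs))
    (fun _ _ => mem_univ _) hinit t ht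
  rw [zero_add, Real.coe_toNNReal _ (by positivity), dist_eq_norm] at hclose
  exact hclose.trans (h.gronwallBound_le ht)

lemma norm_le_of_run (hz : ‖z (3 * j)‖ ≤ scale X j ^ ((4 * k + 7) * k + 1))
    (ht : t ∈ Icc (3 * j + 1 : ℝ) (3 * j + 3)) : ‖z t‖ ≤ scale X j ^ ((4 * k + 7) * k + 1) := by
  have hM := h.six_le_scale j
  calc ‖z t‖ ≤ ‖Z (∫ s in (3 * j + 1 : ℝ)..t, a s)‖ +
        ‖z t - Z (∫ s in (3 * j + 1 : ℝ)..t, a s)‖ := norm_le_norm_add_norm_sub' _ _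
    _ ≤ scale X j ^ ((4 * k + 7) * k) + 1 := add_le_add (h.norm_target_le ht)
        ((h.norm_sub_le_of_run hz ht).trans (Real.exp_le_one_iff.2 (by linarith)))
    _ ≤ scale X j ^ ((4 * k + 7) * k + 1) := by
        have := one_le_pow₀ (by linarith : 1 ≤ scale X j) (n := (4 * k + 7) * k)
        rw [pow_succ]
        nlinarith

lemma norm_start_le (j : ℕ) : ‖z (3 * j)‖ ≤ scale X j ^ ((4 * k + 7) * k + 1) := by
  induction j with
  | zero =>
    simp only [Nat.cast_zero, mul_zero, h.init, norm_zero]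
    exact pow_nonneg (by linarith [h.six_le_scale 0]) _
  | succ j ih =>
    have hle : scale X j ≤ scale X (j + 1) := by
      unfold scale
      push_cast
      linarith
    rw [show (3 * (j + 1 : ℕ) : ℝ) = 3 * j + 3 by push_cast; ring]
    exact (h.norm_le_of_run ih ⟨by linarith, le_rfl⟩).trans
      (pow_le_pow_left₀ (by linarith [h.six_le_scale j]) hle _)

lemma norm_le (ht : 0 ≤ t) : ‖z t‖ ≤ (X + t) ^ K := by
  set j := ⌊t / 3⌋₊
  have hjt : 3 * j ≤ t := by linarith [Nat.floor_le (show 0 ≤ t / 3 by positivity)]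
  have htj : t ≤ 3 * j + 3 := by linarith [Nat.lt_floor_add_one (t / 3)]
  have hz : ‖z t‖ ≤ scale X j ^ ((4 * k + 7) * k + l + 3) := by
    rcases le_total t (3 * j + 1) with h₁ | h₁
    · exact h.norm_le_of_reset (h.norm_start_le j) ⟨hjt, h₁⟩
    · exact (h.norm_le_of_run (h.norm_start_le j) ⟨h₁, htj⟩).trans
        (h.scale_pow_le_scale_pow (by omega))
  exact hz.trans (h.scale_pow_le_pow hjt h.le_radius)

lemma hasDerivWithinAt_self (ht : 0 ≤ t) :
    HasDerivWithinAt z (a t • F (z t) - r t • (z t - u t)) (Ici 0) t := by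
  simpa only [clamp_eq_self (h.norm_le ht)] using h.hasDerivWithinAt t ht

lemma norm_output_sub_le (ht : t ∈ Icc (3 * j + 2 : ℝ) (3 * j + 3)) :
    ‖z t ∘ o - w‖ ≤ 2 * Real.exp (-scale X j) := by
  have h3 := h.three_le
  have hM := h.six_le_scale j
  have ht' : t ∈ Icc (3 * j + 1 : ℝ) (3 * j + 3) := ⟨by linarith [ht.1], ht.2⟩
  set s := ∫ s in (3 * j + 1 : ℝ)..t, a s
  have hs : (X + scale X j) ^ k ≤ s := calc
    (X + scale X j) ^ k ≤ (scale X j ^ 2) ^ k := by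
      gcongr
      have : X ≤ scale X j := by unfold scale; linarith
      nlinarith
    _ = (X + 3 * j + 3) ^ (2 * k) := (pow_mul _ _ _).symm
    _ ≤ s := by
      refine h.run.le_integral (j := j) (τ := 3 * j) ?_ ?_ ?_ ?_ ?_ ?_ <;> push_cast <;>
        linarith [ht.1]
  calc ‖z t ∘ o - w‖ ≤ ‖z t ∘ o - Z s ∘ o‖ + ‖Z s ∘ o - w‖ :=
        norm_sub_le_norm_sub_add_norm_sub _ _ _
    _ ≤ ‖z t - Z s‖ + Real.exp (-scale X j) := add_le_add (norm_comp_le (z t - Z s) o)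
        (h.target.norm_output_sub_le s _ (by linarith) hs)
    _ ≤ 2 * Real.exp (-scale X j) := by
        linarith [h.norm_sub_le_of_run (h.norm_start_le j) ht']

end

end IsRestartedRun

/-- A signal `ξ` that samples `ζ` at the end of each cycle and holds the value until the end of the
next cycle, thus tracking a vector `v` to which `ζ` is only close in the last third of each
cycle. -/
structure IsSampleHold {κ : Type*} [Fintype κ] (K P : ℕ) (X : ℝ) (v : κ → ℝ) (c : ℝ → ℝ)
    (ζ ξ : ℝ → κ → ℝ) : Prop where
  three_le : 3 ≤ X
  lt_precision : K + 1 < P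
  sample : IsPulseTrain X (5 / 2) P P c
  norm_value_le : ‖v‖ ≤ X ^ K
  norm_input_le : ∀ t, 0 ≤ t → ‖ζ t‖ ≤ (X + t) ^ K
  norm_input_sub_le : ∀ (j : ℕ) t, t ∈ Icc (3 * j + 2 : ℝ) (3 * j + 3) →
    ‖ζ t - v‖ ≤ 2 * Real.exp (-(X + 3 * j + 3))
  init : ξ 0 = 0
  hasDerivWithinAt : ∀ t, 0 ≤ t → HasDerivWithinAt ξ (c t • (ζ t - ξ t)) (Ici 0) t

namespace IsSampleHold

variable {κ : Type*} [Fintype κ] {K P j : ℕ} {X t : ℝ} {v : κ → ℝ} {c : ℝ → ℝ}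
  {ζ ξ : ℝ → κ → ℝ} (h : IsSampleHold K P X v c ζ ξ)
include h

lemma hasDerivWithinAt_sub_const (v : κ → ℝ) {t₀ : ℝ} (ht₀ : 0 ≤ t₀) (ht : t₀ ≤ t) :
    HasDerivWithinAt (fun t => ξ t - v) (c t • (ζ t - v) - c t • (ξ t - v)) (Ici t₀) t :=
  (((h.hasDerivWithinAt t (ht₀.trans ht)).mono (Ici_subset_Ici.2 ht₀)).sub_const v).congr_deriv
    (by simp only [smul_sub]; abel)

lemma norm_le (ht : 0 ≤ t) : ‖ξ t‖ ≤ (X + t) ^ K := by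
  have h3 := h.three_le
  have hforce (s : ℝ) (hs : s ∈ Icc 0 t) : ‖c s • (ζ s - 0)‖ ≤ (X + t) ^ K * c s + 0 := by
    have hc₀ := h.sample.nonneg s hs.1
    rw [sub_zero, norm_smul, Real.norm_of_nonneg hc₀, mul_comm, add_zero]
    exact mul_le_mul_of_nonneg_right ((h.norm_input_le s hs.1).trans
      (pow_le_pow_left₀ (by linarith [hs.1]) (by linarith [hs.2]) K)) hc₀
  simpa [h.init] using norm_le_of_hasDerivWithinAt_sub_smul h.sample.continuous
    (fun s hs => h.sample.nonneg s hs.1) ht (by positivity) le_rfl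
    (fun s hs => h.hasDerivWithinAt_sub_const 0 le_rfl hs.1) hforce

lemma pow_mul_exp_neg_pow_le {M : ℝ} (hM : 2 ≤ M) :
    M ^ (K + 1) * Real.exp (-M ^ P) ≤ Real.exp (-M) := by
  have hP := h.lt_precision
  simpa only [pow_one] using
    _root_.pow_mul_exp_neg_pow_le hM hP (show 1 < P by omega)

lemma norm_forcing_le_of_off (ht₁ : 1 / 4 ≤ t) (ht : t ∈ Icc (3 * j : ℝ) (3 * j + 2)) :
    ‖c t • (ζ t - v)‖ ≤ Real.exp (-(X + t + 3)) := by
  have h3 := h.three_le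
  rw [norm_smul, Real.norm_of_nonneg (h.sample.nonneg t (by linarith))]
  calc c t * ‖ζ t - v‖ ≤ Real.exp (-(X + t + 3) ^ P) * ((X + t + 3) ^ K + (X + t + 3) ^ K) := by
        gcongr
        · refine h.sample.le_exp_of_off (j - 1 : ℤ) t ht₁ ?_
          push_cast
          constructor <;> linarith [ht.1, ht.2]
        · exact norm_sub_le_of_le ((h.norm_input_le t (by linarith)).trans
            (pow_le_pow_left₀ (by linarith) (by linarith) K))
            (h.norm_value_le.trans (pow_le_pow_left₀ (by linarith) (by linarith) K))
    _ ≤ (X + t + 3) ^ (K + 1) * Real.exp (-(X + t + 3) ^ P) := by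
        rw [mul_comm]
        gcongr
        exact pow_add_pow_le_pow (by linarith) K.lt_succ_self K.lt_succ_self
    _ ≤ Real.exp (-(X + t + 3)) := h.pow_mul_exp_neg_pow_le (by linarith)

lemma norm_forcing_le_of_on (ht : t ∈ Icc (3 * j + 2 : ℝ) (3 * j + 3)) :
    ‖c t • (ζ t - v)‖ ≤ 2 * Real.exp (-(X + 3 * j + 3)) * c t := by
  have hc₀ := h.sample.nonneg t (le_trans (by positivity) ht.1)
  rw [norm_smul, Real.norm_of_nonneg hc₀, mul_comm]
  exact mul_le_mul_of_nonneg_right (h.norm_input_sub_le j t ht) hc₀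

lemma norm_forcing_le (ht : t ∈ Icc (3 * j + 2 : ℝ) (3 * j + 6)) :
    ‖c t • (ζ t - v)‖ ≤ 2 * Real.exp (-(X + 3 * j + 3)) * c t + Real.exp (-(X + 3 * j + 3)) := by
  have hc₀ := h.sample.nonneg t (le_trans (by positivity) ht.1)
  have hcast : (3 * (j + 1 : ℕ) : ℝ) = 3 * j + 3 := by push_cast; ring
  rcases le_total t (3 * j + 3) with h₁ | h₁
  · linarith [h.norm_forcing_le_of_on ⟨ht.1, h₁⟩, Real.exp_pos (-(X + 3 * j + 3))]
  rcases le_total t (3 * j + 5) with h₂ | h₂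
  · refine (h.norm_forcing_le_of_off (j := j + 1) (by linarith)
      ⟨by linarith, by linarith⟩).trans ?_
    refine le_add_of_nonneg_of_le (by positivity) (Real.exp_le_exp.2 (by linarith))
  · refine (h.norm_forcing_le_of_on (j := j + 1) ⟨by linarith, by linarith [ht.2]⟩).trans ?_
    refine le_add_of_le_of_nonneg ?_ (Real.exp_pos _).le
    gcongr
    omega

lemma norm_sub_le (ht : t ∈ Icc (3 * j + 3 : ℝ) (3 * j + 6)) :
    ‖ξ t - v‖ ≤ 7 * Real.exp (-(X + 3 * j + 3)) := by
  have h3 := h.three_le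
  set M := X + 3 * j + 3
  have hint : M ^ P ≤ ∫ s in (3 * j + 2 : ℝ)..t, c s := by
    refine h.sample.le_integral (j := j) (τ := 3 * j) ?_ ?_ ?_ ?_ ?_ ?_ <;> push_cast <;>
      linarith [ht.1]
  have hstart : ‖ξ (3 * j + 2) - v‖ ≤ M ^ (K + 1) :=
    (norm_sub_le_of_le ((h.norm_le (by positivity)).trans
      (pow_le_pow_left₀ (by linarith) (by simp only [M]; linarith) K)) (h.norm_value_le.trans
      (pow_le_pow_left₀ (by linarith) (by simp only [M]; linarith) K))).trans
      (pow_add_pow_le_pow (by simp only [M]; linarith) K.lt_succ_self K.lt_succ_self)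
  calc ‖ξ t - v‖ ≤ Real.exp (-∫ s in (3 * j + 2 : ℝ)..t, c s) * ‖ξ (3 * j + 2) - v‖ +
          2 * Real.exp (-M) + Real.exp (-M) * (t - (3 * j + 2)) :=
        norm_le_of_hasDerivWithinAt_sub_smul h.sample.continuous
          (fun s hs => h.sample.nonneg s (by linarith [hs.1])) (by linarith [ht.1])
          (by positivity) (Real.exp_pos _).le
          (fun s hs => h.hasDerivWithinAt_sub_const v (by positivity) hs.1)
          fun s hs => h.norm_forcing_le ⟨hs.1, hs.2.trans ht.2⟩
    _ ≤ M ^ (K + 1) * Real.exp (-M ^ P) + 2 * Real.exp (-M) + Real.exp (-M) * 4 := by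
        rw [mul_comm (M ^ _)]
        gcongr
        linarith [ht.2]
    _ ≤ 7 * Real.exp (-M) := by
        linarith [h.pow_mul_exp_neg_pow_le (M := M) (by simp only [M]; linarith)]

lemma norm_sub_le_exp (ht : 3 ≤ t) : ‖ξ t - v‖ ≤ Real.exp (2 - t) := by
  set j := ⌊(t - 3) / 3⌋₊
  have hjt : 3 * j + 3 ≤ t := by
    linarith [Nat.floor_le (show 0 ≤ (t - 3) / 3 by linarith)]
  have htj : t ≤ 3 * j + 6 := by linarith [Nat.lt_floor_add_one ((t - 3) / 3)]
  calc ‖ξ t - v‖ ≤ 7 * Real.exp (-(X + 3 * j + 3)) := h.norm_sub_le ⟨hjt, htj⟩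
    _ ≤ Real.exp 1 ^ 2 * Real.exp (-t) := by
        gcongr
        · nlinarith [Real.exp_one_gt_d9]
        · linarith [h.three_le, (Nat.cast_nonneg j : (0 : ℝ) ≤ j)]
    _ = Real.exp (2 - t) := by
        rw [← Real.exp_nat_mul, ← Real.exp_add]
        ring_nf

end IsSampleHold

namespace IsPolyTimeRun

variable {ι κ : Type*} [Fintype ι] [Fintype κ] {F : (ι → ℝ) → ι → ℝ} {o : κ → ι} {k : ℕ} {B t : ℝ}
  {w : κ → ℝ} {y : ℝ → ι → ℝ}

lemma of_le_pow (h : IsPolyTimeRun F o k B w y) (hB : 0 ≤ B) {c : ℕ} {B' : ℝ}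
    (hle : ∀ t, 0 ≤ t → B + t ≤ (B' + t) ^ c) : IsPolyTimeRun F o (c * k) B' w y where
  hasDerivWithinAt := h.hasDerivWithinAt
  norm_le t ht := by
    rw [pow_mul]
    exact (h.norm_le t ht).trans (pow_le_pow_left₀ (by positivity) (hle t ht) k)
  norm_output_sub_le t μ hμ ht := by
    rw [pow_mul] at ht
    exact h.norm_output_sub_le t μ hμ
      ((pow_le_pow_left₀ (by positivity) (hle μ hμ) k).trans ht)

lemma norm_output_sub_le_one (h : IsPolyTimeRun F o k B w y) (ht : B ^ k ≤ t) :
    ‖y t ∘ o - w‖ ≤ 1 := by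
  simpa using h.norm_output_sub_le t 0 le_rfl (by simpa using ht)

variable (h : IsPolyTimeRun F o k B w y) (hB : 2 ≤ B)
include h hB

lemma norm_output_le_of_le (ht₀ : 0 ≤ t) (ht : t ≤ B ^ k) : ‖y t ∘ o‖ ≤ B ^ ((k + 2) * k) := calc
  ‖y t ∘ o‖ ≤ (B + t) ^ k := (norm_comp_le _ _).trans (h.norm_le t ht₀)
  _ ≤ (B ^ 1 + B ^ k) ^ k := by
    rw [pow_one]
    gcongr
  _ ≤ (B ^ (k + 2)) ^ k := by
    gcongr
    exact pow_add_pow_le_pow hB (by omega) (by omega)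
  _ = B ^ ((k + 2) * k) := (pow_mul _ _ _).symm

lemma norm_value_le : ‖w‖ ≤ B ^ ((k + 2) * k + 1) := calc
  ‖w‖ ≤ ‖y (B ^ k) ∘ o‖ + ‖y (B ^ k) ∘ o - w‖ := norm_le_norm_add_norm_sub _ _
  _ ≤ B ^ ((k + 2) * k) + 1 := add_le_add (h.norm_output_le_of_le hB (by positivity) le_rfl)
    (h.norm_output_sub_le_one le_rfl)
  _ ≤ B ^ ((k + 2) * k + 1) := by
    have := one_le_pow₀ (by linarith : 1 ≤ B) (n := (k + 2) * k)
    rw [pow_succ]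
    nlinarith

lemma norm_output_le (ht : 0 ≤ t) : ‖y t ∘ o‖ ≤ B ^ ((k + 2) * k + 2) := by
  rcases le_total t (B ^ k) with h₁ | h₁
  · exact (h.norm_output_le_of_le hB ht h₁).trans
      (pow_le_pow_right₀ (by linarith) (Nat.le_add_right _ _))
  · calc ‖y t ∘ o‖ ≤ ‖w‖ + ‖y t ∘ o - w‖ := norm_le_norm_add_norm_sub' _ _
      _ ≤ B ^ ((k + 2) * k + 1) + B ^ 0 := by
        simpa using add_le_add (h.norm_value_le hB) (h.norm_output_sub_le_one h₁)
      _ ≤ B ^ ((k + 2) * k + 2) := pow_add_pow_le_pow hB (by omega) (by omega)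

end IsPolyTimeRun

/-- The accelerated time `t * (X + t) ^ e`, in which a computation reaches in a bounded time a
precision beyond `exp (-(X + t) ^ n)`. -/
def fastTime (e : ℕ) (X t : ℝ) : ℝ := t * (X + t) ^ e

section FastTime

variable {e n : ℕ} {X t : ℝ}

lemma fastTime_nonneg (hX : 0 ≤ X) (ht : 0 ≤ t) : 0 ≤ fastTime e X t := by
  unfold fastTime
  positivity

lemma add_fastTime_le (hX : 3 ≤ X) (ht : 0 ≤ t) : X + fastTime e X t ≤ (X + t) ^ (e + 2) := calc
  X + t * (X + t) ^ e ≤ (X + t) ^ 1 + (X + t) * (X + t) ^ e := by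
    gcongr <;> linarith
  _ = (X + t) ^ 1 + (X + t) ^ (e + 1) := by ring
  _ ≤ (X + t) ^ (e + 2) := pow_add_pow_le_pow (by linarith) (by omega) (by omega)

lemma pow_le_fastTime (hX : 3 ≤ X) (ht : 1 / 4 ≤ t) (he : n + 2 ≤ e) :
    (X + t) ^ n ≤ fastTime e X t := calc
  (X + t) ^ n ≤ (t * (X + t) ^ 2) * (X + t) ^ n :=
    le_mul_of_one_le_left (by positivity) (by nlinarith)
  _ = t * (X + t) ^ (n + 2) := by ring
  _ ≤ t * (X + t) ^ e := by
    gcongr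
    linarith

lemma hasDerivAt_fastTime (e : ℕ) (X t : ℝ) :
    HasDerivAt (fastTime e X) ((X + t) ^ e + t * (e * (X + t) ^ (e - 1))) t := by
  exact ((hasDerivAt_id' t).fun_mul (((hasDerivAt_id' t).const_add X).fun_pow e)).congr_deriv
    (by simp)

end FastTime

section Input

variable {ι κ α : Type*} [Fintype ι] [Fintype κ] [Fintype α] {F : (ι → ℝ) → ι → ℝ} {o : κ → ι}
  {q : (κ → ℝ) → α → ℝ} {k l e P : ℕ} {X t : ℝ} {w : κ → ℝ} {y : ℝ → ι → ℝ}
  (h : IsPolyTimeRun F o k X w y) (hX : 3 ≤ X) (hq : HasPolyGrowth q l)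
include h hX hq

lemma IsPolyTimeRun.norm_comp_output_le (ht : 0 ≤ t) :
    ‖q (y t ∘ o)‖ ≤ X ^ (((k + 2) * k + 2) * l) := by
  have hR : (2 : ℝ) ≤ X ^ ((k + 2) * k + 2) :=
    (by linarith : 2 ≤ X).trans (le_self_pow₀ (by linarith) (by omega))
  rw [pow_mul]
  exact hq.norm_le hR (h.norm_output_le (by linarith) ht)

lemma IsPolyTimeRun.norm_comp_output_sub_le {m : ℕ} (hm : ((k + 2) * k + 2) * l + P + 1 = m)
    (he : (2 * m + 2) * k + 2 ≤ e) (ht : 1 / 4 ≤ t) :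
    ‖q (y (fastTime e X t) ∘ o) - q w‖ ≤ Real.exp (-(X + t + 3) ^ P) := by
  set n := (k + 2) * k + 2
  have hR : (2 : ℝ) ≤ X ^ n := (by linarith : 2 ≤ X).trans (le_self_pow₀ (by linarith) (by omega))
  have htime : (X + (X + t + 3) ^ m) ^ k ≤ fastTime e X t := calc
    (X + (X + t + 3) ^ m) ^ k ≤ ((X + t) ^ 1 + (X + t) ^ (2 * m)) ^ k := by
      gcongr
      · linarith
      · exact add_three_pow_le_pow (by linarith) m
    _ ≤ ((X + t) ^ (2 * m + 2)) ^ k := by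
      gcongr
      exact pow_add_pow_le_pow (by linarith) (by omega) (by omega)
    _ = (X + t) ^ ((2 * m + 2) * k) := (pow_mul _ _ _).symm
    _ ≤ fastTime e X t := pow_le_fastTime hX ht he
  calc ‖q (y (fastTime e X t) ∘ o) - q w‖
      ≤ (X ^ n) ^ l * ‖y (fastTime e X t) ∘ o - w‖ :=
        hq.norm_sub_le hR (h.norm_output_le (by linarith) (fastTime_nonneg (by linarith)
          (by linarith))) ((h.norm_value_le (by linarith)).trans
            (pow_le_pow_right₀ (by linarith) (by omega)))
    _ ≤ (X + t + 3) ^ (n * l) * Real.exp (-(X + t + 3) ^ m) := by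
        rw [← pow_mul]
        gcongr
        · linarith
        · exact h.norm_output_sub_le _ _ (by positivity) htime
    _ ≤ Real.exp (-(X + t + 3) ^ P) :=
        pow_mul_exp_neg_pow_le (by linarith) (by omega) (by omega)

end Input

namespace IsPolynomialMap

variable {ι κ α : Type*} {F G : (ι → ℝ) → κ → ℝ}

lemma reindex (σ : κ → ι) : IsPolynomialMap fun x : ι → ℝ => x ∘ σ := fun i => .coord (σ i)

lemma comp {H : (κ → ℝ) → α → ℝ} (hH : IsPolynomialMap H) (hG : IsPolynomialMap G) :
    IsPolynomialMap fun x => H (G x) :=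
  fun i => (hH i).comp hG

lemma sub (hF : IsPolynomialMap F) (hG : IsPolynomialMap G) : IsPolynomialMap fun x => F x - G x :=
  fun i => (hF i).sub (hG i)

lemma smul {a : (ι → ℝ) → ℝ} (ha : IsPolynomialFun a) (hF : IsPolynomialMap F) :
    IsPolynomialMap fun x => a x • F x :=
  fun i => ha.mul (hF i)

lemma sumElim {H : (ι → ℝ) → α → ℝ} (hF : IsPolynomialMap F) (hH : IsPolynomialMap H) :
    IsPolynomialMap fun x => Sum.elim (F x) (H x) :=
  fun i => i.casesOn hF hH

end IsPolynomialMap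

section SumElim

variable {ι κ : Type*}

lemma norm_sumElim_le [Fintype ι] [Fintype κ] {v : ι → ℝ} {w : κ → ℝ} {r : ℝ} (hv : ‖v‖ ≤ r)
    (hw : ‖w‖ ≤ r) : ‖Sum.elim v w‖ ≤ r :=
  (pi_norm_le_iff_of_nonneg ((norm_nonneg v).trans hv)).2 fun i => i.casesOn
    (fun i => (norm_le_pi_norm v i).trans hv) fun i => (norm_le_pi_norm w i).trans hw

lemma hasDerivWithinAt_sumElim {y : ℝ → ι → ℝ} {z : ℝ → κ → ℝ} {y' : ι → ℝ} {z' : κ → ℝ}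
    {s : Set ℝ} {t : ℝ} (hy : HasDerivWithinAt y y' s t) (hz : HasDerivWithinAt z z' s t) :
    HasDerivWithinAt (fun t => Sum.elim (y t) (z t)) (Sum.elim y' z') s t :=
  hasDerivWithinAt_pi.2 fun i => i.casesOn (hasDerivWithinAt_pi.1 hy) (hasDerivWithinAt_pi.1 hz)

lemma IsPolynomialMap.exists_field_sumElim_sigmoid [Finite ι] {V : (ι → ℝ) → ι → ℝ}
    (hV : IsPolynomialMap V) {F : (ι → ℝ) → κ → ℝ} (hF : IsPolynomialMap F) :
    ∃ W, IsPolynomialMap W ∧ ∀ (y : ℝ → ι → ℝ) (s : Set ℝ) (t : ℝ),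
      HasDerivWithinAt y (V (y t)) s t →
        HasDerivWithinAt (fun t => Sum.elim (y t) fun i => Real.sigmoid (F (y t) i))
          (W (Sum.elim (y t) fun i => Real.sigmoid (F (y t) i))) s t := by
  have := Fintype.ofFinite ι
  choose G hG hG' using fun i => (hF i).exists_lieDeriv hV
  -- The sigmoid `σ` satisfies `σ' = σ (1 - σ)`.
  refine ⟨fun x => Sum.elim (V (x ∘ Sum.inl)) fun i =>
    x (Sum.inr i) * (1 - x (Sum.inr i)) * G i (x ∘ Sum.inl), ?_, fun y s t h => ?_⟩
  · exact (hV.comp (.reindex Sum.inl)).sumElim fun i =>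
      ((IsPolynomialFun.coord _).mul ((IsPolynomialFun.const 1).sub (.coord _))).mul
        ((hG i).comp (.reindex Sum.inl))
  · exact hasDerivWithinAt_sumElim h (hasDerivWithinAt_pi.2 fun i =>
      (Real.hasDerivAt_sigmoid _).comp_hasDerivWithinAt t (hG' i y s t h))

end SumElim

section GatedClock

/-- The times within a cycle of length three at which the three gates of a cycle are open. -/
def gateCenter : Fin 3 → ℝ := ![1 / 2, 3 / 2, 5 / 2]

/-- A clock with base `X`: the time `t`, the growing scale `X + t`, and a rotation of period three
from which the phases of a cycle are read off. -/
def clock (X t : ℝ) : Fin 4 → ℝ :=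
  ![t, X + t, Real.cos (2 * Real.pi / 3 * t), Real.sin (2 * Real.pi / 3 * t)]

/-- The `clock` together with its three gates. -/
def gatedClock (e : ℕ) (X t : ℝ) : Fin 4 ⊕ Fin 3 → ℝ :=
  Sum.elim (clock X t) fun i => gate e X (gateCenter i) t

/-- The pulse obtained from the `i`-th gate of a `gatedClock`, in terms of the state of the
clock. -/
def clockPulse (m : ℕ) (i : Fin 3) (s : Fin 4 ⊕ Fin 3 → ℝ) : ℝ :=
  s (Sum.inl 0) * s (Sum.inl 1) ^ (2 * m + 4) * s (Sum.inr i)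

lemma isPolynomialFun_clockPulse (m : ℕ) (i : Fin 3) : IsPolynomialFun (clockPulse m i) :=
  ((IsPolynomialFun.coord _).mul (.pow (.coord _) _)).mul (.coord _)

lemma isPulseTrain_clockPulse {X : ℝ} {m n e : ℕ} (hX : 3 ≤ X) (he : 2 * m + 2 * n + 9 ≤ e)
    (i : Fin 3) : IsPulseTrain X (gateCenter i) m n fun t => clockPulse m i (gatedClock e X t) :=
  isPulseTrain_mul_gate hX he

lemma hasDerivAt_clock (X t : ℝ) :
    HasDerivAt (clock X) ![1, 1, -(2 * Real.pi / 3) * clock X t 3, 2 * Real.pi / 3 * clock X t 2]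
      t := by
  have hω : HasDerivAt (fun t => 2 * Real.pi / 3 * t) (2 * Real.pi / 3) t :=
    hasDerivAt_const_mul _
  rw [hasDerivAt_pi]
  intro i
  fin_cases i
  · exact hasDerivAt_id t
  · exact (hasDerivAt_id t).const_add X
  · exact hω.cos.congr_deriv (by simp [clock, mul_comm])
  · exact hω.sin.congr_deriv (by simp [clock, mul_comm])

lemma gate_eq_sigmoid_clock (e : ℕ) (X c t : ℝ) :
    gate e X c t = Real.sigmoid (clock X t 0 * clock X t 1 ^ e *
      (clock X t 2 * Real.cos (2 * Real.pi / 3 * c) +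
        clock X t 3 * Real.sin (2 * Real.pi / 3 * c) - 3 / 4)) := by
  simp only [gate, phase, mul_sub, Real.cos_sub]
  rfl

lemma exists_hasDerivWithinAt_gatedClock (e : ℕ) :
    ∃ V, IsPolynomialMap V ∧ ∀ X s t,
      HasDerivWithinAt (gatedClock e X) (V (gatedClock e X t)) s t := by
  have hV : IsPolynomialMap fun s : Fin 4 → ℝ =>
      ![1, 1, -(2 * Real.pi / 3) * s 3, 2 * Real.pi / 3 * s 2] := fun i => by
    fin_cases i
    · exact .const 1
    · exact .const 1
    · exact (IsPolynomialFun.const _).mul (.coord 3)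
    · exact (IsPolynomialFun.const _).mul (.coord 2)
  have hF : IsPolynomialMap fun (s : Fin 4 → ℝ) (i : Fin 3) => s 0 * s 1 ^ e *
      (s 2 * Real.cos (2 * Real.pi / 3 * gateCenter i) +
        s 3 * Real.sin (2 * Real.pi / 3 * gateCenter i) - 3 / 4) := fun i =>
    ((IsPolynomialFun.coord 0).mul (.pow (.coord 1) e)).mul
      ((((IsPolynomialFun.coord 2).mul (.const _)).add ((IsPolynomialFun.coord 3).mul
        (.const _))).sub (.const _))
  obtain ⟨W, hW, hW'⟩ := hV.exists_field_sumElim_sigmoid hF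
  refine ⟨W, hW, fun X s t => ?_⟩
  unfold gatedClock
  simp only [gate_eq_sigmoid_clock]
  exact hW' (clock X) s t (hasDerivAt_clock X t).hasDerivWithinAt

lemma norm_gatedClock_le (e : ℕ) {X t : ℝ} (hX : 1 ≤ X) (ht : 0 ≤ t) :
    ‖gatedClock e X t‖ ≤ X + t := by
  refine norm_sumElim_le ((pi_norm_le_iff_of_nonneg (by linarith)).2 fun i => ?_)
    ((pi_norm_le_iff_of_nonneg (by linarith)).2 fun i => ?_)
  · have hcos := Real.abs_cos_le_one (2 * Real.pi / 3 * t)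
    have hsin := Real.abs_sin_le_one (2 * Real.pi / 3 * t)
    have habs := abs_of_nonneg ht
    have habs' := abs_of_nonneg (by linarith : 0 ≤ X + t)
    fin_cases i <;> simp [clock] <;> linarith
  · exact (Real.norm_of_nonneg (Real.sigmoid_nonneg _)).trans_le
      ((Real.sigmoid_le_one _).trans (by linarith))

lemma gatedClock_zero (e : ℕ) (X : ℝ) : gatedClock e X 0 = Sum.elim ![0, X, 1, 0] fun _ => 2⁻¹ := by
  simp [gatedClock, clock, gate]

end GatedClock

lemma exists_nnreal_bound_of_continuousOn {φ : ℝ → ℝ} (hφ : ContinuousOn φ (Ici 0)) (N : ℝ) :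
    ∃ C : NNReal, ∀ t ∈ Icc 0 N, φ t ≤ C := by
  obtain ⟨C, hC⟩ := isCompact_Icc.exists_bound_of_continuousOn
    (hφ.mono (Icc_subset_Ici_self : Icc 0 N ⊆ Ici 0))
  exact ⟨C.toNNReal, fun t ht => ((le_abs_self _).trans (hC t ht)).trans C.le_coe_toNNReal⟩

lemma IsTameField.add {E : Type*} [NormedAddCommGroup E] [NormedSpace ℝ E] {f g : ℝ → E → E}
    (hf : IsTameField f) (hg : IsTameField g) : IsTameField fun t x => f t x + g t x where
  continuousOn := hf.continuousOn.add hg.continuousOn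
  exists_bound N := by
    obtain ⟨C, hC⟩ := hf.exists_bound N
    obtain ⟨D, hD⟩ := hg.exists_bound N
    exact ⟨C + D, fun t ht x => norm_add_le_of_le (hC t ht x) (hD t ht x)⟩
  exists_lipschitzWith N := by
    obtain ⟨K, hK⟩ := hf.exists_lipschitzWith N
    obtain ⟨L, hL⟩ := hg.exists_lipschitzWith N
    exact ⟨K + L, fun t ht => (hK t ht).add (hL t ht)⟩

lemma isTameField_const {E : Type*} [NormedAddCommGroup E] [NormedSpace ℝ E] {b : ℝ → E}
    (hb : ContinuousOn b (Ici 0)) : IsTameField fun t (_ : E) => b t where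
  continuousOn := hb.comp continuousOn_fst fun _ hp => hp.1
  exists_bound N := by
    obtain ⟨C, hC⟩ := exists_nnreal_bound_of_continuousOn hb.norm N
    exact ⟨C, fun t ht _ => hC t ht⟩
  exists_lipschitzWith _ := ⟨0, fun t _ => LipschitzWith.const (b t)⟩

lemma IsPolynomialMap.isTameField_clamp {ι : Type*} [Fintype ι] {F : (ι → ℝ) → ι → ℝ}
    (hF : IsPolynomialMap F) {a ρ : ℝ → ℝ} (ha : ContinuousOn a (Ici 0))
    (hρ : ContinuousOn ρ (Ici 0)) (h2 : ∀ t, 0 ≤ t → 2 ≤ ρ t) :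
    IsTameField fun t x => a t • F (clamp (ρ t) x) := by
  obtain ⟨d, hd⟩ := hF.exists_hasPolyGrowth
  have hfst : MapsTo Prod.fst (Ici 0 ×ˢ (univ : Set (ι → ℝ))) (Ici (0 : ℝ)) := fun _ hp => hp.1
  have hbound := exists_nnreal_bound_of_continuousOn (φ := fun t => ‖a t‖ * ρ t ^ d)
    (ha.norm.mul (hρ.pow d))
  refine ⟨?_, fun N => ?_, fun N => ?_⟩
  · exact (ha.comp continuousOn_fst hfst).smul (hF.continuous.comp_continuousOn
      (continuous_clamp.comp_continuousOn
        ((hρ.comp continuousOn_fst hfst).prodMk continuousOn_snd)))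
  · obtain ⟨C, hC⟩ := hbound N
    refine ⟨C, fun t ht x => le_trans ?_ (hC t ht)⟩
    rw [norm_smul]
    gcongr
    exact hd.norm_clamp_le (h2 t ht.1) x
  · obtain ⟨C, hC⟩ := hbound N
    refine ⟨C, fun t ht => LipschitzWith.of_dist_le_mul fun x y => ?_⟩
    rw [dist_eq_norm, dist_eq_norm, ← smul_sub, norm_smul]
    calc ‖a t‖ * ‖F (clamp (ρ t) x) - F (clamp (ρ t) y)‖ ≤ ‖a t‖ * (ρ t ^ d * ‖x - y‖) := by
          gcongr
          exact hd.norm_clamp_sub_le (h2 t ht.1) x y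
      _ ≤ C * ‖x - y‖ := by
          rw [← mul_assoc]
          exact mul_le_mul_of_nonneg_right (hC t ht) (norm_nonneg _)

section Existence

variable {ι : Type*} [Finite ι]

lemma IsPolynomialMap.exists_solution_clamp_restart {F : (ι → ℝ) → ι → ℝ} (hF : IsPolynomialMap F)
    {K : ℕ} {X : ℝ} {a r : ℝ → ℝ} {u : ℝ → ι → ℝ} (hX : 2 ≤ X) (hK : K ≠ 0) (ha : Continuous a)
    (hr : Continuous r) (hu : ContinuousOn u (Ici 0)) :
    ∃ z : ℝ → ι → ℝ, z 0 = 0 ∧ ∀ t, 0 ≤ t → HasDerivWithinAt z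
      (a t • F (clamp ((X + t) ^ K) (z t)) - r t • (z t - u t)) (Ici 0) t := by
  have := Fintype.ofFinite ι
  have hρ (t : ℝ) (ht : 0 ≤ t) : 2 ≤ (X + t) ^ K :=
    (by linarith : 2 ≤ X + t).trans (le_self_pow₀ (by linarith) hK)
  have htame := (hF.isTameField_clamp ha.continuousOn (by fun_prop) hρ).add
    (isTameField_const (b := fun t => r t • u t) (hr.continuousOn.smul hu))
  obtain ⟨z, hz₀, hz⟩ := htame.exists_solution_sub_smul hr 0
  exact ⟨z, hz₀, fun t ht => (hz t ht).congr_deriv (by rw [smul_sub]; abel)⟩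

lemma exists_solution_smul_sub {c : ℝ → ℝ} {ζ : ℝ → ι → ℝ} (hc : Continuous c)
    (hζ : ContinuousOn ζ (Ici 0)) :
    ∃ ξ : ℝ → ι → ℝ, ξ 0 = 0 ∧
      ∀ t, 0 ≤ t → HasDerivWithinAt ξ (c t • (ζ t - ξ t)) (Ici 0) t := by
  have := Fintype.ofFinite ι
  obtain ⟨ξ, hξ₀, hξ⟩ :=
    (isTameField_const (b := fun t => c t • ζ t) (hc.continuousOn.smul hζ)).exists_solution_sub_smul
      hc 0
  exact ⟨ξ, hξ₀, fun t ht => (hξ t ht).congr_deriv (smul_sub _ _ _).symm⟩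

end Existence

lemma hasDerivWithinAt_comp_fastTime {E : Type*} [NormedAddCommGroup E] [NormedSpace ℝ E]
    {F : E → E} {y : ℝ → E} (h : ∀ t, 0 ≤ t → HasDerivWithinAt y (F (y t)) (Ici 0) t) {e : ℕ}
    {X t : ℝ} (hX : 0 ≤ X) (ht : 0 ≤ t) :
    HasDerivWithinAt (fun t => y (fastTime e X t))
      (((X + t) ^ e + t * (e * (X + t) ^ (e - 1))) • F (y (fastTime e X t))) (Ici 0) t :=
  (h _ (fastTime_nonneg hX ht)).scomp t (hasDerivAt_fastTime e X t).hasDerivWithinAt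
    fun _ hs => fastTime_nonneg hX hs

section Cascade

variable {ι ι' β γ : Type*}

/-- The field of the composite system, acting on a gated clock with field `V`, on a computation with
field `F` and output `o`, on restarted runs with field `G` and input map `q`, and on a register
sampling their output `o'`. The three gates of the clock reset, run and sample. -/
def cascadeField (V : (Fin 4 ⊕ Fin 3 → ℝ) → Fin 4 ⊕ Fin 3 → ℝ) (F : (ι → ℝ) → ι → ℝ) (o : β → ι)
    (q : (β → ℝ) → ι' → ℝ) (G : (ι' → ℝ) → ι' → ℝ) (o' : γ → ι') (k P e : ℕ)
    (s : (Fin 4 ⊕ Fin 3) ⊕ ι ⊕ ι' ⊕ γ → ℝ) : (Fin 4 ⊕ Fin 3) ⊕ ι ⊕ ι' ⊕ γ → ℝ :=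
  let τ := s ∘ Sum.inl
  let y := s ∘ Sum.inr ∘ Sum.inl
  let z := s ∘ Sum.inr ∘ Sum.inr ∘ Sum.inl
  let ξ := s ∘ Sum.inr ∘ Sum.inr ∘ Sum.inr
  Sum.elim (V τ) <| Sum.elim
    ((τ (Sum.inl 1) ^ e + τ (Sum.inl 0) * (e * τ (Sum.inl 1) ^ (e - 1))) • F y) <| Sum.elim
    (clockPulse (2 * k) 1 τ • G z - clockPulse P 0 τ • (z - q (y ∘ o)))
    (clockPulse P 2 τ • (z ∘ o' - ξ))

/-- The trajectory of `cascadeField` in which the first computation follows `y` in the accelerated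
time `fastTime e X`. -/
def cascadeRun (e n : ℕ) (X : ℝ) (y : ℝ → ι → ℝ) (z : ℝ → ι' → ℝ) (ξ : ℝ → γ → ℝ) (t : ℝ) :
    (Fin 4 ⊕ Fin 3) ⊕ ι ⊕ ι' ⊕ γ → ℝ :=
  Sum.elim (gatedClock n X t) <| Sum.elim (y (fastTime e X t)) <| Sum.elim (z t) (ξ t)

variable {F : (ι → ℝ) → ι → ℝ} {G : (ι' → ℝ) → ι' → ℝ} {q : (β → ℝ) → ι' → ℝ}
  {V : (Fin 4 ⊕ Fin 3 → ℝ) → Fin 4 ⊕ Fin 3 → ℝ} {o : β → ι} {o' : γ → ι'}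

lemma isPolynomialMap_cascadeField (hV : IsPolynomialMap V) (hF : IsPolynomialMap F)
    (hq : IsPolynomialMap q) (hG : IsPolynomialMap G) (k P e : ℕ) :
    IsPolynomialMap (cascadeField V F o q G o' k P e) := by
  have hpulse (m : ℕ) (i : Fin 3) : IsPolynomialFun
      fun s : (Fin 4 ⊕ Fin 3) ⊕ ι ⊕ ι' ⊕ γ → ℝ => clockPulse m i (s ∘ Sum.inl) :=
    (isPolynomialFun_clockPulse m i).comp (.reindex _)
  refine (hV.comp (.reindex _)).sumElim (.sumElim (.smul ?_ (hF.comp (.reindex _)))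
    (.sumElim (.sub (.smul (hpulse _ _) (hG.comp (.reindex _))) (.smul (hpulse _ _)
      (.sub (.reindex _) (hq.comp (.reindex _))))) (.smul (hpulse _ _)
        (.sub (.reindex _) (.reindex _)))))
  exact ((IsPolynomialFun.coord _).pow e).add
    ((IsPolynomialFun.coord _).mul ((IsPolynomialFun.const _).mul (.pow (.coord _) _)))

lemma cascadeRun_zero (e n : ℕ) (X : ℝ) {y : ℝ → ι → ℝ} {z : ℝ → ι' → ℝ} {ξ : ℝ → γ → ℝ}
    (hz : z 0 = 0) (hξ : ξ 0 = 0) : cascadeRun e n X y z ξ 0 =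
      Sum.elim (Sum.elim ![0, X, 1, 0] fun _ => 2⁻¹) (Sum.elim (y 0) 0) := by
  simp [cascadeRun, gatedClock_zero, fastTime, hz, hξ, Sum.elim_zero_zero]

variable [Fintype ι] [Fintype ι'] [Fintype β] [Fintype γ] {k k' d l K P e n : ℕ} {X : ℝ}
  {v : β → ℝ} {w : γ → ℝ} {y : ℝ → ι → ℝ} {Z z : ℝ → ι' → ℝ} {ξ : ℝ → γ → ℝ}

lemma isPolyTimeRun_cascadeRun
    (hV : ∀ s t, HasDerivWithinAt (gatedClock n X) (V (gatedClock n X t)) s t)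
    (hy : IsPolyTimeRun F o k X v y)
    (hz : IsRestartedRun G o' d k' l K P X w
      (fun t => clockPulse (2 * k') 1 (gatedClock n X t))
      (fun t => clockPulse P 0 (gatedClock n X t)) (fun t => q (y (fastTime e X t) ∘ o)) Z z)
    (hξ : IsSampleHold K P X w (fun t => clockPulse P 2 (gatedClock n X t))
      (fun t => z t ∘ o') ξ) :
    IsPolyTimeRun (cascadeField V F o q G o' k' P e) (Sum.inr ∘ Sum.inr ∘ Sum.inr)
      ((e + 2) * k + K + 1) X w (cascadeRun e n X y z ξ) where
  hasDerivWithinAt t ht := hasDerivWithinAt_sumElim (hV _ t) <| hasDerivWithinAt_sumElim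
    (hasDerivWithinAt_comp_fastTime hy.hasDerivWithinAt (by linarith [hz.three_le]) ht) <|
    hasDerivWithinAt_sumElim (hz.hasDerivWithinAt_self ht) (hξ.hasDerivWithinAt t ht)
  norm_le t ht := by
    have hX := hz.three_le
    have hle {m : ℕ} (hm : m ≤ (e + 2) * k + K + 1) :
        (X + t) ^ m ≤ (X + t) ^ ((e + 2) * k + K + 1) := pow_le_pow_right₀ (by linarith) hm
    refine norm_sumElim_le ?_ (norm_sumElim_le ?_ (norm_sumElim_le
      ((hz.norm_le ht).trans (hle (by omega))) ((hξ.norm_le ht).trans (hle (by omega)))))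
    · exact (norm_gatedClock_le n (by linarith) ht).trans (le_self_pow₀ (by linarith) (by omega))
    · calc ‖y (fastTime e X t)‖ ≤ (X + fastTime e X t) ^ k :=
            hy.norm_le _ (fastTime_nonneg (by linarith) ht)
        _ ≤ ((X + t) ^ (e + 2)) ^ k :=
            pow_le_pow_left₀ (by linarith [fastTime_nonneg (e := e) (by linarith : 0 ≤ X) ht])
              (add_fastTime_le hX ht) k
        _ = (X + t) ^ ((e + 2) * k) := (pow_mul _ _ _).symm
        _ ≤ (X + t) ^ ((e + 2) * k + K + 1) := hle (by omega)
  norm_output_sub_le t μ hμ ht := by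
    have hX := hz.three_le
    have hXt : X + μ ≤ t := (le_self_pow₀ (by linarith) (by omega)).trans ht
    exact (hξ.norm_sub_le_exp (by linarith)).trans (Real.exp_le_exp.2 (by linarith))

end Cascade

section CascadeExistence

variable {ι ι' β γ : Type*} [Fintype ι] [Fintype ι'] [Fintype β] [Fintype γ]
  {F : (ι → ℝ) → ι → ℝ} {G : (ι' → ℝ) → ι' → ℝ} {q : (β → ℝ) → ι' → ℝ} {o : β → ι} {o' : γ → ι'}
  {k k' d l K P e : ℕ} {X : ℝ} {v : β → ℝ} {w : γ → ℝ} {y : ℝ → ι → ℝ} {Z : ℝ → ι' → ℝ}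

lemma exists_isRestartedRun (hX : 3 ≤ X) (hG : IsPolynomialMap G) (hGd : HasPolyGrowth G d)
    (hq : IsPolynomialMap q) (hql : HasPolyGrowth q l) (hy : IsPolyTimeRun F o k X v y)
    (hZ : IsPolyTimeRun G o' k' X w Z) (hZ₀ : Z 0 = q v)
    (hK : 2 * ((4 * k' + 7) * k' + ((k + 2) * k + 2) * l + 3) ≤ K)
    (hP : K * d + K + 4 * k' + 20 ≤ P)
    (he : (2 * (((k + 2) * k + 2) * l + P + 1) + 2) * k + 2 ≤ e) :
    ∃ z, IsRestartedRun G o' d k' (((k + 2) * k + 2) * l) K P X w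
      (fun t => clockPulse (2 * k') 1 (gatedClock (4 * P + 9) X t))
      (fun t => clockPulse P 0 (gatedClock (4 * P + 9) X t))
      (fun t => q (y (fastTime e X t) ∘ o)) Z z := by
  have hrun := isPulseTrain_clockPulse (e := 4 * P + 9) hX
    (show 2 * (2 * k') + 2 * P + 9 ≤ 4 * P + 9 by omega) 1
  have hreset := isPulseTrain_clockPulse (e := 4 * P + 9) hX
    (show 2 * P + 2 * P + 9 ≤ 4 * P + 9 by omega) 0
  have hu : ContinuousOn (fun t => q (y (fastTime e X t) ∘ o)) (Ici 0) := fun t ht =>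
    (hq.comp (.reindex o)).continuous.continuousAt.comp_continuousWithinAt
      (hasDerivWithinAt_comp_fastTime hy.hasDerivWithinAt (by linarith) ht).continuousWithinAt
  obtain ⟨z, hz₀, hz⟩ := hG.exists_solution_clamp_restart (K := K) (by linarith) (by omega)
    hrun.continuous hreset.continuous hu
  exact ⟨z, hX, hK, hP, hGd, hrun, hreset, hZ,
    fun t ht => hy.norm_comp_output_le hX hql (fastTime_nonneg (by linarith) ht),
    fun t ht => hZ₀ ▸ hy.norm_comp_output_sub_le hX hql rfl he ht, hz₀, hz⟩

lemma IsRestartedRun.exists_isSampleHold {a r : ℝ → ℝ} {u z : ℝ → ι' → ℝ}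
    (h : IsRestartedRun G o' d k l K P X w a r u Z z) :
    ∃ ξ, IsSampleHold K P X w (fun t => clockPulse P 2 (gatedClock (4 * P + 9) X t))
      (fun t => z t ∘ o') ξ := by
  have hX := h.three_le
  have hK := h.le_radius
  have hP := h.le_precision
  have hsample := isPulseTrain_clockPulse (e := 4 * P + 9) hX
    (show 2 * P + 2 * P + 9 ≤ 4 * P + 9 by omega) 2
  have hζ : ContinuousOn (fun t => z t ∘ o') (Ici 0) := fun t ht => continuousWithinAt_pi.2
    fun i => continuousWithinAt_pi.1 (h.hasDerivWithinAt t ht).continuousWithinAt (o' i)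
  obtain ⟨ξ, hξ₀, hξ⟩ := exists_solution_smul_sub hsample.continuous hζ
  refine ⟨ξ, hX, by omega, hsample, ?_, fun t ht => (norm_comp_le _ _).trans (h.norm_le ht),
    fun j t ht => h.norm_output_sub_le ht, hξ₀, hξ⟩
  exact (h.target.norm_value_le (by linarith)).trans
    (pow_le_pow_right₀ (by linarith) (by nlinarith))

theorem exists_cascade (hF : IsPolynomialMap F) (hG : IsPolynomialMap G) (hq : IsPolynomialMap q)
    (o : β → ι) (o' : γ → ι') (k k' : ℕ) :
    ∃ (H : ((Fin 4 ⊕ Fin 3) ⊕ ι ⊕ ι' ⊕ γ → ℝ) → (Fin 4 ⊕ Fin 3) ⊕ ι ⊕ ι' ⊕ γ → ℝ) (N : ℕ),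
      IsPolynomialMap H ∧ ∀ (X : ℝ) (v : β → ℝ) (w : γ → ℝ) (y : ℝ → ι → ℝ) (Z : ℝ → ι' → ℝ),
        3 ≤ X → IsPolyTimeRun F o k X v y → IsPolyTimeRun G o' k' X w Z → Z 0 = q v →
          ∃ s, s 0 = Sum.elim (Sum.elim ![0, X, 1, 0] fun _ => 2⁻¹) (Sum.elim (y 0) 0) ∧
            IsPolyTimeRun H (Sum.inr ∘ Sum.inr ∘ Sum.inr) N X w s := by
  obtain ⟨d, hd⟩ := hG.exists_hasPolyGrowth
  obtain ⟨l, hl⟩ := hq.exists_hasPolyGrowth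
  let K := 2 * ((4 * k' + 7) * k' + ((k + 2) * k + 2) * l + 3)
  let P := K * d + K + 4 * k' + 20
  let e := (2 * (((k + 2) * k + 2) * l + P + 1) + 2) * k + 2
  obtain ⟨V, hV, hV'⟩ := exists_hasDerivWithinAt_gatedClock (4 * P + 9)
  refine ⟨cascadeField V F o q G o' k' P e, (e + 2) * k + K + 1,
    isPolynomialMap_cascadeField hV hF hq hG k' P e, fun X v w y Z hX hy hZ hZ₀ => ?_⟩
  obtain ⟨z, hz⟩ := exists_isRestartedRun hX hG hd hq hl hy hZ hZ₀ le_rfl le_rfl le_rfl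
  obtain ⟨ξ, hξ⟩ := hz.exists_isSampleHold
  exact ⟨cascadeRun e (4 * P + 9) X y z ξ, cascadeRun_zero _ _ _ hz.init hξ.init,
    isPolyTimeRun_cascadeRun (hV' X) hy hz hξ⟩

end CascadeExistence

section InputSize

variable {α : Type*} [Fintype α]

/-- A polynomial substitute for the size `2 + ‖x‖` of an input `x`. -/
def polySize (x : α → ℝ) : ℝ := 3 + ∑ i, x i ^ 2

lemma isPolynomialFun_polySize : IsPolynomialFun (polySize : (α → ℝ) → ℝ) :=
  (IsPolynomialFun.const 3).add (.sum fun i => (IsPolynomialFun.coord i).pow 2)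

lemma three_le_polySize (x : α → ℝ) : 3 ≤ polySize x :=
  le_add_of_nonneg_right (Finset.sum_nonneg fun i _ => sq_nonneg (x i))

lemma two_add_norm_le_polySize (x : α → ℝ) : 2 + ‖x‖ ≤ polySize x := by
  have hsum : ‖x‖ ≤ 1 + ∑ i, x i ^ 2 := by
    refine (pi_norm_le_iff_of_nonneg (by positivity)).2 fun i => ?_
    have hi : x i ^ 2 ≤ ∑ i, x i ^ 2 :=
      Finset.single_le_sum (fun i _ => sq_nonneg (x i)) (Finset.mem_univ i)
    rw [Real.norm_eq_abs]
    nlinarith [sq_nonneg (|x i| - 1), sq_abs (x i)]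
  unfold polySize
  linarith

lemma exists_polySize_add_le_pow :
    ∃ c : ℕ, ∀ (x : α → ℝ) (t : ℝ), 0 ≤ t → polySize x + t ≤ (2 + ‖x‖ + t) ^ c := by
  obtain ⟨c, hc⟩ := isPolynomialFun_polySize (α := α) |>.exists_hasPolyGrowth
  refine ⟨c + 2, fun x t ht => ?_⟩
  have hB : 2 ≤ 2 + ‖x‖ + t := by linarith [norm_nonneg x]
  calc polySize x + t ≤ (2 + ‖x‖ + t) ^ c + (2 + ‖x‖ + t) ^ 1 := add_le_add
        ((le_abs_self _).trans (hc.norm_le hB (by linarith))) (by linarith [norm_nonneg x])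
    _ ≤ (2 + ‖x‖ + t) ^ (c + 2) := pow_add_pow_le_pow hB (by omega) (by omega)

end InputSize

lemma IsPolyTimeRun.two_add_norm_value_add_le {ι β : Type*} [Fintype ι] [Fintype β]
    {F : (ι → ℝ) → ι → ℝ} {o : β → ι} {k : ℕ} {X t : ℝ} {v : β → ℝ} {y : ℝ → ι → ℝ}
    (h : IsPolyTimeRun F o k X v y) (hX : 2 ≤ X) (ht : 0 ≤ t) :
    2 + ‖v‖ + t ≤ (X + t) ^ ((k + 2) * k + 3) :=
  calc 2 + ‖v‖ + t ≤ (X + t) ^ ((k + 2) * k + 1) + (X + t) ^ 1 := by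
        have hv : X ^ ((k + 2) * k + 1) ≤ (X + t) ^ ((k + 2) * k + 1) := by
          gcongr
          linarith
        linarith [h.norm_value_le hX]
    _ ≤ (X + t) ^ ((k + 2) * k + 3) := pow_add_pow_le_pow (by linarith) (by omega) (by omega)

theorem IsPolyTimeComputable.comp {α β : Type*} {γ : Type} [Fintype α] [Fintype β] [Fintype γ]
    {domf : Set (α → ℝ)} {domg : Set (β → ℝ)} {f : (α → ℝ) → β → ℝ} {g : (β → ℝ) → γ → ℝ}
    (hg : IsPolyTimeComputable domg g) (hf : IsPolyTimeComputable domf f)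
    (hfg : MapsTo f domf domg) : IsPolyTimeComputable domf (g ∘ f) := by
  obtain ⟨ι, _, F, p, o, k, hF, hp, hf⟩ := hf
  obtain ⟨ι', _, G, q, o', k', hG, hq, hg⟩ := hg
  obtain ⟨H, N, hH, hrun⟩ := exists_cascade hF hG hq o o' k (((k + 2) * k + 3) * k')
  obtain ⟨c, hc⟩ := exists_polySize_add_le_pow (α := α)
  refine ⟨_, inferInstance, H,
    fun x => Sum.elim (Sum.elim ![0, polySize x, 1, 0] fun _ => 2⁻¹) (Sum.elim (p x) 0),
    Sum.inr ∘ Sum.inr ∘ Sum.inr, c * N, hH, ?_, fun x hx => ?_⟩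
  · refine .sumElim (.sumElim (fun i => ?_) fun _ => .const _) (hp.sumElim fun _ => .const 0)
    fin_cases i
    exacts [.const 0, isPolynomialFun_polySize, .const 1, .const 0]
  · obtain ⟨y, hy₀, hy⟩ := hf x hx
    obtain ⟨Z, hZ₀, hZ⟩ := hg (f x) (hfg hx)
    have hX := three_le_polySize x
    have hsize := two_add_norm_le_polySize x
    have hy' : IsPolyTimeRun F o k (polySize x) (f x) y := by
      simpa only [one_mul] using hy.of_le_pow (c := 1) (by positivity) fun t _ => by
        simpa only [pow_one] using add_le_add_left hsize t
    have hZ' := hZ.of_le_pow (c := (k + 2) * k + 3) (B' := polySize x) (by positivity)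
      fun t ht => hy'.two_add_norm_value_add_le (by linarith) ht
    obtain ⟨s, hs₀, hs⟩ := hrun _ _ _ _ _ hX hy' hZ' hZ₀
    exact ⟨s, by rw [hs₀, hy₀], hs.of_le_pow (by linarith) (hc x)⟩

/-- **`AP` is closed under composition**: if `f, g ∈ AP` and `f(dom f) ⊆ dom g`, then
`g ∘ f`, with domain `dom f`, belongs to `AP`. -/
theorem ap_comp {n m l : ℕ} (domf : Set (Fin n → ℝ)) (f : (Fin n → ℝ) → (Fin m → ℝ))
    (domg : Set (Fin m → ℝ)) (g : (Fin m → ℝ) → (Fin l → ℝ))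
    (hf : AP domf f) (hg : AP domg g) (hfg : ∀ x ∈ domf, f x ∈ domg) :
    AP domf (g ∘ f) :=
  (hg.isPolyTimeComputable.comp hf.isPolyTimeComputable hfg).ap
end
end

section
/- Robust real step for Turing machines: let M be a deterministic Turing machine with tape alphabet Γ = {0, 1, …, k−2} (k ≥ 2) and finite state set Q identified with a finite subset of ℕ. Then there exists a partial function realstep_M :⊆ ℝ⁴ × ℝ₊ → ℝ⁴ in AP such that for every configuration c of M, every μ ≥ 0 and every c̄ ∈ ℝ⁴, if ‖⟨c⟩ − c̄‖_∞ ≤ 1/(2k²) − e^{−μ}, then (c̄, μ) ∈ dom(realstep_M) and ‖realstep_M(c̄, μ) − ⟨M(c)⟩‖_∞ ≤ k · ‖⟨c⟩ − c̄‖_∞, where M(c) denotes the configuration obtained from c after one computation step of M. -/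
noncomputable section

/-- A deterministic Turing machine with tape alphabet `Γ = {0, 1, …, k−2}`
(symbols are elements of `Fin (k-1)`) and a finite state set identified with a
finite subset of `ℕ`.  `δ q σ = (q', σ', dir)` gives the new state, the written
symbol and the move direction (`true` = right, `false` = left). -/
structure TM (k : ℕ) where
  states : Finset ℕ
  δ : ℕ → Fin (k - 1) → ℕ × Fin (k - 1) × Bool

/-- A configuration `(x, σ, y, q)`: tape left of the head (closest symbol first),
symbol under the head, tape right of the head, current state. -/
def TMConfig (k : ℕ) : Type :=
  List (Fin (k - 1)) × Fin (k - 1) × List (Fin (k - 1)) × ℕ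

/-- One computation step of the machine (the blank symbol is `0`). -/
def TM.step {k : ℕ} (hk : 2 ≤ k) (M : TM k) (c : TMConfig k) : TMConfig k :=
  let r := M.δ c.2.2.2 c.2.1
  if r.2.2 then
    (r.2.1 :: c.1, (c.2.2.1).headD ⟨0, by omega⟩, (c.2.2.1).tail, r.1)
  else
    (c.1.tail, (c.1).headD ⟨0, by omega⟩, r.2.1 :: c.2.2.1, r.1)

/-- Real encoding `0.w = Σᵢ wᵢ k^{−i}` of a word `w ∈ Γ*`. -/
def encWord (k : ℕ) : List (Fin (k - 1)) → ℝ
  | [] => 0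
  | a :: w => (((a : ℕ) : ℝ) + encWord k w) / k

/-- Real encoding `⟨c⟩ = (0.x, σ, 0.y, q) ∈ ℝ⁴` of a configuration. -/
def encConfig (k : ℕ) (c : TMConfig k) : Fin 4 → ℝ :=
  ![encWord k c.1, ((c.2.1 : ℕ) : ℝ), encWord k c.2.2.1, ((c.2.2.2 : ℕ) : ℝ)]

/-!
The flow `u' = u - u³` converges exponentially fast to the sign of its initial value, at a rate that
is uniform as long as that value stays away from `0`. A perturbed encoding, suitably rescaled, stays
at a fixed distance `δ > 0` from all integers, and its integer parts are the symbols around the head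
and the state. Running the flow on the differences to finitely many integers therefore computes the
indicator of the local view, and a polynomial in the limit selects the affine map by which one step
acts on the encoding. That map is exact on encodings and `k`-Lipschitz, which is the error bound.

In the definition of `AP`, time is measured by the length of the curve. All trajectories here have
bounded speed, and a clock coordinate `s' = 1` keeps the speed at least `1`, so length and time are
comparable. Since `δ` is uniform for every fixed tolerance below `1 / (2k(k - 1))`, which exceeds
`1 / (2k²)`, the precision parameter `μ` need not enter the construction.
-/

open MvPolynomial

section PolynomialMaps

variable {σ τ : Type*}

/-- The polynomial map `ℝ^σ → ℝ^τ` with components `p`; for `Fin`-indexed families it is `pEval`. -/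
def polyMap (p : τ → MvPolynomial σ ℝ) (x : σ → ℝ) : τ → ℝ :=
  fun i => eval x (p i)

lemma contDiff_polyMap [Fintype σ] [Fintype τ] (p : τ → MvPolynomial σ ℝ) :
    ContDiff ℝ 1 (polyMap p) :=
  contDiff_pi.2 fun i => (AnalyticOnNhd.eval_mvPolynomial (p i)).contDiff

lemma exists_polyMap_bound [Finite σ] [Fintype τ] (p : τ → MvPolynomial σ ℝ)
    {s : Set (σ → ℝ)} (hs : Bornology.IsBounded s) :
    ∃ K : ℝ, ∀ x ∈ s, ‖polyMap p x‖ ≤ K := by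
  cases nonempty_fintype σ
  obtain ⟨K, hK⟩ := hs.isCompact_closure.exists_bound_of_continuousOn
    (contDiff_polyMap p).continuous.continuousOn
  exact ⟨K, fun x hx => hK x (subset_closure hx)⟩

lemma exists_polyMap_lipschitz [Fintype σ] [Fintype τ] (p : τ → MvPolynomial σ ℝ)
    {s : Set (σ → ℝ)} (hs : Bornology.IsBounded s) :
    ∃ L : NNReal, LipschitzOnWith L (polyMap p) s := by
  obtain ⟨L, hL⟩ := (contDiff_polyMap p).locallyLipschitz.locallyLipschitzOn
    |>.exists_lipschitzOnWith_of_compact hs.isCompact_closure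
  exact ⟨L, hL.mono subset_closure⟩

lemma polyMap_rename {υ : Type*} (g : σ → υ) (p : τ → MvPolynomial σ ℝ) (x : υ → ℝ) :
    polyMap (fun i => rename g (p i)) x = polyMap p (x ∘ g) :=
  funext fun i => eval_rename g x (p i)

lemma eval_bind₁_eq {υ : Type*} (q : υ → MvPolynomial σ ℝ) (P : MvPolynomial υ ℝ) (x : σ → ℝ) :
    eval x (bind₁ q P) = eval (polyMap q x) P :=
  aeval_bind₁ x q P

/- `Q` is `P` with every coefficient replaced by its absolute value. -/
lemma exists_monotone_majorant (P : MvPolynomial σ ℝ) :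
    ∃ Q : MvPolynomial σ ℝ, ∀ x y : σ → ℝ, (∀ i, |x i| ≤ y i) → |eval x P| ≤ eval y Q := by
  induction P using MvPolynomial.induction_on with
  | C a => exact ⟨C |a|, fun x y _ => by simp only [eval_C, le_refl]⟩
  | add P₁ P₂ h₁ h₂ =>
    obtain ⟨Q₁, hQ₁⟩ := h₁
    obtain ⟨Q₂, hQ₂⟩ := h₂
    refine ⟨Q₁ + Q₂, fun x y hxy => ?_⟩
    simpa only [map_add] using
      (abs_add_le _ _).trans (add_le_add (hQ₁ x y hxy) (hQ₂ x y hxy))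
  | mul_X P i h =>
    obtain ⟨Q, hQ⟩ := h
    refine ⟨Q * X i, fun x y hxy => ?_⟩
    have hQxy := hQ x y hxy
    simpa only [map_mul, eval_X, abs_mul] using
      mul_le_mul hQxy (hxy i) (abs_nonneg _) ((abs_nonneg _).trans hQxy)

lemma exists_norm_polyMap_le [Fintype σ] [Fintype τ] (g : τ → MvPolynomial σ ℝ) :
    ∃ γ : MvPolynomial σ ℝ, ∀ (x : σ → ℝ) (r : ℝ), ‖x‖ ≤ r →
      ‖polyMap g x‖ ≤ eval (fun _ => r) γ := by
  choose G hG using fun i => exists_monotone_majorant (g i)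
  refine ⟨∑ i, G i, fun x r hx => ?_⟩
  have hle : ∀ i, |eval x (g i)| ≤ eval (fun _ => r) (G i) := fun i =>
    hG i x _ fun j => (norm_le_pi_norm x j).trans hx
  have hnonneg : ∀ i ∈ Finset.univ, 0 ≤ eval (fun _ => r) (G i) := fun i _ =>
    (abs_nonneg _).trans (hle i)
  rw [map_sum, pi_norm_le_iff_of_nonneg (Finset.sum_nonneg hnonneg)]
  exact fun i => (hle i).trans (Finset.single_le_sum hnonneg (Finset.mem_univ i))

/- `mkDerivation ℝ p` is the derivation with `X j ↦ p j`, i.e. the Lie derivative along `p`. -/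
lemma hasDerivAt_eval_mkDerivation {p : σ → MvPolynomial σ ℝ} {y : ℝ → σ → ℝ} {t : ℝ}
    (hy : ∀ j, HasDerivAt (fun s => y s j) (eval (y t) (p j)) t) (P : MvPolynomial σ ℝ) :
    HasDerivAt (fun s => eval (y s) P) (eval (y t) (mkDerivation ℝ p P)) t := by
  induction P using MvPolynomial.induction_on with
  | C a => simpa only [eval_C, derivation_C, map_zero] using hasDerivAt_const t a
  | add P Q hP hQ =>
    simp only [map_add]
    exact hP.add hQ
  | mul_X P i hP =>
    simp only [map_mul, eval_X]
    refine (hP.mul (hy i)).congr_deriv ?_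
    simp only [Derivation.leibniz, mkDerivation_X, smul_eq_mul, map_add, map_mul, eval_X]
    ring

end PolynomialMaps

section InitialValueProblems

variable {ι σ τ : Type*}

/-- `y` solves the polynomial initial value problem `y(0) = y₀`, `y' = p(y)` on `[0, ∞)`, for a
finite index type that need not be `Fin d`. -/
structure SolvesPIVP (p : ι → MvPolynomial ι ℝ) (y₀ : ι → ℝ) (y : ℝ → ι → ℝ) : Prop where
  init : y 0 = y₀
  hasDerivAt : ∀ t, 0 ≤ t → ∀ j, HasDerivAt (fun s => y s j) (eval (y t) (p j)) t

/-- The length of `y` on `[0, t]`, when `y' = p(y)`; for `Fin`-indexed systems it is `pLen`. -/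
def curveLength [Fintype ι] (p : ι → MvPolynomial ι ℝ) (y : ℝ → ι → ℝ) (t : ℝ) : ℝ :=
  ∫ s in (0 : ℝ)..t, ‖polyMap p (y s)‖

lemma curveLength_le [Fintype ι] {p : ι → MvPolynomial ι ℝ} {y : ℝ → ι → ℝ} {K t : ℝ}
    (ht : 0 ≤ t) (hK : ∀ s, 0 ≤ s → ‖polyMap p (y s)‖ ≤ K) : curveLength p y t ≤ K * t := by
  have hbound : ∀ s ∈ Set.uIoc 0 t, ‖‖polyMap p (y s)‖‖ ≤ K := fun s hs => by
    rw [Set.uIoc_of_le ht] at hs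
    simpa only [norm_norm] using hK s hs.1.le
  have := intervalIntegral.norm_integral_le_of_norm_le_const hbound
  rw [sub_zero, abs_of_nonneg ht] at this
  exact (le_abs_self _).trans this

lemma SolvesPIVP.le_curveLength [Fintype ι] {p : ι → MvPolynomial ι ℝ} {y₀ : ι → ℝ}
    {y : ℝ → ι → ℝ} {t : ℝ} (hy : SolvesPIVP p y₀ y) (ht : 0 ≤ t)
    (hspeed : ∀ s, 1 ≤ ‖polyMap p (y s)‖) : t ≤ curveLength p y t := by
  have hcont : ContinuousOn y (Set.uIcc 0 t) := fun s hs => by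
    rw [Set.uIcc_of_le ht] at hs
    exact (hasDerivAt_pi.2 (hy.hasDerivAt s hs.1)).continuousAt.continuousWithinAt
  have hint := ((contDiff_polyMap p).continuous.comp_continuousOn hcont).norm.intervalIntegrable
    (μ := MeasureTheory.volume)
  have hmono := intervalIntegral.integral_mono_on ht intervalIntegrable_const hint
    fun s _ => hspeed s
  rwa [intervalIntegral.integral_const, sub_zero, smul_eq_mul, mul_one] at hmono

/-- The system `p` transported along a bijection of its index type. -/
def reindexSystem (e : ι ≃ σ) (p : ι → MvPolynomial ι ℝ) : σ → MvPolynomial σ ℝ :=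
  fun i => rename e (p (e.symm i))

lemma polyMap_reindexSystem (e : ι ≃ σ) (p : ι → MvPolynomial ι ℝ) (x : ι → ℝ) :
    polyMap (reindexSystem e p) (x ∘ e.symm) = polyMap p x ∘ e.symm := by
  ext i
  simp only [polyMap, reindexSystem, eval_rename, Function.comp_assoc, e.symm_comp_self,
    Function.comp_id, Function.comp_apply]

lemma curveLength_reindexSystem [Fintype ι] [Fintype σ] (e : ι ≃ σ) (p : ι → MvPolynomial ι ℝ)
    (y : ℝ → ι → ℝ) (t : ℝ) :
    curveLength (reindexSystem e p) (fun s => y s ∘ e.symm) t = curveLength p y t := by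
  simp only [curveLength, polyMap_reindexSystem, e.symm.surjective.pi_norm_comp]

lemma SolvesPIVP.reindex {p : ι → MvPolynomial ι ℝ} {y₀ : ι → ℝ} {y : ℝ → ι → ℝ}
    (hy : SolvesPIVP p y₀ y) (e : ι ≃ σ) :
    SolvesPIVP (reindexSystem e p) (y₀ ∘ e.symm) (fun t => y t ∘ e.symm) where
  init := by rw [hy.init]
  hasDerivAt t ht j := (hy.hasDerivAt t ht (e.symm j)).congr_deriv
    (congrFun (polyMap_reindexSystem e p (y t)) j).symm

/-- The system `p` together with a clock, the coordinate `none`, that runs at unit speed. -/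
def clockSystem (p : ι → MvPolynomial ι ℝ) : Option ι → MvPolynomial (Option ι) ℝ
  | none => 1
  | some j => rename some (p j)

lemma polyMap_clockSystem (p : ι → MvPolynomial ι ℝ) (x : Option ι → ℝ) :
    polyMap (clockSystem p) x = fun o => o.elim 1 (polyMap p (x ∘ some)) := by
  ext (_ | j)
  · simp only [polyMap, clockSystem, map_one, Option.elim_none]
  · simp only [polyMap, clockSystem, eval_rename, Option.elim_some]

lemma one_le_norm_polyMap_clockSystem [Fintype ι] (p : ι → MvPolynomial ι ℝ) (x : Option ι → ℝ) :
    1 ≤ ‖polyMap (clockSystem p) x‖ := by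
  simpa only [polyMap_clockSystem, Option.elim_none, norm_one]
    using norm_le_pi_norm (polyMap (clockSystem p) x) none

lemma norm_polyMap_clockSystem_le [Fintype ι] (p : ι → MvPolynomial ι ℝ) (x : Option ι → ℝ) :
    ‖polyMap (clockSystem p) x‖ ≤ max ‖polyMap p (x ∘ some)‖ 1 := by
  rw [polyMap_clockSystem, pi_norm_le_iff_of_nonneg (le_max_of_le_right zero_le_one)]
  rintro (_ | j)
  · simp only [Option.elim_none, norm_one, le_max_right]
  · exact (norm_le_pi_norm (polyMap p (x ∘ some)) j).trans (le_max_left _ _)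

lemma SolvesPIVP.clock {p : ι → MvPolynomial ι ℝ} {y₀ : ι → ℝ} {y : ℝ → ι → ℝ}
    (hy : SolvesPIVP p y₀ y) :
    SolvesPIVP (clockSystem p) (fun o => o.elim 0 y₀) (fun t o => o.elim t (y t)) where
  init := by rw [hy.init]
  hasDerivAt
    | t, _, none => by simpa only [clockSystem, map_one, Option.elim_none] using hasDerivAt_id' t
    | t, ht, some j => by
      simp only [clockSystem, eval_rename]
      exact hy.hasDerivAt t ht j

/-- The system `p` together with coordinates that follow the polynomials `H` of its state. -/
def outputSystem (p : ι → MvPolynomial ι ℝ) (H : τ → MvPolynomial ι ℝ) :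
    τ ⊕ ι → MvPolynomial (τ ⊕ ι) ℝ :=
  fun j => rename Sum.inr (Sum.elim (fun i => mkDerivation ℝ p (H i)) p j)

lemma SolvesPIVP.output {p : ι → MvPolynomial ι ℝ} {y₀ : ι → ℝ} {y : ℝ → ι → ℝ}
    (hy : SolvesPIVP p y₀ y) (H : τ → MvPolynomial ι ℝ) :
    SolvesPIVP (outputSystem p H) (Sum.elim (polyMap H y₀) y₀)
      (fun t => Sum.elim (polyMap H (y t)) (y t)) where
  init := by rw [hy.init]
  hasDerivAt t ht j := by
    simp only [outputSystem, eval_rename, Sum.elim_comp_inr]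
    cases j with
    | inl i => exact hasDerivAt_eval_mkDerivation (hy.hasDerivAt t ht) (H i)
    | inr j => exact hy.hasDerivAt t ht j

end InitialValueProblems

lemma exists_equiv_fin_extending {m : ℕ} {ι : Type*} [Finite ι] (o : Fin m ↪ ι) :
    ∃ (d : ℕ) (hd : m ≤ d) (e : ι ≃ Fin d), ∀ i, e.symm (Fin.castLE hd i) = o i := by
  classical
  cases nonempty_fintype ι
  let e : Fin (m + Fintype.card ↥(Set.range o)ᶜ) ≃ ι :=
    finSumFinEquiv.symm.trans <|
      ((Equiv.ofInjective o o.injective).sumCongr (Fintype.equivFin _).symm).trans <|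
        Equiv.Set.sumCompl (Set.range o)
  refine ⟨_, Nat.le_add_right _ _, e.symm, fun i => ?_⟩
  change e (Fin.castAdd _ i) = o i
  simp only [e, Equiv.trans_apply, finSumFinEquiv_symm_apply_castAdd, Equiv.sumCongr_apply,
    Sum.map_inl, Equiv.Set.sumCompl_apply_inl, Equiv.ofInjective_apply]

lemma IsPolyFun2.exists_comp_majorant {Ω : ℝ → ℝ → ℝ} (hΩ : IsPolyFun2 Ω) {σ : Type*}
    [Fintype σ] {τ : Type*} [Fintype τ] (g : τ → MvPolynomial σ ℝ) :
    ∃ Ω' : ℝ → ℝ → ℝ, IsPolyFun2 Ω' ∧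
      ∀ (x : σ → ℝ) (b : ℝ), 0 ≤ b → Ω ‖polyMap g x‖ b ≤ Ω' ‖x‖ b := by
  obtain ⟨⟨P, hP⟩, -⟩ := hΩ
  obtain ⟨Q, hQ⟩ := exists_monotone_majorant P
  obtain ⟨γ, hγ⟩ := exists_norm_polyMap_le g
  have hmajorant : ∀ x r b, ‖x‖ ≤ r → 0 ≤ b →
      |eval ![‖polyMap g x‖, b] P| ≤ eval ![eval (fun _ => r) γ, b] Q := fun x r b hx hb =>
    hQ _ _ <| Fin.forall_fin_two.2 ⟨(abs_norm _).trans_le (hγ x r hx), (abs_of_nonneg hb).le⟩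
  refine ⟨fun a b => eval ![eval (fun _ => a) γ, b] Q,
    ⟨⟨bind₁ ![rename (fun _ => 0) γ, X 1] Q, fun a b => ?_⟩, fun a b ha hb => ?_⟩,
    fun x b hb => ?_⟩
  · have hpoint : polyMap ![rename (fun _ => 0) γ, X 1] ![a, b] = ![eval (fun _ => a) γ, b] :=
      funext <| Fin.forall_fin_two.2 ⟨eval_rename _ _ γ, eval_X 1⟩
    rw [eval_bind₁_eq, hpoint]
  · exact (abs_nonneg _).trans (hmajorant 0 a b (norm_zero.trans_le ha) hb)
  · exact (hP _ _).trans_le <| (le_abs_self _).trans (hmajorant x ‖x‖ b le_rfl hb)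

namespace AP

variable {l m n : ℕ} {dom : Set (Fin n → ℝ)} {f : (Fin n → ℝ) → Fin m → ℝ}

lemma mono {dom' : Set (Fin n → ℝ)} (hf : AP dom f) (h : dom' ⊆ dom) : AP dom' f := by
  obtain ⟨d, hd, p, q, Ω, hΩ, hsol⟩ := hf
  exact ⟨d, hd, p, q, Ω, hΩ, fun x hx => hsol x (h hx)⟩

theorem comp_pEval (hf : AP dom f) (g : Fin n → MvPolynomial (Fin l) ℝ) :
    AP (pEval g ⁻¹' dom) (f ∘ pEval g) := by
  obtain ⟨d, hd, p, q, Ω, hΩ, hsol⟩ := hf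
  obtain ⟨Ω', hΩ', hle⟩ := hΩ.exists_comp_majorant g
  refine ⟨d, hd, p, fun i => bind₁ g (q i), Ω', hΩ', fun x hx => ?_⟩
  obtain ⟨y, hinit, hderiv, hconv, hlen⟩ := hsol (pEval g x) hx
  refine ⟨y, ?_, hderiv, fun t ht μ hμ hΩt => hconv t ht μ hμ ((hle x μ hμ).trans hΩt), hlen⟩
  exact hinit.trans (funext fun i => (eval_bind₁_eq g (q i) x).symm)

lemma comp_init (hf : AP dom f) :
    AP (Fin.init ⁻¹' dom) (f ∘ (Fin.init : (Fin (n + 1) → ℝ) → Fin n → ℝ)) := by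
  have hinit : pEval (fun i : Fin n => X i.castSucc) = Fin.init :=
    funext₂ fun x i => eval_X (f := x) i.castSucc
  exact hinit ▸ hf.comp_pEval fun i => X i.castSucc

variable {ι : Type*} [Fintype ι]

theorem of_fintype_index (o : Fin m ↪ ι) (p : ι → MvPolynomial ι ℝ)
    (q : ι → MvPolynomial (Fin n) ℝ) {Ω : ℝ → ℝ → ℝ} (hΩ : IsPolyFun2 Ω)
    (h : ∀ x ∈ dom, ∃ y, SolvesPIVP p (polyMap q x) y ∧
      (∀ t, 0 ≤ t → ∀ μ, 0 ≤ μ → Ω ‖x‖ μ ≤ curveLength p y t →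
        ‖y t ∘ o - f x‖ ≤ Real.exp (-μ)) ∧
      ∀ t, 0 ≤ t → t ≤ curveLength p y t) : AP dom f := by
  obtain ⟨d, hd, e, he⟩ := exists_equiv_fin_extending o
  refine ⟨d, hd, reindexSystem e p, fun i => q (e.symm i), Ω, hΩ, fun x hx => ?_⟩
  obtain ⟨y, hy, hconv, hlen⟩ := h x hx
  have hlength := curveLength_reindexSystem e p y
  have houtput : ∀ t, (fun i => (y t ∘ e.symm) (Fin.castLE hd i)) = y t ∘ o := fun t =>
    funext fun i => congrArg (y t) (he i)
  refine ⟨fun t => y t ∘ e.symm, (hy.reindex e).init,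
    fun t ht => hasDerivAt_pi.2 ((hy.reindex e).hasDerivAt t ht),
    fun t ht μ hμ hΩt => ?_, fun t ht => (hlen t ht).trans_eq (hlength t).symm⟩
  rw [houtput]
  exact hconv t ht μ hμ (hΩt.trans_eq (hlength t))

theorem of_bounded_speed (o : Fin m ↪ ι) (p : ι → MvPolynomial ι ℝ)
    (q : ι → MvPolynomial (Fin n) ℝ) (K T : ℝ)
    (h : ∀ x ∈ dom, ∃ y, SolvesPIVP p (polyMap q x) y ∧
      (∀ t, 0 ≤ t → ‖polyMap p (y t)‖ ≤ K) ∧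
      ∀ t, 0 ≤ t → ‖y t ∘ o - f x‖ ≤ Real.exp (T - t)) : AP dom f := by
  have hmax : 0 < max K 1 := lt_max_of_lt_right one_pos
  have hΩ : IsPolyFun2 fun _ b => max K 1 * (|T| + b) :=
    ⟨⟨C (max K 1) * (C |T| + X 1), fun a b => by simp⟩, fun a b _ hb => by positivity⟩
  refine of_fintype_index (o.trans Function.Embedding.some) (clockSystem p)
    (fun j => j.elim 0 q) hΩ fun x hx => ?_
  obtain ⟨y, hy, hspeed, hconv⟩ := h x hx
  refine ⟨fun t j => j.elim t (y t), ?_, fun t ht μ _ hlen => ?_, fun t ht =>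
    hy.clock.le_curveLength ht fun _ => one_le_norm_polyMap_clockSystem _ _⟩
  · convert hy.clock using 1
    ext (_ | j)
    · exact map_zero _
    · rfl
  · have hlength : curveLength (clockSystem p) (fun t j => j.elim t (y t)) t ≤ max K 1 * t :=
      curveLength_le ht fun s hs =>
        (norm_polyMap_clockSystem_le _ _).trans (max_le_max_right _ (hspeed s hs))
    have htime : |T| + μ ≤ t := le_of_mul_le_mul_left (hlen.trans hlength) hmax
    exact (hconv t ht).trans (Real.exp_le_exp.2 (by linarith [le_abs_self T]))

theorem of_exponential_convergence (p : ι → MvPolynomial ι ℝ) (q : ι → MvPolynomial (Fin n) ℝ)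
    (H : Fin m → MvPolynomial ι ℝ) (B A : ℝ)
    (h : ∀ x ∈ dom, ∃ y yₗ, SolvesPIVP p (polyMap q x) y ∧ ‖yₗ‖ ≤ B ∧
      (∀ t, 0 ≤ t → ‖y t - yₗ‖ ≤ A * Real.exp (-t)) ∧ f x = polyMap H yₗ) : AP dom f := by
  let ball := Metric.closedBall (0 : ι → ℝ) (B + A)
  have hball : Bornology.IsBounded ball := Metric.isBounded_closedBall
  obtain ⟨L, hL⟩ := exists_polyMap_lipschitz H hball
  obtain ⟨K, hK⟩ := exists_polyMap_bound
    (Sum.elim (fun i => mkDerivation ℝ p (H i)) p) hball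
  refine of_bounded_speed Function.Embedding.inl (outputSystem p H)
    (Sum.elim (fun i => bind₁ q (H i)) q) K (L * A) fun x hx => ?_
  obtain ⟨y, yₗ, hy, hB, hA, hf⟩ := h x hx
  have hA0 : 0 ≤ A := by simpa using (norm_nonneg _).trans (hA 0 le_rfl)
  have hyball : ∀ t, 0 ≤ t → y t ∈ ball := fun t ht => by
    have hexp : A * Real.exp (-t) ≤ A :=
      mul_le_of_le_one_right hA0 (Real.exp_le_one_iff.2 (neg_nonpos.2 ht))
    rw [mem_closedBall_zero_iff]
    exact (norm_le_norm_add_norm_sub' (y t) yₗ).trans (add_le_add hB ((hA t ht).trans hexp))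
  have hlimball : yₗ ∈ ball := mem_closedBall_zero_iff.2 (hB.trans (le_add_of_nonneg_right hA0))
  refine ⟨fun t => Sum.elim (polyMap H (y t)) (y t), ?_, fun t ht => ?_, fun t ht => ?_⟩
  · convert hy.output H using 1
    ext (i | j)
    · exact eval_bind₁_eq q (H i) x
    · rfl
  · have hfield : polyMap (outputSystem p H) (Sum.elim (polyMap H (y t)) (y t)) =
        polyMap (Sum.elim (fun i => mkDerivation ℝ p (H i)) p) (y t) := polyMap_rename _ _ _
    exact hfield ▸ hK _ (hyball t ht)
  · calc ‖polyMap H (y t) - f x‖ = ‖polyMap H (y t) - polyMap H yₗ‖ := by rw [hf]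
      _ ≤ L * ‖y t - yₗ‖ := hL.norm_sub_le (hyball t ht) hlimball
      _ ≤ L * (A * Real.exp (-t)) := by gcongr; exact hA t ht
      _ = L * A * Real.exp (-t) := (mul_assoc _ _ _).symm
      _ ≤ Real.exp (L * A) * Real.exp (-t) := by
        gcongr
        exact (le_add_of_nonneg_right zero_le_one).trans (Real.add_one_le_exp _)
      _ = Real.exp (L * A - t) := by rw [← Real.exp_add, sub_eq_add_neg]

end AP

section SignFlow

open Real

/-- The value at time `t` of the solution of `u' = u - u ^ 3` with `u(0) = a`. -/
def signFlow (a t : ℝ) : ℝ :=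
  a * exp t / √(1 + a ^ 2 * (exp (2 * t) - 1))

lemma signFlow_zero (a : ℝ) : signFlow a 0 = a := by
  simp [signFlow]

lemma signFlow_radicand_pos (a : ℝ) {t : ℝ} (ht : 0 ≤ t) :
    0 < 1 + a ^ 2 * (exp (2 * t) - 1) := by
  have : 0 ≤ exp (2 * t) - 1 := sub_nonneg.2 (one_le_exp (by positivity))
  positivity

lemma exp_two_mul_eq_sq (t : ℝ) : exp (2 * t) = exp t ^ 2 := by
  rw [sq, ← exp_add, two_mul]

lemma hasDerivAt_signFlow (a : ℝ) {t : ℝ} (ht : 0 ≤ t) :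
    HasDerivAt (signFlow a) (signFlow a t - signFlow a t ^ 3) t := by
  have hpos := signFlow_radicand_pos a ht
  have hradicand : HasDerivAt (fun s => 1 + a ^ 2 * (exp (2 * s) - 1))
      (a ^ 2 * (exp (2 * t) * 2)) t := by
    simpa using ((((hasDerivAt_id t).const_mul 2).exp.sub_const 1).const_mul (a ^ 2)).const_add 1
  refine (((hasDerivAt_exp t).const_mul a).div (hradicand.sqrt hpos.ne')
    (sqrt_pos.2 hpos).ne').congr_deriv ?_
  have hsq := sq_sqrt hpos.le
  have hsqrt := sqrt_pos.2 hpos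
  unfold signFlow
  set S := √(1 + a ^ 2 * (exp (2 * t) - 1))
  rw [exp_two_mul_eq_sq] at hsq ⊢
  field_simp

lemma signFlow_sq_sub_one (a : ℝ) {t : ℝ} (ht : 0 ≤ t) :
    signFlow a t ^ 2 - 1 = (a ^ 2 - 1) / (1 + a ^ 2 * (exp (2 * t) - 1)) := by
  have hpos := signFlow_radicand_pos a ht
  rw [signFlow, div_pow, sq_sqrt hpos.le, mul_pow, ← exp_two_mul_eq_sq, div_sub_one hpos.ne']
  ring

lemma signFlow_mul_sign_nonneg (a t : ℝ) : 0 ≤ signFlow a t * SignType.sign a := by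
  rw [signFlow, div_mul_eq_mul_div, mul_right_comm, self_mul_sign]
  positivity

lemma abs_sub_le_abs_sq_sub_one {u s : ℝ} (hs : s ^ 2 = 1) (hus : 0 ≤ u * s) :
    |u - s| ≤ |u ^ 2 - 1| := by
  have hadd : 1 ≤ |u + s| := (one_le_sq_iff_one_le_abs _).1 (by nlinarith [sq_nonneg u])
  calc |u - s| ≤ |u + s| * |u - s| := le_mul_of_one_le_left (abs_nonneg _) hadd
    _ = |u ^ 2 - 1| := by rw [← abs_mul, ← sq_sub_sq, hs]

lemma abs_sub_one_div_le {b E : ℝ} (hb : 0 < b) (hE : 1 ≤ E) :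
    |b - 1| / (1 + b * (E - 1)) ≤ (b + b⁻¹) / E := by
  have hinv : 0 < b⁻¹ := inv_pos.2 hb
  have hmul : b * b⁻¹ = 1 := mul_inv_cancel₀ hb.ne'
  have hlinear : |b - 1| ≤ b + b⁻¹ := abs_le.2 ⟨by nlinarith [sq_nonneg (b - 1)], by linarith⟩
  have hquadratic : |b - 1| ≤ b ^ 2 + 1 := abs_le.2 ⟨by nlinarith, by nlinarith [sq_nonneg (b - 1)]⟩
  have hden : 0 < 1 + b * (E - 1) := by nlinarith
  rw [div_le_div_iff₀ hden (by linarith)]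
  calc |b - 1| * E = |b - 1| + |b - 1| * (E - 1) := by ring
    _ ≤ (b + b⁻¹) + (b ^ 2 + 1) * (E - 1) :=
        add_le_add hlinear (mul_le_mul_of_nonneg_right hquadratic (sub_nonneg.2 hE))
    _ = (b + b⁻¹) * (1 + b * (E - 1)) := by linear_combination (1 - E) * hmul

lemma abs_signFlow_sub_sign_le {a t : ℝ} (ha : a ≠ 0) (ht : 0 ≤ t) :
    |signFlow a t - SignType.sign a| ≤ (a ^ 2 + (a ^ 2)⁻¹) * exp (-(2 * t)) := by
  have hsign : (SignType.sign a : ℝ) ^ 2 = 1 := by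
    rcases ha.lt_or_gt with h | h <;> simp [h]
  have hexp : 1 ≤ exp (2 * t) := one_le_exp (by positivity)
  calc |signFlow a t - SignType.sign a| ≤ |signFlow a t ^ 2 - 1| :=
        abs_sub_le_abs_sq_sub_one hsign (signFlow_mul_sign_nonneg a t)
    _ = |a ^ 2 - 1| / (1 + a ^ 2 * (exp (2 * t) - 1)) := by
        rw [signFlow_sq_sub_one a ht, abs_div, abs_of_pos (signFlow_radicand_pos a ht)]
    _ ≤ (a ^ 2 + (a ^ 2)⁻¹) / exp (2 * t) := abs_sub_one_div_le (by positivity) hexp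
    _ = (a ^ 2 + (a ^ 2)⁻¹) * exp (-(2 * t)) := by rw [exp_neg, div_eq_mul_inv]

lemma abs_signFlow_sub_sign_le_of_mem {δ A a t : ℝ} (hδ : 0 < δ) (hδa : δ ≤ |a|) (haA : |a| ≤ A)
    (ht : 0 ≤ t) :
    |signFlow a t - SignType.sign a| ≤ (A ^ 2 + (δ ^ 2)⁻¹) * exp (-t) := by
  have ha : a ≠ 0 := abs_pos.1 (hδ.trans_le hδa)
  refine (abs_signFlow_sub_sign_le ha ht).trans ?_
  rw [← sq_abs a]
  gcongr
  linarith

/-- The system that keeps the coordinates in `σ` constant and lets those in `ι` follow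
`u' = u - u ^ 3`. -/
def signSystem (σ ι : Type*) : σ ⊕ ι → MvPolynomial (σ ⊕ ι) ℝ :=
  Sum.elim 0 fun j => X (Sum.inr j) - X (Sum.inr j) ^ 3

lemma solvesPIVP_signSystem {σ ι : Type*} (x : σ → ℝ) (a : ι → ℝ) :
    SolvesPIVP (signSystem σ ι) (Sum.elim x a)
      (fun t => Sum.elim x fun j => signFlow (a j) t) where
  init := by simp only [signFlow_zero]
  hasDerivAt
    | t, _, .inl i => by
      simpa only [signSystem, Sum.elim_inl, Pi.zero_apply, map_zero] using hasDerivAt_const t (x i)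
    | t, ht, .inr j => by
      simpa only [signSystem, Sum.elim_inr, map_sub, map_pow, eval_X]
        using hasDerivAt_signFlow (a j) ht

end SignFlow

namespace AP

variable {m n : ℕ} {dom : Set (Fin n → ℝ)} {ι : Type*} [Finite ι]

theorem polyMap_sign (hdom : Bornology.IsBounded dom) (a : ι → MvPolynomial (Fin n) ℝ) {δ : ℝ}
    (hδ : 0 < δ) (ha : ∀ x ∈ dom, ∀ j, δ ≤ |eval x (a j)|)
    (H : Fin m → MvPolynomial (Fin n ⊕ ι) ℝ) :
    AP dom fun x => polyMap H (Sum.elim x fun j => (SignType.sign (eval x (a j)) : ℝ)) := by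
  cases nonempty_fintype ι
  obtain ⟨R, hR⟩ := hdom.exists_norm_le
  obtain ⟨A, hA⟩ := exists_polyMap_bound a hdom
  refine of_exponential_convergence (signSystem (Fin n) ι) (Sum.elim X a) H (max R 1)
    (A ^ 2 + (δ ^ 2)⁻¹) fun x hx =>
      ⟨fun t => Sum.elim x fun j => signFlow (eval x (a j)) t, _, ?_, ?_, fun t ht => ?_, rfl⟩
  · have hinit : polyMap (Sum.elim X a) x = Sum.elim x (polyMap a x) := by
      ext (i | j)
      · exact eval_X i
      · rfl
    exact hinit ▸ solvesPIVP_signSystem x (polyMap a x)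
  · rw [pi_norm_le_iff_of_nonneg (le_max_of_le_right zero_le_one)]
    rintro (i | j)
    · exact (norm_le_pi_norm x i).trans ((hR x hx).trans (le_max_left _ _))
    · refine le_max_of_le_right ?_
      rw [Sum.elim_inr]
      cases SignType.sign (eval x (a j)) <;> simp
  · rw [pi_norm_le_iff_of_nonneg (by positivity)]
    rintro (i | j)
    · simp only [Pi.sub_apply, Sum.elim_inl, sub_self, norm_zero]
      positivity
    · exact abs_signFlow_sub_sign_le_of_mem hδ (ha x hx j)
        ((norm_le_pi_norm (polyMap a x) j).trans (hA x hx)) ht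

end AP

section IntegerCells

lemma le_abs_sub_intCast {v δ : ℝ} {d : ℤ} (hv : v ∈ Set.Icc (d + δ) (d + 1 - δ)) (e : ℤ) :
    δ ≤ |v - e| := by
  rcases le_or_gt e d with h | h
  · have : (e : ℝ) ≤ d := by exact_mod_cast h
    exact le_abs.2 (.inl (by linarith [hv.1]))
  · have : (d : ℝ) + 1 ≤ e := by exact_mod_cast h
    exact le_abs.2 (.inr (by linarith [hv.2]))

lemma sign_indicator_intCast {v : ℝ} {d : ℤ} (hv : v ∈ Set.Ioo (d : ℝ) (d + 1)) (e : ℤ) :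
    1 / 4 * ((1 + (SignType.sign (v - e) : ℝ)) * (1 - (SignType.sign (v - (e + 1)) : ℝ))) =
      if e = d then 1 else 0 := by
  obtain ⟨hdv, hvd⟩ := hv
  rcases lt_trichotomy e d with h | rfl | h
  · have : (e : ℝ) + 1 ≤ d := by exact_mod_cast h
    simp [sign_pos (a := v - (e + 1)) (by linarith), h.ne]
  · rw [sign_pos (by linarith), sign_neg (by linarith)]
    norm_num
  · have : (d : ℝ) + 1 ≤ e := by exact_mod_cast h
    simp [sign_neg (a := v - e) (by linarith), h.ne']

variable {m n : ℕ} {ι S : Type*} [Fintype ι]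

/-- The differences of the coordinates `v i` to the lower ends `D s i` and to the upper ends
`D s i + 1` of all cells. -/
def cellThresholds (v : ι → MvPolynomial (Fin n) ℝ) (D : S → ι → ℤ) :
    (S × ι) ⊕ (S × ι) → MvPolynomial (Fin n) ℝ :=
  Sum.elim (fun si => v si.2 - C (D si.1 si.2 : ℝ)) (fun si => v si.2 - C (D si.1 si.2 + 1 : ℝ))

/-- The indicator of the cell `s` as a polynomial in the signs of `cellThresholds`. -/
def cellIndicator (n : ℕ) (s : S) : MvPolynomial (Fin n ⊕ ((S × ι) ⊕ (S × ι))) ℝ :=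
  ∏ i : ι, C (1 / 4) * ((1 + X (.inr (.inl (s, i)))) * (1 - X (.inr (.inr (s, i)))))

/-- The polynomials that select the map `G s` in the cell `s`. -/
def cellSelector [Fintype S] (ι : Type*) [Fintype ι] (G : S → Fin m → MvPolynomial (Fin n) ℝ)
    (j : Fin m) : MvPolynomial (Fin n ⊕ ((S × ι) ⊕ (S × ι))) ℝ :=
  ∑ s, cellIndicator n s * rename .inl (G s j)

/-- A point together with the signs of `cellThresholds` there. -/
def cellState (v : ι → MvPolynomial (Fin n) ℝ) (D : S → ι → ℤ) (x : Fin n → ℝ) :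
    Fin n ⊕ ((S × ι) ⊕ (S × ι)) → ℝ :=
  Sum.elim x fun j => (SignType.sign (eval x (cellThresholds v D j)) : ℝ)

variable {v : ι → MvPolynomial (Fin n) ℝ} {D : S → ι → ℤ}

lemma eval_cellIndicator [DecidableEq S] (hD : Function.Injective D) {x : Fin n → ℝ} {s : S}
    (hx : ∀ i, eval x (v i) ∈ Set.Ioo (D s i : ℝ) (D s i + 1)) (s' : S) :
    eval (cellState v D x) (cellIndicator n s') = if s' = s then 1 else 0 := by
  have hfactor : eval (cellState v D x) (cellIndicator n s') =
      ∏ i, if D s' i = D s i then (1 : ℝ) else 0 := by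
    rw [cellIndicator, map_prod]
    refine Finset.prod_congr rfl fun i _ => ?_
    rw [← sign_indicator_intCast (hx i)]
    simp [cellState, cellThresholds]
  rw [hfactor, Fintype.prod_boole]
  exact if_congr (funext_iff.symm.trans hD.eq_iff) rfl rfl

lemma polyMap_cellSelector [Fintype S] (hD : Function.Injective D)
    (G : S → Fin m → MvPolynomial (Fin n) ℝ) {x : Fin n → ℝ} {s : S}
    (hx : ∀ i, eval x (v i) ∈ Set.Ioo (D s i : ℝ) (D s i + 1)) :
    polyMap (cellSelector ι G) (cellState v D x) = pEval (G s) x := by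
  classical
  ext j
  simp only [polyMap, cellSelector, map_sum, map_mul, eval_cellIndicator hD hx, ite_mul, one_mul,
    zero_mul, Finset.sum_ite_eq', Finset.mem_univ, if_true]
  exact eval_rename _ _ _

end IntegerCells

/- The signs of the thresholds are locally constant, so `f` may switch between the maps `G s`. -/
theorem AP.exists_eq_on_integer_cells {m n : ℕ} {ι S : Type*} [Finite ι] [Finite S]
    {dom : Set (Fin n → ℝ)} (hdom : Bornology.IsBounded dom) {v : ι → MvPolynomial (Fin n) ℝ}
    {D : S → ι → ℤ} (hD : Function.Injective D)
    (G : S → Fin m → MvPolynomial (Fin n) ℝ) {δ : ℝ} (hδ : 0 < δ)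
    (hcell : ∀ x ∈ dom, ∃ s, ∀ i, eval x (v i) ∈ Set.Icc (D s i + δ) (D s i + 1 - δ)) :
    ∃ f, AP dom f ∧ ∀ s x, (∀ i, eval x (v i) ∈ Set.Icc (D s i + δ) (D s i + 1 - δ)) →
      f x = pEval (G s) x := by
  cases nonempty_fintype ι
  cases nonempty_fintype S
  have hsep : ∀ x ∈ dom, ∀ j, δ ≤ |eval x (cellThresholds v D j)| := fun x hx j => by
    obtain ⟨s, hs⟩ := hcell x hx
    rcases j with ⟨s', i⟩ | ⟨s', i⟩
    · simpa [cellThresholds] using le_abs_sub_intCast (hs i) (D s' i)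
    · simpa [cellThresholds] using le_abs_sub_intCast (hs i) (D s' i + 1)
  exact ⟨_, AP.polyMap_sign hdom _ hδ hsep (cellSelector ι G), fun s x hx =>
    polyMap_cellSelector hD G fun i => Set.Icc_subset_Ioo (by linarith) (by linarith) (hx i)⟩

section TuringMachines

variable {k : ℕ}

/-- The first symbol of a half tape; an exhausted half tape continues with the blank `0`. -/
def firstSymbol (hk : 2 ≤ k) (w : List (Fin (k - 1))) : Fin (k - 1) :=
  w.headD ⟨0, by omega⟩

lemma mul_encWord (hk : 2 ≤ k) (w : List (Fin (k - 1))) :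
    k * encWord k w = (firstSymbol hk w : ℕ) + encWord k w.tail := by
  have hk0 : (k : ℝ) ≠ 0 := by positivity
  cases w with
  | nil => simp [firstSymbol, encWord]
  | cons a w => exact mul_div_cancel₀ _ hk0

lemma encWord_nonneg (w : List (Fin (k - 1))) : 0 ≤ encWord k w := by
  induction w with
  | nil => exact le_rfl
  | cons a w ih => exact div_nonneg (add_nonneg a.val.cast_nonneg ih) k.cast_nonneg

lemma encWord_le (hk : 2 ≤ k) (w : List (Fin (k - 1))) : encWord k w ≤ 1 - 1 / (k - 1) := by
  have hk1 : (0 : ℝ) < k - 1 := sub_pos.2 (Nat.one_lt_cast.2 hk)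
  induction w with
  | nil =>
    have : (2 : ℝ) ≤ k := Nat.ofNat_le_cast.2 hk
    rw [encWord, sub_nonneg, div_le_one hk1]
    linarith
  | cons a w ih =>
    have ha : (a : ℝ) + 2 ≤ k := by exact_mod_cast (by omega : (a : ℕ) + 2 ≤ k)
    have hfixed : (1 - 1 / ((k : ℝ) - 1)) * k = k - 2 + (1 - 1 / (k - 1)) := by
      field_simp
      ring
    rw [encWord, div_le_iff₀ (by linarith), hfixed]
    linarith

lemma isBounded_encConfig (hk : 2 ≤ k) (M : TM k) :
    Bornology.IsBounded (encConfig k '' {c | c.2.2.2 ∈ M.states}) := by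
  refine (Metric.isBounded_Icc 0 ![1, (k : ℝ), 1, (M.states.sup id : ℕ)]).subset ?_
  rintro _ ⟨c, hc, rfl⟩
  have hk1 : (0 : ℝ) < k - 1 := sub_pos.2 (Nat.one_lt_cast.2 hk)
  have hword : ∀ w, encWord k w ≤ 1 := fun w =>
    (encWord_le hk w).trans (sub_le_self _ (by positivity))
  have hsymbol : ((c.2.1 : ℕ) : ℝ) ≤ k := Nat.cast_le.2 (by omega)
  have hstate : (c.2.2.2 : ℝ) ≤ (M.states.sup id : ℕ) := Nat.cast_le.2 (Finset.le_sup (f := id) hc)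
  constructor <;> intro i <;> fin_cases i
  exacts [encWord_nonneg _, Nat.cast_nonneg _, encWord_nonneg _, Nat.cast_nonneg _,
    hword _, hsymbol, hword _, hstate]

namespace TM

/-- What one step of `M` depends on: the symbols to the left of the head, under the head and to the
right of the head, and the state. -/
abbrev LocalView (M : TM k) : Type :=
  Fin (k - 1) × Fin (k - 1) × Fin (k - 1) × M.states

variable {M : TM k}

/-- The local view of a configuration. -/
def localView (hk : 2 ≤ k) (c : TMConfig k) (hc : c.2.2.2 ∈ M.states) : M.LocalView :=
  (firstSymbol hk c.1, c.2.1, firstSymbol hk c.2.2.1, ⟨c.2.2.2, hc⟩)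

/-- A local view as a vector of integers. -/
def LocalView.digits (s : M.LocalView) : Fin 4 → ℤ :=
  ![(s.1 : ℕ), (s.2.1 : ℕ), (s.2.2.1 : ℕ), (s.2.2.2 : ℕ)]

lemma LocalView.digits_injective : Function.Injective (digits (M := M)) := by
  rintro ⟨a, b, c, q⟩ ⟨a', b', c', q'⟩ h
  simpa [digits, Fin.val_inj, Subtype.val_inj] using h

end TM

/-- The coordinates of a perturbed encoding, rescaled so that their integer parts are the digits of
the local view. As `encWord` stays `1 / (k - 1)` below `1`, shifting by half of this gap leaves
equal room for errors on both sides. -/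
def digitCoord (k : ℕ) : Fin 4 → MvPolynomial (Fin 4) ℝ :=
  ![C (k : ℝ) * X 0 + C (1 / (2 * ((k : ℝ) - 1))), X 1 + C (1 / 2),
    C (k : ℝ) * X 2 + C (1 / (2 * ((k : ℝ) - 1))), X 3 + C (1 / 2)]

lemma mul_add_mem_Icc_firstSymbol (hk : 2 ≤ k) {w : List (Fin (k - 1))} {z ε : ℝ}
    (hz : |encWord k w - z| ≤ ε) :
    k * z + 1 / (2 * (k - 1)) ∈ Set.Icc ((firstSymbol hk w : ℕ) + (1 / (2 * (k - 1)) - k * ε))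
      ((firstSymbol hk w : ℕ) + 1 - (1 / (2 * (k - 1)) - k * ε)) := by
  have hscaled : |(k : ℝ) * encWord k w - k * z| ≤ k * ε := by
    rw [← mul_sub, abs_mul, Nat.abs_cast]
    gcongr
  have hgap : 1 / ((k : ℝ) - 1) = 2 * (1 / (2 * (k - 1))) := by field_simp
  have hnonneg := encWord_nonneg w.tail
  have hle := encWord_le hk w.tail
  rw [mul_encWord hk, abs_le] at hscaled
  constructor <;> linarith

lemma add_half_mem_Icc_natCast (hk : 2 ≤ k) {n : ℕ} {z ε : ℝ} (hz : |n - z| ≤ ε) :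
    z + 1 / 2 ∈ Set.Icc (n + (1 / (2 * (k - 1)) - k * ε))
      (n + 1 - (1 / (2 * (k - 1)) - k * ε)) := by
  have hk2 : (2 : ℝ) ≤ k := Nat.ofNat_le_cast.2 hk
  have hhalf : 1 / (2 * ((k : ℝ) - 1)) ≤ 1 / 2 :=
    one_div_le_one_div_of_le two_pos (by linarith)
  have hε : ε ≤ k * ε := le_mul_of_one_le_left ((abs_nonneg _).trans hz) (by linarith)
  rw [abs_le] at hz
  constructor <;> linarith

lemma eval_digitCoord_mem_Icc (hk : 2 ≤ k) {M : TM k} {c : TMConfig k} (hc : c.2.2.2 ∈ M.states)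
    {z : Fin 4 → ℝ} {ε : ℝ} (hz : ‖encConfig k c - z‖ ≤ ε) (i : Fin 4) :
    eval z (digitCoord k i) ∈
      Set.Icc ((TM.localView hk c hc).digits i + (1 / (2 * (k - 1)) - k * ε))
        ((TM.localView hk c hc).digits i + 1 - (1 / (2 * (k - 1)) - k * ε)) := by
  have hcoord : ∀ i, |encConfig k c i - z i| ≤ ε := fun i =>
    (norm_le_pi_norm (encConfig k c - z) i).trans hz
  fin_cases i
  · simpa [digitCoord, TM.localView, TM.LocalView.digits] using
      mul_add_mem_Icc_firstSymbol hk (hcoord 0)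
  · simpa [digitCoord, TM.localView, TM.LocalView.digits] using
      add_half_mem_Icc_natCast hk (hcoord 1)
  · simpa [digitCoord, TM.localView, TM.LocalView.digits] using
      mul_add_mem_Icc_firstSymbol hk (hcoord 2)
  · simpa [digitCoord, TM.localView, TM.LocalView.digits] using
      add_half_mem_Icc_natCast hk (hcoord 3)

/-- The action of prepending the symbol `a` to the half tape encoded by the coordinate `i`. -/
def pushPoly (a : Fin (k - 1)) (i : Fin 4) : MvPolynomial (Fin 4) ℝ :=
  C (1 / (k : ℝ)) * (C (a : ℝ) + X i)

/-- The action of removing the first symbol `a` from the half tape encoded by the coordinate `i`. -/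
def popPoly (a : Fin (k - 1)) (i : Fin 4) : MvPolynomial (Fin 4) ℝ :=
  C (k : ℝ) * X i - C (a : ℝ)

lemma eval_pushPoly (a : Fin (k - 1)) (i : Fin 4) (z : Fin 4 → ℝ) :
    eval z (pushPoly a i) = (a + z i) / k := by
  simp only [pushPoly, map_mul, map_add, eval_C, eval_X, one_div_mul_eq_div]

lemma eval_popPoly (a : Fin (k - 1)) (i : Fin 4) (z : Fin 4 → ℝ) :
    eval z (popPoly a i) = k * z i - a := by
  simp only [popPoly, map_sub, map_mul, eval_C, eval_X]

namespace TM

/-- The affine map that one step of `M` in the state `q` induces on the encodings of the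
configurations with symbols `a`, `b`, `c` to the left of the head, under it and to its right. -/
def stepPoly (M : TM k) (a b c : Fin (k - 1)) (q : ℕ) : Fin 4 → MvPolynomial (Fin 4) ℝ :=
  let r := M.δ q b
  if r.2.2 then ![pushPoly r.2.1 0, C (c : ℝ), popPoly c 2, C (r.1 : ℝ)]
  else ![popPoly a 0, C (a : ℝ), pushPoly r.2.1 2, C (r.1 : ℝ)]

lemma encConfig_step (hk : 2 ≤ k) (M : TM k) (c : TMConfig k) :
    encConfig k (M.step hk c) =
      let r := M.δ c.2.2.2 c.2.1
      if r.2.2 then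
        ![encWord k (r.2.1 :: c.1), (firstSymbol hk c.2.2.1 : ℕ), encWord k c.2.2.1.tail, r.1]
      else ![encWord k c.1.tail, (firstSymbol hk c.1 : ℕ), encWord k (r.2.1 :: c.2.2.1), r.1] :=
  apply_ite (encConfig k) _ _ _

lemma pEval_stepPoly_encConfig (hk : 2 ≤ k) (M : TM k) (c : TMConfig k) :
    pEval (M.stepPoly (firstSymbol hk c.1) c.2.1 (firstSymbol hk c.2.2.1) c.2.2.2)
      (encConfig k c) = encConfig k (M.step hk c) := by
  have hpop : ∀ w, k * encWord k w - (firstSymbol hk w : ℕ) = encWord k w.tail := fun w =>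
    sub_eq_of_eq_add' (mul_encWord hk w)
  ext i
  simp only [encConfig_step, pEval, stepPoly]
  split_ifs <;> fin_cases i
  · exact eval_pushPoly _ _ _
  · exact eval_C _
  · exact (eval_popPoly _ _ _).trans (hpop c.2.2.1)
  · exact eval_C _
  · exact (eval_popPoly _ _ _).trans (hpop c.1)
  · exact eval_C _
  · exact eval_pushPoly _ _ _
  · exact eval_C _

lemma norm_pEval_stepPoly_sub_le (hk : 1 ≤ k) (M : TM k) (a b c : Fin (k - 1)) (q : ℕ)
    (z z' : Fin 4 → ℝ) :
    ‖pEval (M.stepPoly a b c q) z - pEval (M.stepPoly a b c q) z'‖ ≤ k * ‖z - z'‖ := by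
  have hk1 : (1 : ℝ) ≤ k := Nat.one_le_cast.2 hk
  have hcoord : ∀ i, |z i - z' i| ≤ ‖z - z'‖ := norm_le_pi_norm (z - z')
  have hpop : ∀ (a : Fin (k - 1)) i,
      |eval z (popPoly a i) - eval z' (popPoly a i)| ≤ k * ‖z - z'‖ := fun a i => by
    rw [eval_popPoly, eval_popPoly, sub_sub_sub_cancel_right, ← mul_sub, abs_mul, Nat.abs_cast]
    gcongr
    exact hcoord i
  have hpush : ∀ (a : Fin (k - 1)) i,
      |eval z (pushPoly a i) - eval z' (pushPoly a i)| ≤ k * ‖z - z'‖ := fun a i => by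
    rw [eval_pushPoly, eval_pushPoly, ← sub_div, add_sub_add_left_eq_sub, abs_div, Nat.abs_cast]
    calc |z i - z' i| / k ≤ |z i - z' i| := div_le_self (abs_nonneg _) hk1
      _ ≤ ‖z - z'‖ := hcoord i
      _ ≤ k * ‖z - z'‖ := le_mul_of_one_le_left (norm_nonneg _) hk1
  have hconst : ∀ a : ℝ, |eval z (C a) - eval z' (C a)| ≤ k * ‖z - z'‖ := fun a => by
    rw [eval_C, eval_C, sub_self, abs_zero]
    positivity
  rw [pi_norm_le_iff_of_nonneg (by positivity)]
  intro i
  simp only [Pi.sub_apply, pEval, stepPoly, Real.norm_eq_abs]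
  split_ifs <;> fin_cases i
  exacts [hpush _ _, hconst _, hpop _ _, hconst _, hpop _ _, hconst _, hpush _ _, hconst _]

end TM

end TuringMachines

theorem robust_real_step_general (k : ℕ) (hk : 2 ≤ k) (M : TM k) {ε : ℝ}
    (hε : ε < 1 / (2 * k * (k - 1))) :
    ∃ (dom : Set (Fin 4 → ℝ)) (realstep : (Fin 4 → ℝ) → Fin 4 → ℝ), AP dom realstep ∧
      ∀ c : TMConfig k, c.2.2.2 ∈ M.states → ∀ cbar : Fin 4 → ℝ, ‖encConfig k c - cbar‖ ≤ ε →
        cbar ∈ dom ∧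
        ‖realstep cbar - encConfig k (M.step hk c)‖ ≤ k * ‖encConfig k c - cbar‖ := by
  let dom : Set (Fin 4 → ℝ) := {z | ∃ c, c.2.2.2 ∈ M.states ∧ ‖encConfig k c - z‖ ≤ ε}
  have hbounded : Bornology.IsBounded dom := by
    refine (isBounded_encConfig hk M).cthickening (δ := ε) |>.subset ?_
    rintro z ⟨c, hc, hz⟩
    exact Metric.mem_cthickening_of_dist_le _ _ _ _ ⟨c, hc, rfl⟩ (by rwa [dist_comm, dist_eq_norm])
  have hmargin : 0 < 1 / (2 * (k - 1)) - k * ε := by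
    have hk0 : (0 : ℝ) < k := by positivity
    rw [sub_pos, mul_comm, ← lt_div_iff₀ hk0, div_div]
    exact hε.trans_eq (by ring)
  obtain ⟨f, hf, hstep⟩ := AP.exists_eq_on_integer_cells hbounded TM.LocalView.digits_injective
    (fun s : M.LocalView => M.stepPoly s.1 s.2.1 s.2.2.1 s.2.2.2) hmargin
    fun _ ⟨c, hc, hz⟩ => ⟨TM.localView hk c hc, eval_digitCoord_mem_Icc hk hc hz⟩
  refine ⟨dom, f, hf, fun c hc z hz => ⟨⟨c, hc, hz⟩, ?_⟩⟩
  rw [hstep _ z (eval_digitCoord_mem_Icc hk hc hz), ← TM.pEval_stepPoly_encConfig hk,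
    norm_sub_rev (encConfig k c)]
  exact TM.norm_pEval_stepPoly_sub_le (one_le_two.trans hk) M _ _ _ _ _ _

lemma one_div_two_mul_sq_lt {k : ℕ} (hk : 2 ≤ k) :
    1 / (2 * (k : ℝ) ^ 2) < 1 / (2 * k * (k - 1)) := by
  have hk2 : (2 : ℝ) ≤ k := Nat.ofNat_le_cast.2 hk
  exact one_div_lt_one_div_of_lt (mul_pos (by positivity) (by linarith)) (by linarith)

/-- **Robust real step for Turing machines.**  For any machine `M` there is a partial
function `realstep_M :⊆ ℝ⁴ × ℝ₊ → ℝ⁴` in `AP` such that for every configuration `c`,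
every `μ ≥ 0` and every `c̄ ∈ ℝ⁴` with `‖⟨c⟩ − c̄‖_∞ ≤ 1/(2k²) − e^{−μ}`, the point
`(c̄, μ)` is in the domain and
`‖realstep_M(c̄, μ) − ⟨M(c)⟩‖_∞ ≤ k‖⟨c⟩ − c̄‖_∞`. -/
theorem robust_real_step (k : ℕ) (hk : 2 ≤ k) (M : TM k) :
    ∃ (dom : Set (Fin 5 → ℝ)) (realstep : (Fin 5 → ℝ) → (Fin 4 → ℝ)),
      dom ⊆ {z : Fin 5 → ℝ | 0 ≤ z (Fin.last 4)} ∧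
      AP dom realstep ∧
      ∀ c : TMConfig k, c.2.2.2 ∈ M.states → ∀ μ : ℝ, 0 ≤ μ → ∀ cbar : Fin 4 → ℝ,
        ‖encConfig k c - cbar‖ ≤ 1 / (2 * (k : ℝ) ^ 2) - Real.exp (-μ) →
        Fin.snoc cbar μ ∈ dom ∧
        ‖realstep (Fin.snoc cbar μ) - encConfig k (M.step hk c)‖ ≤
          (k : ℝ) * ‖encConfig k c - cbar‖ := by
  obtain ⟨dom, f, hf, hstep⟩ := robust_real_step_general k hk M (one_div_two_mul_sq_lt hk)
  refine ⟨{z | 0 ≤ z (Fin.last 4)} ∩ Fin.init ⁻¹' dom, f ∘ Fin.init, Set.inter_subset_left,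
    hf.comp_init.mono Set.inter_subset_right, fun c hc μ hμ cbar hcbar => ?_⟩
  obtain ⟨hmem, hle⟩ := hstep c hc cbar (hcbar.trans (sub_le_self _ (Real.exp_pos _).le))
  have hlast : (0 : ℝ) ≤ Fin.snoc (α := fun _ => ℝ) cbar μ (Fin.last 4) := by rwa [Fin.snoc_last]
  have hinit : Fin.init (Fin.snoc (α := fun _ => ℝ) cbar μ) = cbar := Fin.init_snoc _ _
  exact ⟨⟨hlast, by rwa [Set.mem_preimage, hinit]⟩, by rwa [Function.comp_apply, hinit]⟩
end
end
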